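/- A Young tower consists of the following data. $(\Delta_0,m_0)$ is a finite measure space and $\{\Lambda_i\}_{i\in I}$, $I\subseteq\mathbb N$, are pairwise disjoint measurable subsets of $\Delta_0$ with $m_0(\Lambda_i)>0$ and $m_0(\Delta_0\setminus\bigcup_i\Lambda_i)=0$. There are integers $R_i\ge 1$ with $\gcd\{R_i\}=1$ and a measurable return time $R:\Delta_0\to\{1,2,\dots\}$ with $R=R_i$ on $\Lambda_i$. There is a measurable map $F^R:\Delta_0\to\Delta_0$ whose restriction to each $\Lambda_i$ is a bijection onto $\Delta_0$. The partition is generating: modulo $m_0$-null sets, every measurable subset of $\Delta_0$ belongs to the $\sigma$-algebra generated by the sets $(F^R)^{-k}(\Lambda_i)$, $k\ge 0$, $i\in I$. For $x,y\in\Delta_0$ let the separation time $s(x,y)\in\mathbb N_0\cup\{\infty\}$ be the least $n\ge0$ such that $(F^R)^n(x)$ and $(F^R)^n(y)$ do not lie in a common $\Lambda_i$, and put $\beta^\infty=0$. The map $F^R$ has a measurable Jacobian $JF^R$ with respect to $m_0$, positive on every $\Lambda_i$ (that is, $m_0(F^R(A))=\int_A JF^R\,dm_0$ for every measurable $A$ contained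 in a single $\Lambda_i$), and there are $C_F>0$ and $0<\beta<1$ such that $|\log (JF^R(x)/JF^R(y))|\le C_F\,\beta^{s(F^R(x),F^R(y))}$ for all $x,y$ in the same $\Lambda_i$. The tower is $\Delta=\{(x,l):x\in\Delta_0,\ 0\le l<R(x)\}$, with partition elements $\Delta_{l,i}=\{(x,l)\in\Delta:x\in\Lambda_i\}$ and tower map $F(x,l)=(x,l+1)$ if $l+1<R(x)$, $F(x,l)=(F^R(x),0)$ if $l+1=R(x)$; $m$ is the measure on $\Delta$ that on the level $\{(x,l):R(x)>l\}$ is the copy of $m_0$ restricted to $\{R>l\}$. Put $s((x,l),(y,l'))=s(x,y)$ if the two points lie in the same $\Delta_{l,i}$, and $0$ otherwise. A function $\varphi:\Delta\to\mathbb R$ belongs to $\mathcal F_\beta^+$ with constant $C_\varphi>0$ if $|\varphi(x)-\varphi(y)|\le C_\varphi\,\beta^{s(x,y)}$ for all $x,y\in\Delta$ and, on each $\Delta_{l,i}$, either $\varphi\equiv0$, or $\varphi>0$ and $|\varphi(x)/\varphi(y)-1|\le C_\varphi\,\beta^{s(x,y)}$ for all $x,y\in\Delta_{l,i}$. $|\cdot|$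 denotes the total variation norm of a signed measure. Then the following hold. (1) Suppose that $m_0\{R>n\}\le C n^{-\zeta}$ for all $n\ge1$, with some $C>0$ and $\zeta>1$. Then there is a unique $F$-invariant probability measure $\nu$ on $\Delta$ equivalent to $m$, and for every $C_\varphi>0$ there is $C'>0$ such that, for every probability measure $\lambda$ on $\Delta$ having a measurable density $\varphi\in\mathcal F_\beta^+$ with constant $C_\varphi$ with respect to $m$, $$|F^n_*\lambda-\nu|\le C' n^{-(\zeta-1)}\qquad\text{for all } n\ge1 .$$ (2) Suppose that $m_0\{R>n\}\le C e^{-c n^{\eta}}$ for all $n\ge1$, with some $C,c>0$ and $0<\eta\le1$. Then there is a unique $F$-invariant probability measure $\nu$ on $\Delta$ equivalent to $m$, and there is $c'>0$ such that for every $C_\varphi>0$ there is $C'>0$ such that, for every probability measure $\lambda$ on $\Delta$ having a measurable density $\varphi\in\mathcal F_\beta^+$ with constant $C_\varphi$ with respect to $m$, $$|F^n_*\lambda-\nu|\le C' e^{-c' n^{\eta}}\qquad\text{for all } n\ge1 .$$ -/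

import Mathlib

open MeasureTheory Set

universe u

noncomputable section

/-- `β ^ s` for an extended-natural separation time, with the convention `β ^ ∞ = 0`. -/
def epow (β : ℝ) (s : ℕ∞) : ℝ := if s = ⊤ then 0 else β ^ s.toNat

/-- The separation time of `x` and `y`: the least `n` such that the `n`-th iterates of the return
map do not lie in a common partition element (`∞` if there is no such `n`). -/
def sepTime {X : Type*} (I : Set ℕ) (Λ : ℕ → Set X) (FR : X → X) (x y : X) : ℕ∞ :=
  ⨅ n ∈ {n : ℕ | ¬ ∃ i ∈ I, FR^[n] x ∈ Λ i ∧ FR^[n] y ∈ Λ i}, (n : ℕ∞)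

/-- The data of a Young tower: a finite measure base `(Δ₀, m₀)`, a countable partition
`{Λ i}_{i ∈ I}` of the base modulo `m₀` into sets of positive measure, return times `Ret i ≥ 1`
with greatest common divisor `1`, a return map `FR` sending each `Λ i` bijectively onto the base,
and a positive Jacobian of `FR` with bounded distortion. The partition is generating: modulo
`m₀`, every measurable subset of the base belongs to the σ-algebra generated by the preimages of
the `Λ i` under the iterates of the return map. Off the null set `Δ₀ \ ⋃ i, Λ i` the values of
`R` and `FR` are arbitrary (measurable, with `R ≥ 1`). -/
structure YoungTower where
  Δ₀ : Type u
  [meas : MeasurableSpace Δ₀]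
  m₀ : Measure Δ₀
  [m₀_finite : IsFiniteMeasure m₀]
  I : Set ℕ
  Λ : ℕ → Set Δ₀
  Λ_meas : ∀ i ∈ I, MeasurableSet (Λ i)
  Λ_disj : I.PairwiseDisjoint Λ
  Λ_pos : ∀ i ∈ I, 0 < m₀ (Λ i)
  Λ_full : m₀ (univ \ ⋃ i ∈ I, Λ i) = 0
  Ret : ℕ → ℕ
  Ret_pos : ∀ i ∈ I, 1 ≤ Ret i
  Ret_gcd : ∀ d : ℕ, (∀ i ∈ I, d ∣ Ret i) → d = 1
  R : Δ₀ → ℕ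
  R_meas : Measurable R
  R_pos : ∀ x, 0 < R x
  R_eq : ∀ i ∈ I, ∀ x ∈ Λ i, R x = Ret i
  FR : Δ₀ → Δ₀
  FR_meas : Measurable FR
  FR_bij : ∀ i ∈ I, BijOn FR (Λ i) univ
  generating : ∀ A : Set Δ₀, MeasurableSet A → ∃ B : Set Δ₀,
    MeasurableSet[MeasurableSpace.generateFrom {S | ∃ k : ℕ, ∃ i ∈ I, S = FR^[k] ⁻¹' Λ i}] B ∧
      A =ᵐ[m₀] B
  JFR : Δ₀ → ℝ
  JFR_meas : Measurable JFR
  JFR_pos : ∀ i ∈ I, ∀ x ∈ Λ i, 0 < JFR x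
  JFR_jac : ∀ i ∈ I, ∀ A : Set Δ₀, A ⊆ Λ i → MeasurableSet A →
    m₀ (FR '' A) = ∫⁻ x in A, ENNReal.ofReal (JFR x) ∂m₀
  CF : ℝ
  CF_pos : 0 < CF
  β : ℝ
  β_pos : 0 < β
  β_lt_one : β < 1
  distortion : ∀ i ∈ I, ∀ x ∈ Λ i, ∀ y ∈ Λ i,
    |Real.log (JFR x / JFR y)| ≤ CF * epow β (sepTime I Λ FR (FR x) (FR y))

attribute [instance] YoungTower.meas
attribute [instance] YoungTower.m₀_finite

namespace YoungTower

variable (T : YoungTower.{u})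

/-- The tower `Δ = {(x, l) : x ∈ Δ₀, 0 ≤ l < R x}`. -/
abbrev Tower : Type u := {p : T.Δ₀ × ℕ // p.2 < T.R p.1}

/-- The tower map `F`. -/
def towerMap (p : T.Tower) : T.Tower :=
  if h : p.1.2 + 1 < T.R p.1.1 then ⟨(p.1.1, p.1.2 + 1), h⟩
  else ⟨(T.FR p.1.1, 0), T.R_pos _⟩

/-- The reference measure `m` on the tower: on the `l`-th level it is the copy of `m₀`
restricted to `{R > l}`. -/
def towerMeasure : Measure T.Tower :=
  (Measure.sum fun l : ℕ =>
    (T.m₀.restrict {x | l < T.R x}).map fun x => (x, l)).comap Subtype.val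

/-- The partition element `Δ_{l,i}` of the tower. -/
def pieceSet (l i : ℕ) : Set T.Tower := {p | p.1.2 = l ∧ p.1.1 ∈ T.Λ i}

open Classical in
/-- Separation time on the tower: the separation time of the base points if the two points
lie in the same partition element `Δ_{l,i}`, and `0` otherwise. -/
def sepTower (p q : T.Tower) : ℕ∞ :=
  if ∃ l : ℕ, ∃ i ∈ T.I, p ∈ T.pieceSet l i ∧ q ∈ T.pieceSet l i then
    sepTime T.I T.Λ T.FR p.1.1 q.1.1
  else 0

/-- `φ ∈ F_β` with constant `K`. -/
def MemF (K : ℝ) (φ : T.Tower → ℝ) : Prop :=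
  ∀ p q : T.Tower, |φ p - φ q| ≤ K * epow T.β (T.sepTower p q)

/-- `φ ∈ F_β⁺` with constant `K`, serving both for the membership in `F_β` and for the bound on
the quotients on the partition elements. -/
def MemFPlus (K : ℝ) (φ : T.Tower → ℝ) : Prop :=
  T.MemF K φ ∧ ∀ l : ℕ, ∀ i ∈ T.I,
    (∀ p ∈ T.pieceSet l i, φ p = 0) ∨
    ((∀ p ∈ T.pieceSet l i, 0 < φ p) ∧
      ∀ p ∈ T.pieceSet l i, ∀ q ∈ T.pieceSet l i,
        |φ p / φ q - 1| ≤ K * epow T.β (T.sepTower p q))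

/-- `ν` is an `F`-invariant probability measure equivalent to `m`. -/
def IsEquilibrium (ν : ProbabilityMeasure T.Tower) : Prop :=
  MeasurePreserving T.towerMap (ν : Measure T.Tower) (ν : Measure T.Tower) ∧
    (ν : Measure T.Tower) ≪ T.towerMeasure ∧ T.towerMeasure ≪ (ν : Measure T.Tower)

end YoungTower

/-- The total variation norm `|μ - ν|` of the signed measure `μ - ν`. -/
def tvDist {X : Type*} [MeasurableSpace X] (μ ν : Measure X)
    [IsFiniteMeasure μ] [IsFiniteMeasure ν] : ENNReal :=
  (μ.toSignedMeasure - ν.toSignedMeasure).totalVariation univ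

end

noncomputable section

open Filter Topology
open scoped ENNReal

/-! ### Inversion in the algebra of absolutely convergent power series -/

open BoundedContinuousFunction in
/-- The left shift on bounded sequences. -/
def leftShift : (BoundedContinuousFunction ℕ ℂ) →L[ℂ] (BoundedContinuousFunction ℕ ℂ) :=
  LinearMap.mkContinuous
    { toFun := fun g => g.compContinuous ⟨fun n => n + 1, continuous_of_discreteTopology⟩
      map_add' := fun _ _ => rfl
      map_smul' := fun _ _ => rfl } 1 (by
    intro g
    rw [one_mul]
    refine (BoundedContinuousFunction.norm_le (norm_nonneg _)).2 fun n => ?_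
    exact g.norm_coe_le_norm (n + 1))

theorem leftShift_pow_apply (k : ℕ) (g : BoundedContinuousFunction ℕ ℂ) (n : ℕ) :
    (leftShift ^ k) g n = g (n + k) := by
  induction k generalizing g n with
  | zero => simp
  | succ k ih =>
    rw [pow_succ]
    change (leftShift ^ k) (leftShift g) n = _
    rw [ih]
    change g (n + k + 1) = _
    rw [add_assoc]

theorem norm_leftShift_pow_le (k : ℕ) : ‖leftShift ^ k‖ ≤ 1 := by
  refine ContinuousLinearMap.opNorm_le_bound _ zero_le_one fun g => ?_
  rw [one_mul]
  refine (BoundedContinuousFunction.norm_le (norm_nonneg _)).2 fun n => ?_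
  rw [leftShift_pow_apply]
  exact g.norm_coe_le_norm _

/-- A finitely supported sequence as a bounded sequence. -/
def finSeq (s : Finset ℕ) (c : ℕ → ℂ) : BoundedContinuousFunction ℕ ℂ :=
  BoundedContinuousFunction.ofNormedAddCommGroupDiscrete (fun n => if n ∈ s then c n else 0)
    (∑ n ∈ s, ‖c n‖) (by
      intro n
      split_ifs with h
      · exact Finset.single_le_sum (f := fun n => ‖c n‖) (fun _ _ => norm_nonneg _) h
      · simpa using Finset.sum_nonneg fun _ _ => norm_nonneg _)

theorem finSeq_apply (s : Finset ℕ) (c : ℕ → ℂ) (n : ℕ) :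
    finSeq s c n = if n ∈ s then c n else 0 := rfl

/-- The `n`-th unit sequence. -/
abbrev unitSeq (n : ℕ) : BoundedContinuousFunction ℕ ℂ := finSeq {n} fun _ => 1

theorem finSeq_eq_sum (s : Finset ℕ) (c : ℕ → ℂ) :
    finSeq s c = ∑ n ∈ s, c n • unitSeq n := by
  ext m
  simp [finSeq_apply, BoundedContinuousFunction.sum_apply]

theorem summable_norm_apply_unitSeq
    (G : BoundedContinuousFunction ℕ ℂ →L[ℂ] BoundedContinuousFunction ℕ ℂ) :
    Summable fun n => ‖G (unitSeq n) 0‖ := by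
  refine summable_of_sum_le (c := ‖G‖) (fun _ => norm_nonneg _) fun s => ?_
  set c : ℕ → ℂ := fun n => (starRingEnd ℂ) (G (unitSeq n) 0) / ‖G (unitSeq n) 0‖ with hc
  have hcn : ∀ n, ‖c n‖ ≤ 1 := by
    intro n
    simp only [hc, norm_div, RCLike.norm_conj, Complex.norm_real, norm_norm]
    exact div_self_le_one _
  have h1 : ‖finSeq s c‖ ≤ 1 := by
    refine (BoundedContinuousFunction.norm_le zero_le_one).2 fun n => ?_
    rw [finSeq_apply]
    split_ifs
    · exact hcn n
    · simp
  have h2 : G (finSeq s c) 0 = ((∑ n ∈ s, ‖G (unitSeq n) 0‖ : ℝ) : ℂ) := by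
    rw [finSeq_eq_sum, map_sum, BoundedContinuousFunction.sum_apply, Complex.ofReal_sum]
    refine Finset.sum_congr rfl fun n _ => ?_
    rw [map_smul, BoundedContinuousFunction.smul_apply, smul_eq_mul, hc]
    dsimp only
    rw [div_mul_eq_mul_div, mul_comm, Complex.mul_conj, Complex.normSq_eq_norm_sq]
    by_cases h0 : ‖G (unitSeq n) 0‖ = 0
    · simp [h0]
    · have : (‖G (unitSeq n) 0‖ : ℂ) ≠ 0 := by exact_mod_cast h0
      push_cast
      field_simp
  calc ∑ n ∈ s, ‖G (unitSeq n) 0‖ = ‖((∑ n ∈ s, ‖G (unitSeq n) 0‖ : ℝ) : ℂ)‖ := by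
        rw [Complex.norm_real, Real.norm_of_nonneg (Finset.sum_nonneg fun _ _ => norm_nonneg _)]
    _ = ‖G (finSeq s c) 0‖ := by rw [h2]
    _ ≤ ‖G (finSeq s c)‖ := BoundedContinuousFunction.norm_coe_le_norm _ _
    _ ≤ ‖G‖ * ‖finSeq s c‖ := G.le_opNorm _
    _ ≤ ‖G‖ := by nlinarith [norm_nonneg G]

/-- A power series without zeros in the closed unit disc, evaluated at a power bounded element of
a commutative Banach algebra, is invertible. -/
theorem isUnit_tsum_smul_pow {A : Type*} [NormedCommRing A] [NormedAlgebra ℂ A] [CompleteSpace A]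
    {S : A} (hS : ∀ k, ‖S ^ k‖ ≤ 1) {a : ℕ → ℂ} (hsum : Summable fun k => a k • S ^ k)
    (hne : ∀ z : ℂ, ‖z‖ ≤ 1 → ∑' n, a n * z ^ n ≠ 0) :
    IsUnit (∑' k, a k • S ^ k) := by
  by_contra hnu
  obtain ⟨χ, hχ⟩ := WeakDual.CharacterSpace.exists_apply_eq_zero hnu
  have hχS : ‖χ S‖ ≤ 1 := by
    have h1 : χ S ∈ spectrum ℂ S := AlgHom.apply_mem_spectrum χ S
    refine (spectrum.norm_le_norm_mul_of_mem h1).trans ?_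
    have h0 : ‖(1 : A)‖ ≤ 1 := by simpa using hS 0
    have h2 : ‖S‖ ≤ 1 := by simpa using hS 1
    nlinarith [norm_nonneg S, norm_nonneg (1 : A)]
  refine hne (χ S) hχS ?_
  rw [← hχ]
  have h3 := (hsum.hasSum.map χ (map_continuous χ)).tsum_eq
  rw [← h3]
  refine tsum_congr fun k => ?_
  simp only [Function.comp_apply, map_smul, map_pow, smul_eq_mul]

theorem exists_mul_tsum_leftShift_eq_one {a : ℕ → ℂ} (ha : Summable fun n => ‖a n‖)
    (hne : ∀ z : ℂ, ‖z‖ ≤ 1 → ∑' n, a n * z ^ n ≠ 0) :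
    ∃ G T : BoundedContinuousFunction ℕ ℂ →L[ℂ] BoundedContinuousFunction ℕ ℂ,
      HasSum (fun k => a k • leftShift ^ k) T ∧ G * T = 1 := by
  let A := Algebra.elemental ℂ leftShift
  let _ : NormedCommRing A := { (inferInstance : NormedRing A) with mul_comm := mul_comm }
  let _ : NormedAlgebra ℂ A := inferInstance
  have _ : CompleteSpace A := inferInstance
  let S : A := ⟨leftShift, Algebra.elemental.self_mem ℂ leftShift⟩
  have hS : ∀ k, ‖S ^ k‖ ≤ 1 := norm_leftShift_pow_le
  have hsum : Summable fun k => a k • S ^ k := by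
    refine Summable.of_norm_bounded ha fun k => ?_
    rw [norm_smul]
    exact mul_le_of_le_one_right (norm_nonneg _) (hS k)
  obtain ⟨G, hG⟩ := (isUnit_tsum_smul_pow hS hsum hne).exists_left_inv
  refine ⟨G.1, (∑' k, a k • S ^ k).1, ?_, congrArg Subtype.val hG⟩
  exact hsum.hasSum.map (A.val : A →ₐ[ℂ] _) continuous_subtype_val

/-- **Wiener's lemma** for power series: an absolutely convergent power series without zeros in
the closed unit disc has an absolutely convergent inverse. -/
theorem exists_summable_inverse {a : ℕ → ℂ} (ha : Summable fun n => ‖a n‖)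
    (hne : ∀ z : ℂ, ‖z‖ ≤ 1 → ∑' n, a n * z ^ n ≠ 0) :
    ∃ b : ℕ → ℂ, (Summable fun n => ‖b n‖) ∧
      ∀ n, ∑ k ∈ Finset.range (n + 1), a k * b (n - k) = if n = 0 then 1 else 0 := by
  obtain ⟨G, T, hsum, hG⟩ := exists_mul_tsum_leftShift_eq_one ha hne
  refine ⟨fun n => G (unitSeq n) 0, summable_norm_apply_unitSeq _, fun n => ?_⟩
  let Φ : (BoundedContinuousFunction ℕ ℂ →L[ℂ] BoundedContinuousFunction ℕ ℂ) →L[ℂ] ℂ :=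
    (BoundedContinuousFunction.evalCLM ℂ 0) ∘L G ∘L
      (ContinuousLinearMap.apply ℂ _ (unitSeq n))
  have hΦ : ∀ U, Φ U = G (U (unitSeq n)) 0 := fun U => rfl
  have h4 : HasSum (fun k => Φ (a k • leftShift ^ k)) (Φ T) := hsum.mapL Φ
  have h5 : Φ T = if n = 0 then 1 else 0 := by
    have : (G * T) (unitSeq n) 0 = unitSeq n 0 := by rw [hG]; rfl
    rw [hΦ]
    refine this.trans ?_
    simp [finSeq_apply, eq_comm]
  rw [h5] at h4
  have h6 : ∀ k ∉ Finset.range (n + 1), Φ (a k • leftShift ^ k) = 0 := by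
    intro k hk
    have : (leftShift ^ k) (unitSeq n) = 0 := by
      ext m
      rw [leftShift_pow_apply, finSeq_apply]
      simp at hk ⊢
      omega
    rw [map_smul, hΦ, this]
    simp
  rw [h4.unique (hasSum_sum_of_ne_finset_zero h6)]
  refine Finset.sum_congr rfl fun k hk => ?_
  have : (leftShift ^ k) (unitSeq n) = unitSeq (n - k) := by
    ext m
    rw [leftShift_pow_apply, finSeq_apply, finSeq_apply]
    simp only [Finset.mem_range, Finset.mem_singleton] at hk ⊢
    congr 1
    simp only [eq_iff_iff]
    omega
  rw [map_smul, hΦ, this, smul_eq_mul]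

/-- Wiener's lemma for power series with real coefficients. -/
theorem exists_summable_inverse_real {a : ℕ → ℝ} (ha : Summable fun n => |a n|)
    (hne : ∀ z : ℂ, ‖z‖ ≤ 1 → ∑' n, (a n : ℂ) * z ^ n ≠ 0) :
    ∃ b : ℕ → ℝ, (Summable fun n => |b n|) ∧
      ∀ n, ∑ k ∈ Finset.range (n + 1), a k * b (n - k) = if n = 0 then 1 else 0 := by
  obtain ⟨b, hb, h⟩ := exists_summable_inverse (a := fun n => (a n : ℂ)) (by simpa using ha) hne
  refine ⟨fun n => (b n).re, .of_nonneg_of_le (fun _ => abs_nonneg _)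
    (fun n => Complex.abs_re_le_norm (b n)) hb, fun n => ?_⟩
  have := congrArg Complex.re (h n)
  rw [Complex.re_sum] at this
  simp only [Complex.re_ofReal_mul] at this
  rw [this]
  split_ifs <;> simp

/-! ### Convolutions and tails of sequences -/

/-- The convolution of two sequences. -/
def seqConv (a b : ℕ → ℝ) (n : ℕ) : ℝ := ∑ k ∈ Finset.range (n + 1), a k * b (n - k)

/-- The sum of the absolute values of the terms from the `n`-th one on. -/
def absTail (a : ℕ → ℝ) (n : ℕ) : ℝ := ∑' k, |a (k + n)|

theorem absTail_nonneg (a : ℕ → ℝ) (n : ℕ) : 0 ≤ absTail a n := tsum_nonneg fun _ => abs_nonneg _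

theorem absTail_zero (a : ℕ → ℝ) : absTail a 0 = ∑' k, |a k| := rfl

theorem sum_add_absTail {a : ℕ → ℝ} (ha : Summable fun n => |a n|) (n : ℕ) :
    ∑ k ∈ Finset.range n, |a k| + absTail a n = absTail a 0 := ha.sum_add_tsum_nat_add n

theorem absTail_antitone {a : ℕ → ℝ} (ha : Summable fun n => |a n|) : Antitone (absTail a) := by
  intro m n hmn
  have h1 := sum_add_absTail ha m
  have h2 := sum_add_absTail ha n
  have h3 : ∑ k ∈ Finset.range m, |a k| ≤ ∑ k ∈ Finset.range n, |a k| :=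
    Finset.sum_le_sum_of_subset_of_nonneg (Finset.range_subset_range.2 hmn)
      fun _ _ _ => abs_nonneg _
  linarith

theorem abs_le_absTail {a : ℕ → ℝ} (ha : Summable fun n => |a n|) (n : ℕ) :
    |a n| ≤ absTail a n := by
  have h1 := sum_add_absTail ha n
  have h2 := sum_add_absTail ha (n + 1)
  rw [Finset.sum_range_succ] at h2
  linarith [absTail_nonneg a (n + 1)]

theorem absTail_tendsto_zero (a : ℕ → ℝ) : Tendsto (absTail a) atTop (𝓝 0) :=
  tendsto_sum_nat_add fun k => |a k|

theorem absTail_mono {a b : ℕ → ℝ} (hb : Summable fun n => |b n|) (h : ∀ n, |a n| ≤ |b n|) (n : ℕ) :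
    absTail a n ≤ absTail b n := by
  have hb' := (summable_nat_add_iff n).2 hb
  exact (Summable.of_nonneg_of_le (fun _ => abs_nonneg _) (fun k => h (k + n)) hb').tsum_le_tsum
    (fun k => h (k + n)) hb'

theorem sum_Ico_abs_le_absTail {a : ℕ → ℝ} (ha : Summable fun n => |a n|) (p n : ℕ) :
    ∑ k ∈ Finset.range n, (if p ≤ k then |a k| else 0) ≤ absTail a p := by
  rcases le_total n p with h | h
  · rw [Finset.sum_eq_zero]
    · exact absTail_nonneg _ _
    · intro k hk
      rw [if_neg]
      have := Finset.mem_range.1 hk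
      omega
  · have h1 := sum_add_absTail ha p
    have h2 := sum_add_absTail ha n
    have h3 : ∑ k ∈ Finset.range n, |a k| = ∑ k ∈ Finset.range p, |a k| +
        ∑ k ∈ Finset.range n, (if p ≤ k then |a k| else 0) := by
      rw [← Finset.sum_filter, ← Finset.sum_filter_not_add_sum_filter (Finset.range n) (p ≤ ·)]
      congr 1
      refine Finset.sum_congr ?_ fun _ _ => rfl
      ext k
      simp
      omega
    linarith [absTail_nonneg a n]

/-- Splitting a convolution at an index `p`. -/
theorem seqConv_le_split {e x : ℕ → ℝ} (he : ∀ n, 0 ≤ e n) (hes : Summable e)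
    (hx : ∀ n, 0 ≤ x n) {n p : ℕ} {B D : ℝ}
    (hB0 : 0 ≤ B) (hB : ∀ k < p, k ≤ n → x (n - k) ≤ B) (hD : ∀ m, x m ≤ D) :
    seqConv e x n ≤ (∑' k, e k) * B + D * absTail e p := by
  have hD0 : 0 ≤ D := (hx 0).trans (hD 0)
  have hes' : Summable fun n => |e n| := hes.abs
  calc seqConv e x n
      ≤ ∑ k ∈ Finset.range (n + 1), (e k * B + D * (if p ≤ k then |e k| else 0)) := by
        refine Finset.sum_le_sum fun k hk => ?_
        have hk' := Finset.mem_range.1 hk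
        split_ifs with h
        · rw [abs_of_nonneg (he k)]
          have := mul_le_mul_of_nonneg_left (hD (n - k)) (he k)
          have := mul_nonneg (he k) hB0
          linarith
        · have := mul_le_mul_of_nonneg_left (hB k (not_le.1 h) (by omega)) (he k)
          linarith
    _ = (∑ k ∈ Finset.range (n + 1), e k) * B
        + D * ∑ k ∈ Finset.range (n + 1), (if p ≤ k then |e k| else 0) := by
        rw [Finset.sum_add_distrib, Finset.sum_mul, Finset.mul_sum]
    _ ≤ _ := by
        gcongr
        · exact hes.sum_le_tsum _ fun k _ => he k
        · exact sum_Ico_abs_le_absTail hes' p (n + 1)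

theorem seqConv_le_half {e x : ℕ → ℝ} (he : ∀ n, 0 ≤ e n) (hes : Summable e)
    (hx : ∀ n, 0 ≤ x n) (hanti : Antitone x) (n : ℕ) :
    seqConv e x n ≤ (∑' k, e k) * x (n / 2) + x 0 * absTail e (n / 2) :=
  seqConv_le_split he hes hx (hx _) (fun k hk hkn => hanti (by omega))
    fun m => hanti (Nat.zero_le m)

theorem abs_seqConv_le (a b : ℕ → ℝ) (n : ℕ) :
    |seqConv a b n| ≤ seqConv (fun k => |a k|) (fun k => |b k|) n := by
  refine (Finset.abs_sum_le_sum_abs _ _).trans (le_of_eq ?_)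
  exact Finset.sum_congr rfl fun k _ => abs_mul _ _

theorem seqConv_mono {a b a' b' : ℕ → ℝ} (ha : ∀ n, 0 ≤ a n) (hb : ∀ n, 0 ≤ b n)
    (haa' : ∀ n, a n ≤ a' n) (hbb' : ∀ n, b n ≤ b' n) (n : ℕ) :
    seqConv a b n ≤ seqConv a' b' n :=
  Finset.sum_le_sum fun k _ => mul_le_mul (haa' k) (hbb' _) (hb _) ((ha k).trans (haa' k))

theorem hasSum_seqConv {a b : ℕ → ℝ} (ha : Summable fun n => |a n|)
    (hb : Summable fun n => |b n|) :
    Summable (fun n => |seqConv a b n|) ∧ ∑' n, seqConv a b n = (∑' n, a n) * ∑' n, b n := by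
  simp only [← Real.norm_eq_abs] at ha hb ⊢
  exact ⟨summable_norm_sum_mul_range_of_summable_norm ha hb,
    (tsum_mul_tsum_eq_tsum_sum_range_of_summable_norm ha hb).symm⟩

theorem absTail_seqConv_le {a b : ℕ → ℝ} (ha : Summable fun n => |a n|)
    (hb : Summable fun n => |b n|) (n : ℕ) :
    absTail (seqConv a b) n ≤
      absTail a n * absTail b 0 + seqConv (fun k => |a k|) (absTail b) n := by
  have ha's : Summable fun k => |(|a (k + n)|)| := by
    simpa only [abs_abs] using (summable_nat_add_iff n).2 ha
  have hb's : Summable fun k => |(|b k|)| := by simpa only [abs_abs] using hb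
  obtain ⟨hc, hc'⟩ := hasSum_seqConv ha's hb's
  have h1 : HasSum (fun m => seqConv (fun k => |a (k + n)|) (fun k => |b k|) m)
      (absTail a n * absTail b 0) := by
    rw [absTail, absTail_zero, ← hc']
    exact (Summable.of_abs hc).hasSum
  have h2 : ∀ k ∈ Finset.range n, HasSum (fun m => |a k| * |b (m + (n - k))|)
      (|a k| * absTail b (n - k)) := fun k _ =>
    ((summable_nat_add_iff (f := fun i => |b i|) (n - k)).2 hb).hasSum.mul_left _
  have h3 := h1.add (hasSum_sum h2)
  have h4 : absTail a n * absTail b 0 + ∑ k ∈ Finset.range n, |a k| * absTail b (n - k) ≤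
      absTail a n * absTail b 0 + seqConv (fun k => |a k|) (absTail b) n := by
    rw [seqConv, Finset.sum_range_succ]
    have := mul_nonneg (abs_nonneg (a n)) (absTail_nonneg b (n - n))
    linarith
  refine le_trans ?_ h4
  have hs : Summable fun m => |seqConv a b (m + n)| :=
    (summable_nat_add_iff (f := fun i => |seqConv a b i|) n).2 (hasSum_seqConv ha hb).1
  refine hasSum_le (fun m => ?_) hs.hasSum h3
  refine (abs_seqConv_le a b _).trans (le_of_eq ?_)
  rw [seqConv, seqConv, show m + n + 1 = n + (m + 1) by ring, Finset.sum_range_add, add_comm]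
  refine congrArg₂ (· + ·) (Finset.sum_congr rfl fun k _ => ?_)
    (Finset.sum_congr rfl fun k hk => ?_)
  · rw [add_comm k n, show m + n - (n + k) = m - k by omega]
  · have := Finset.mem_range.1 hk
    rw [show m + n - k = m + (n - k) by omega]

/-! ### Families of rates -/

/-- A family of decreasing rates that is stable under halving of the argument, directed, and
stable under solving renewal inequalities with a defective kernel. -/
structure IsRateFamily {ι : Type*} (ρ : ι → ℕ → ℝ) : Prop where
  pos : ∀ i n, 0 < ρ i n
  anti : ∀ i, Antitone (ρ i)
  tendsto : ∀ i, Tendsto (ρ i) atTop (𝓝 0)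
  half : ∀ i, ∃ j C, 0 < C ∧ ∀ n, ρ i (n / 2) ≤ C * ρ j n
  directed : ∀ i j, ∃ k C, 0 < C ∧ ∀ n, ρ i n ≤ C * ρ k n ∧ ρ j n ≤ C * ρ k n
  renewal : ∀ i (e : ℕ → ℝ), (∀ n, 0 ≤ e n) → Summable e → ∑' n, e n < 1 →
    (∃ C, ∀ n, absTail e n ≤ C * ρ i n) →
    ∃ j, ∀ C, ∃ C', ∀ s x : ℕ → ℝ, (∀ n, 0 ≤ x n) → (∀ n, s n ≤ C * ρ i n) →
      (∀ n, x n ≤ s n + seqConv e x n) → ∀ n, x n ≤ C' * ρ j n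

theorem le_of_forall_le_add_mul {x : ℕ → ℝ} {c δ : ℝ} (hδ : δ < 1)
    (h : ∀ n B, (∀ m ≤ n, x m ≤ B) → x n ≤ c + δ * B) (n : ℕ) : x n ≤ c / (1 - δ) := by
  obtain ⟨m, hm, hmax⟩ := Finset.exists_max_image (Finset.range (n + 1)) x ⟨n, by simp⟩
  have h1 := h m (x m) fun k hk => hmax k (by simp at hm ⊢; omega)
  have h2 : x m ≤ c / (1 - δ) := by
    rw [le_div_iff₀ (by linarith)]
    linarith
  exact (hmax n (by simp)).trans h2

/-- The polynomial rate with exponent `a`. -/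
def polyRate (a : ℝ) (n : ℕ) : ℝ := ((n : ℝ) + 1) ^ (-a)

theorem polyRate_pos (a : ℝ) (n : ℕ) : 0 < polyRate a n := Real.rpow_pos_of_pos (by positivity) _

theorem polyRate_le_of_mul_le {a : ℝ} (ha : 0 < a) {κ : ℝ} (hκ : 0 < κ) {m n : ℕ}
    (h : κ * ((n : ℝ) + 1) ≤ (m : ℝ) + 1) : polyRate a m ≤ κ ^ (-a) * polyRate a n := by
  rw [polyRate, polyRate, ← Real.mul_rpow hκ.le (by positivity)]
  exact Real.rpow_le_rpow_of_nonpos (by positivity) h (by linarith)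

theorem polyRate_renewal {a : ℝ} (ha : 0 < a) {e : ℕ → ℝ} (he : ∀ n, 0 ≤ e n) (hes : Summable e)
    (he1 : ∑' n, e n < 1) {Ce : ℝ} (htail : ∀ n, absTail e n ≤ Ce * polyRate a n) (C : ℝ) :
    ∃ C', ∀ s x : ℕ → ℝ, (∀ n, 0 ≤ x n) → (∀ n, s n ≤ C * polyRate a n) →
      (∀ n, x n ≤ s n + seqConv e x n) → ∀ n, x n ≤ C' * polyRate a n := by
  set δ := ∑' n, e n with hδ
  have hδ0 : 0 ≤ δ := tsum_nonneg he
  obtain ⟨κ, hκ0, hκ1, hκ⟩ : ∃ κ : ℝ, 0 < κ ∧ κ < 1 ∧ δ * (1 - κ) ^ (-a) < 1 := by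
    have hcont : Tendsto (fun κ : ℝ => δ * (1 - κ) ^ (-a)) (𝓝[>] 0) (𝓝 (δ * (1 - 0) ^ (-a))) := by
      refine Tendsto.mono_left ?_ nhdsWithin_le_nhds
      exact ((continuousAt_const.sub continuousAt_id).rpow_const (Or.inl (by norm_num))).const_mul _
    have h1 := hcont.eventually_lt_const (u := 1) (by simpa using he1)
    have h2 : ∀ᶠ κ : ℝ in 𝓝[>] 0, κ < 1 :=
      nhdsWithin_le_nhds (eventually_lt_nhds zero_lt_one)
    obtain ⟨κ, h3, h4, h5⟩ := (h1.and (h2.and self_mem_nhdsWithin)).exists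
    exact ⟨κ, h5, h4, h3⟩
  have hCe : 0 ≤ Ce := by
    have := (absTail_nonneg e 0).trans (htail 0)
    exact nonneg_of_mul_nonneg_left this (polyRate_pos a 0)
  set D := |C| / (1 - δ) with hD
  set c := |C| + D * (Ce * κ ^ (-a)) with hc
  refine ⟨c / (1 - δ * (1 - κ) ^ (-a)), fun s x hx hs hsub => ?_⟩
  have hρ1 : ∀ n, polyRate a n ≤ 1 := fun n =>
    Real.rpow_le_one_of_one_le_of_nonpos (by linarith [n.cast_nonneg (α := ℝ)]) (by linarith)
  have hs' : ∀ n, s n ≤ |C| * polyRate a n := fun n =>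
    (hs n).trans (mul_le_mul_of_nonneg_right (le_abs_self C) (polyRate_pos a n).le)
  have hxD : ∀ n, x n ≤ D := by
    refine le_of_forall_le_add_mul he1 fun n B hB => ?_
    have hB0 : 0 ≤ B := (hx n).trans (hB n le_rfl)
    have h1 : seqConv e x n ≤ δ * B := by
      calc seqConv e x n ≤ ∑ k ∈ Finset.range (n + 1), e k * B :=
            Finset.sum_le_sum fun k _ =>
              mul_le_mul_of_nonneg_left (hB _ (Nat.sub_le _ _)) (he k)
        _ ≤ δ * B := by
            rw [← Finset.sum_mul]
            gcongr
            exact hes.sum_le_tsum _ fun k _ => he k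
    have h2 : s n ≤ |C| := (hs' n).trans (mul_le_of_le_one_right (abs_nonneg _) (hρ1 n))
    linarith [hsub n]
  have hD0 : 0 ≤ D := (hx 0).trans (hxD 0)
  intro n
  have key : ∀ n, x n / polyRate a n ≤ c / (1 - δ * (1 - κ) ^ (-a)) := by
    refine le_of_forall_le_add_mul hκ fun n B hB => ?_
    have hpn := polyRate_pos a n
    have hB' : ∀ m ≤ n, x m ≤ B * polyRate a m := fun m hm =>
      (div_le_iff₀ (polyRate_pos a m)).1 (hB m hm)
    have hB0 : 0 ≤ B := (div_nonneg (hx n) hpn.le).trans (hB n le_rfl)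
    rw [div_le_iff₀ hpn]
    have h1 := seqConv_le_split he hes hx (n := n) (p := ⌈κ * n⌉₊)
      (B := B * ((1 - κ) ^ (-a) * polyRate a n)) (D := D) (by
        have : 0 < (1 - κ) ^ (-a) := Real.rpow_pos_of_pos (by linarith) _
        positivity) (fun k hk hkn => by
        refine (hB' _ (Nat.sub_le _ _)).trans (mul_le_mul_of_nonneg_left ?_ hB0)
        refine polyRate_le_of_mul_le ha (by linarith) ?_
        have hk' : (k : ℝ) < κ * n := Nat.lt_ceil.1 hk
        rw [Nat.cast_sub hkn]
        nlinarith) hxD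
    have h2 : absTail e ⌈κ * n⌉₊ ≤ Ce * (κ ^ (-a) * polyRate a n) := by
      refine (htail _).trans (mul_le_mul_of_nonneg_left ?_ hCe)
      refine polyRate_le_of_mul_le ha hκ0 ?_
      have := Nat.le_ceil (κ * (n : ℝ))
      nlinarith
    have h3 := mul_le_mul_of_nonneg_left h2 hD0
    calc x n ≤ |C| * polyRate a n + (δ * (B * ((1 - κ) ^ (-a) * polyRate a n)) +
          D * (Ce * (κ ^ (-a) * polyRate a n))) := by linarith [hsub n, hs' n]
      _ = (c + δ * (1 - κ) ^ (-a) * B) * polyRate a n := by rw [hc]; ring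
  exact (div_le_iff₀ (polyRate_pos a n)).1 (key n)

theorem isRateFamily_polyRate {a : ℝ} (ha : 0 < a) :
    IsRateFamily (fun _ : Unit => polyRate a) where
  pos _ n := polyRate_pos a n
  anti _ m n hmn := Real.rpow_le_rpow_of_nonpos (by positivity) (by gcongr) (by linarith)
  tendsto _ := (tendsto_rpow_neg_atTop ha).comp
    (tendsto_atTop_add_const_right _ _ tendsto_natCast_atTop_atTop)
  half _ := ⟨(), (1 / 2 : ℝ) ^ (-a), by positivity, fun n => by
    refine polyRate_le_of_mul_le ha (by norm_num) ?_
    have : (n : ℝ) ≤ 2 * (n / 2 : ℕ) + 1 := by exact_mod_cast (by omega : n ≤ 2 * (n / 2) + 1)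
    linarith⟩
  directed _ _ := ⟨(), 1, one_pos, fun n => by simp⟩
  renewal _ e he hes he1 := fun ⟨_, hC⟩ => ⟨(), polyRate_renewal ha he hes he1 hC⟩

theorem summable_polyRate {a : ℝ} (ha : 1 < a) : Summable (polyRate a) := by
  have := (summable_nat_add_iff 1).2 (Real.summable_nat_rpow.2 (by linarith : -a < -1))
  refine this.congr fun n => ?_
  rw [polyRate]
  push_cast
  rfl

theorem absTail_polyRate_le {a : ℝ} (ha : 1 < a) :
    ∃ C, ∀ n, absTail (polyRate a) n ≤ C * polyRate (a - 1) n := by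
  set b := a - 1 with hb
  have hb0 : 0 < b := by linarith
  have hterm : ∀ k : ℕ, polyRate a k ≤
      (1 / 2 : ℝ) ^ (-a) / b * (polyRate b k - polyRate b (k + 1)) := by
    intro k
    have h1 : polyRate a k ≤ (1 / 2 : ℝ) ^ (-a) * polyRate a (k + 1) := by
      refine polyRate_le_of_mul_le (by linarith) (by norm_num) ?_
      push_cast
      linarith [k.cast_nonneg (α := ℝ)]
    have h2 : b * polyRate a (k + 1) ≤ polyRate b k - polyRate b (k + 1) := by
      set u : ℝ := (k : ℝ) + 1 with hu
      have hu0 : 0 < u := by positivity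
      have e1 : polyRate a (k + 1) = (u + 1) ^ (-b) / (u + 1) := by
        rw [polyRate, show -a = -b - 1 by rw [hb]; ring, Real.rpow_sub_one (by positivity)]
        push_cast
        rfl
      have e2 : polyRate b (k + 1) = (u + 1) ^ (-b) := by rw [polyRate]; push_cast; rfl
      have e3 : polyRate b k = ((u + 1) / u) ^ b * (u + 1) ^ (-b) := by
        rw [polyRate, Real.div_rpow (by positivity) hu0.le, Real.rpow_neg hu0.le,
          Real.rpow_neg (by positivity)]
        field_simp
      have e4 : 1 + b / (u + 1) ≤ ((u + 1) / u) ^ b := by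
        rw [Real.rpow_def_of_pos (by positivity)]
        refine le_trans ?_ (Real.add_one_le_exp _)
        have := Real.one_sub_inv_le_log_of_pos (x := (u + 1) / u) (by positivity)
        have h3 : 1 - ((u + 1) / u)⁻¹ = 1 / (u + 1) := by field_simp; ring
        rw [h3] at this
        have := mul_le_mul_of_nonneg_right this hb0.le
        rw [div_mul_eq_mul_div, one_mul] at this
        linarith
      rw [e1, e2, e3]
      have h5 : 0 < (u + 1) ^ (-b) := by positivity
      have := mul_le_mul_of_nonneg_right e4 h5.le
      have h6 : (1 + b / (u + 1)) * (u + 1) ^ (-b) =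
        (u + 1) ^ (-b) + b * ((u + 1) ^ (-b) / (u + 1)) := by ring
      linarith
    calc polyRate a k ≤ (1 / 2 : ℝ) ^ (-a) * polyRate a (k + 1) := h1
      _ = (1 / 2 : ℝ) ^ (-a) / b * (b * polyRate a (k + 1)) := by field_simp
      _ ≤ _ := by gcongr
  refine ⟨(1 / 2 : ℝ) ^ (-a) / b, fun n => ?_⟩
  refine Real.tsum_le_of_sum_range_le (fun _ => abs_nonneg _) fun N => ?_
  have h1 : ∑ k ∈ Finset.range N, |polyRate a (k + n)| ≤
      (1 / 2 : ℝ) ^ (-a) / b * ∑ k ∈ Finset.range N,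
        (polyRate b (k + n) - polyRate b (k + 1 + n)) := by
    rw [Finset.mul_sum]
    refine Finset.sum_le_sum fun k _ => ?_
    rw [abs_of_pos (polyRate_pos a _), add_right_comm]
    exact hterm (k + n)
  refine h1.trans ?_
  rw [Finset.sum_range_sub' fun k => polyRate b (k + n), zero_add]
  have := polyRate_pos b (N + n)
  gcongr
  linarith

/-- The stretched exponential rate. -/
def expRate (η : ℝ) (c : {c : ℝ // 0 < c}) (n : ℕ) : ℝ := Real.exp (-c.1 * (n : ℝ) ^ η)

theorem expRate_pos (η : ℝ) (c : {c : ℝ // 0 < c}) (n : ℕ) : 0 < expRate η c n := Real.exp_pos _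

theorem summable_expRate {η : ℝ} (hη : 0 < η) (c : {c : ℝ // 0 < c}) : Summable (expRate η c) := by
  have h1 := isLittleO_exp_neg_mul_rpow_atTop c.2 (-2 / η)
  have h2 : Tendsto (fun n : ℕ => (n : ℝ) ^ η) atTop atTop :=
    (tendsto_rpow_atTop hη).comp tendsto_natCast_atTop_atTop
  have h3 := (h1.comp_tendsto h2).isBigO
  refine summable_of_isBigO_nat (Real.summable_nat_rpow.2 (by norm_num : (-2 : ℝ) < -1)) ?_
  refine h3.congr (fun n => rfl) fun n => ?_
  change ((n : ℝ) ^ η) ^ (-2 / η) = _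
  rw [← Real.rpow_mul n.cast_nonneg, mul_div_cancel₀ _ hη.ne']

theorem absTail_expRate_le {η : ℝ} (hη : 0 < η) (c : {c : ℝ // 0 < c}) :
    ∃ j C, ∀ n, absTail (expRate η c) n ≤ C * expRate η j n := by
  set j : {c : ℝ // 0 < c} := ⟨c.1 / 2, half_pos c.2⟩ with hj
  have hsj := summable_expRate hη j
  refine ⟨j, ∑' k, expRate η j k, fun n => ?_⟩
  have h1 : ∀ k, |expRate η c (k + n)| ≤ expRate η j k * expRate η j n := by
    intro k
    rw [abs_of_pos (expRate_pos _ _ _), expRate, expRate, expRate, ← Real.exp_add,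
      Real.exp_le_exp, hj]
    have h2 : (k : ℝ) ^ η ≤ ((k + n : ℕ) : ℝ) ^ η :=
      Real.rpow_le_rpow k.cast_nonneg (by push_cast; linarith [n.cast_nonneg (α := ℝ)]) hη.le
    have h3 : (n : ℝ) ^ η ≤ ((k + n : ℕ) : ℝ) ^ η :=
      Real.rpow_le_rpow n.cast_nonneg (by push_cast; linarith [k.cast_nonneg (α := ℝ)]) hη.le
    nlinarith [c.2]
  rw [← tsum_mul_right]
  have hs := hsj.mul_right (expRate η j n)
  exact (Summable.of_nonneg_of_le (fun _ => abs_nonneg _) h1 hs).tsum_le_tsum h1 hs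

theorem expRate_renewal {η : ℝ} (hη : 0 < η) (hη1 : η ≤ 1) (c : {c : ℝ // 0 < c}) {e : ℕ → ℝ}
    (he : ∀ n, 0 ≤ e n) (hes : Summable e) (he1 : ∑' n, e n < 1) {Ce : ℝ}
    (htail : ∀ n, absTail e n ≤ Ce * expRate η c n) :
    ∃ j, ∀ C, ∃ C', ∀ s x : ℕ → ℝ, (∀ n, 0 ≤ x n) → (∀ n, s n ≤ C * expRate η c n) →
      (∀ n, x n ≤ s n + seqConv e x n) → ∀ n, x n ≤ C' * expRate η j n := by
  have hCe : 0 ≤ Ce := by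
    have := (absTail_nonneg e 0).trans (htail 0)
    exact nonneg_of_mul_nonneg_left this (expRate_pos η c 0)
  have hle : ∀ n, e n ≤ Ce * expRate η c n := fun n =>
    ((le_abs_self _).trans (abs_le_absTail hes.abs n)).trans (htail n)
  set h : {c : ℝ // 0 < c} := ⟨c.1 / 2, half_pos c.2⟩ with hh
  have hbound : ∀ c' : ℝ, c' ≤ c.1 / 2 → ∀ n : ℕ,
      e n * Real.exp (c' * (n : ℝ) ^ η) ≤ Ce * expRate η h n := by
    intro c' hc' n
    calc e n * Real.exp (c' * (n : ℝ) ^ η)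
        ≤ Ce * expRate η c n * Real.exp (c' * (n : ℝ) ^ η) := by gcongr; exact hle n
      _ = Ce * Real.exp (-c.1 * (n : ℝ) ^ η + c' * (n : ℝ) ^ η) := by
          rw [Real.exp_add, expRate]; ring
      _ ≤ Ce * expRate η h n := by
          rw [expRate]
          gcongr
          have : 0 ≤ (n : ℝ) ^ η := by positivity
          rw [hh]
          nlinarith
  have hcont : Tendsto (fun c' : ℝ => ∑' n : ℕ, e n * Real.exp (c' * (n : ℝ) ^ η)) (𝓝[>] 0)
      (𝓝 (∑' n, e n)) := by
    refine tendsto_tsum_of_dominated_convergence ((summable_expRate hη h).mul_left Ce) ?_ ?_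
    · intro n
      have : Continuous fun c' : ℝ => e n * Real.exp (c' * (n : ℝ) ^ η) := by fun_prop
      have := this.tendsto 0
      simp only [zero_mul, Real.exp_zero, mul_one] at this
      exact this.mono_left nhdsWithin_le_nhds
    · have : ∀ᶠ c' : ℝ in 𝓝[>] 0, c' < c.1 / 2 :=
        nhdsWithin_le_nhds (eventually_lt_nhds (half_pos c.2))
      filter_upwards [this] with c' hc' n
      rw [Real.norm_of_nonneg (mul_nonneg (he n) (Real.exp_pos _).le)]
      exact hbound c' hc'.le n
  have h1 := hcont.eventually_lt_const he1
  have h2 : ∀ᶠ c' : ℝ in 𝓝[>] 0, c' < c.1 / 2 :=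
    nhdsWithin_le_nhds (eventually_lt_nhds (half_pos c.2))
  obtain ⟨c', h3, h4, h5⟩ := (h1.and (h2.and self_mem_nhdsWithin)).exists
  set δ := ∑' n : ℕ, e n * Real.exp (c' * (n : ℝ) ^ η) with hδ
  have hsδ : Summable fun n : ℕ => e n * Real.exp (c' * (n : ℝ) ^ η) :=
    Summable.of_nonneg_of_le (fun n => mul_nonneg (he n) (Real.exp_pos _).le)
      (hbound c' h4.le) ((summable_expRate hη h).mul_left Ce)
  refine ⟨⟨c', h5⟩, fun C => ⟨|C| / (1 - δ), fun s x hx hs hsub n => ?_⟩⟩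
  have key : ∀ n : ℕ, x n * Real.exp (c' * (n : ℝ) ^ η) ≤ |C| / (1 - δ) := by
    refine le_of_forall_le_add_mul h3 fun n B hB => ?_
    have hB0 : 0 ≤ B := (mul_nonneg (hx n) (Real.exp_pos _).le).trans (hB n le_rfl)
    have hs1 : s n * Real.exp (c' * (n : ℝ) ^ η) ≤ |C| := by
      calc s n * Real.exp (c' * (n : ℝ) ^ η)
          ≤ |C| * expRate η c n * Real.exp (c' * (n : ℝ) ^ η) := by
            gcongr
            exact (hs n).trans (mul_le_mul_of_nonneg_right (le_abs_self C) (expRate_pos _ _ n).le)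
        _ = |C| * Real.exp (-c.1 * (n : ℝ) ^ η + c' * (n : ℝ) ^ η) := by
            rw [Real.exp_add, expRate]; ring
        _ ≤ |C| * 1 := by
            gcongr
            rw [Real.exp_le_one_iff]
            have : 0 ≤ (n : ℝ) ^ η := by positivity
            have := c.2
            nlinarith
        _ = |C| := mul_one _
    have hs2 : seqConv e x n * Real.exp (c' * (n : ℝ) ^ η) ≤ δ * B := by
      calc seqConv e x n * Real.exp (c' * (n : ℝ) ^ η)
          ≤ ∑ k ∈ Finset.range (n + 1), (e k * Real.exp (c' * (k : ℝ) ^ η)) * B := by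
            rw [seqConv, Finset.sum_mul]
            refine Finset.sum_le_sum fun k hk => ?_
            have hkn : k ≤ n := by have := Finset.mem_range.1 hk; omega
            have hsubadd : (n : ℝ) ^ η ≤ (k : ℝ) ^ η + ((n - k : ℕ) : ℝ) ^ η := by
              have := Real.rpow_add_le_add_rpow k.cast_nonneg (n - k).cast_nonneg hη.le hη1
              rwa [← Nat.cast_add, Nat.add_sub_cancel' hkn] at this
            calc e k * x (n - k) * Real.exp (c' * (n : ℝ) ^ η)
                ≤ e k * x (n - k) *
                  Real.exp (c' * (k : ℝ) ^ η + c' * ((n - k : ℕ) : ℝ) ^ η) := by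
                  have : 0 ≤ e k * x (n - k) := mul_nonneg (he k) (hx _)
                  gcongr
                  rw [← mul_add]
                  exact mul_le_mul_of_nonneg_left hsubadd (le_of_lt h5)
              _ = (e k * Real.exp (c' * (k : ℝ) ^ η)) *
                  (x (n - k) * Real.exp (c' * ((n - k : ℕ) : ℝ) ^ η)) := by
                  rw [Real.exp_add]; ring
              _ ≤ _ := mul_le_mul_of_nonneg_left (hB _ (Nat.sub_le _ _))
                  (mul_nonneg (he k) (Real.exp_pos _).le)
        _ ≤ δ * B := by
            rw [← Finset.sum_mul]
            gcongr
            exact hsδ.sum_le_tsum _ fun k _ => mul_nonneg (he k) (Real.exp_pos _).le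
    have := mul_le_mul_of_nonneg_right (hsub n) (Real.exp_pos (c' * (n : ℝ) ^ η)).le
    rw [add_mul] at this
    linarith
  have h6 := key n
  rw [← le_div_iff₀ (Real.exp_pos _)] at h6
  refine h6.trans (le_of_eq ?_)
  rw [expRate, neg_mul, Real.exp_neg, div_eq_mul_inv]

theorem isRateFamily_expRate {η : ℝ} (hη : 0 < η) (hη1 : η ≤ 1) : IsRateFamily (expRate η) where
  pos := expRate_pos η
  anti c m n hmn := by
    rw [expRate, expRate, Real.exp_le_exp]
    have : (m : ℝ) ^ η ≤ (n : ℝ) ^ η :=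
      Real.rpow_le_rpow m.cast_nonneg (by exact_mod_cast hmn) hη.le
    nlinarith [c.2]
  tendsto c := (summable_expRate hη c).tendsto_atTop_zero
  half c := by
    refine ⟨⟨c.1 / 2, half_pos c.2⟩, Real.exp (c.1 / 2), Real.exp_pos _, fun n => ?_⟩
    rw [expRate, expRate, ← Real.exp_add, Real.exp_le_exp]
    set h := n / 2
    have h0 : (n : ℝ) ^ η ≤ ((h : ℝ) + ((h : ℝ) + 1)) ^ η := by
      refine Real.rpow_le_rpow n.cast_nonneg ?_ hη.le
      exact_mod_cast (by omega : n ≤ h + (h + 1))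
    have h1 := Real.rpow_add_le_add_rpow h.cast_nonneg
      (by positivity : (0 : ℝ) ≤ (h : ℝ) + 1) hη.le hη1
    have h2 := Real.rpow_add_le_add_rpow h.cast_nonneg (zero_le_one (α := ℝ)) hη.le hη1
    rw [Real.one_rpow] at h2
    have := c.2
    dsimp only
    nlinarith
  directed c d := by
    refine ⟨⟨min c.1 d.1, lt_min c.2 d.2⟩, 1, one_pos, fun n => ?_⟩
    have : 0 ≤ (n : ℝ) ^ η := by positivity
    simp only [expRate, one_mul, Real.exp_le_exp]
    constructor
    · nlinarith [min_le_left c.1 d.1]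
    · nlinarith [min_le_right c.1 d.1]
  renewal c e he hes he1 := fun ⟨_, hC⟩ => expRate_renewal hη hη1 c he hes he1 hC

/-! ### The renewal theorem with rates -/

theorem absTail_seqConv_le_half {a b : ℕ → ℝ} (ha : Summable fun n => |a n|)
    (hb : Summable fun n => |b n|) (n : ℕ) :
    absTail (seqConv a b) n ≤
      absTail a 0 * absTail b (n / 2) + 2 * absTail b 0 * absTail a (n / 2) := by
  have h1 := absTail_seqConv_le ha hb n
  have h2 := seqConv_le_half (fun n => abs_nonneg (a n)) ha (absTail_nonneg b)
    (absTail_antitone hb) n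
  have h3 : absTail (fun k => |a k|) (n / 2) = absTail a (n / 2) := by
    simp only [absTail, abs_abs]
  rw [h3, ← absTail_zero] at h2
  have h4 := mul_le_mul_of_nonneg_right (absTail_antitone ha (Nat.div_le_self n 2))
    (absTail_nonneg b 0)
  linarith

theorem IsRateFamily.exists_absTail_seqConv_le {ι : Type*} {ρ : ι → ℕ → ℝ} (hρ : IsRateFamily ρ)
    (i : ι) : ∃ j, ∀ Na Nb Ca Cb : ℝ, ∃ C, ∀ a b : ℕ → ℝ, (Summable fun n => |a n|) →
      (Summable fun n => |b n|) → absTail a 0 ≤ Na → absTail b 0 ≤ Nb →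
      (∀ n, absTail a n ≤ Ca * ρ i n) → (∀ n, absTail b n ≤ Cb * ρ i n) →
      ∀ n, absTail (seqConv a b) n ≤ C * ρ j n := by
  obtain ⟨j, D, hD, hj⟩ := hρ.half i
  refine ⟨j, fun Na Nb Ca Cb => ⟨(Na * |Cb| + 2 * Nb * |Ca|) * D,
    fun a b ha hb hNa hNb hCa hCb n => ?_⟩⟩
  have hNa0 := (absTail_nonneg a 0).trans hNa
  have hNb0 := (absTail_nonneg b 0).trans hNb
  have hp := (hρ.pos i (n / 2)).le
  have h1 : absTail a (n / 2) ≤ |Ca| * ρ i (n / 2) :=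
    (hCa _).trans (mul_le_mul_of_nonneg_right (le_abs_self _) hp)
  have h2 : absTail b (n / 2) ≤ |Cb| * ρ i (n / 2) :=
    (hCb _).trans (mul_le_mul_of_nonneg_right (le_abs_self _) hp)
  calc absTail (seqConv a b) n
      ≤ absTail a 0 * absTail b (n / 2) + 2 * absTail b 0 * absTail a (n / 2) :=
        absTail_seqConv_le_half ha hb n
    _ ≤ Na * (|Cb| * ρ i (n / 2)) + 2 * Nb * (|Ca| * ρ i (n / 2)) := by
        have := absTail_nonneg a (n / 2)
        have := absTail_nonneg b (n / 2)
        gcongr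
    _ = (Na * |Cb| + 2 * Nb * |Ca|) * ρ i (n / 2) := by ring
    _ ≤ (Na * |Cb| + 2 * Nb * |Ca|) * (D * ρ j n) := by
        gcongr
        exact hj n
    _ = _ := by ring

theorem IsRateFamily.exists_le_of_eventually_zero {ι : Type*} {ρ : ι → ℕ → ℝ}
    (hρ : IsRateFamily ρ) (i : ι) {x : ℕ → ℝ} {D : ℝ} (hD : ∀ n, x n ≤ D) {N : ℕ}
    (hN : ∀ n, N ≤ n → x n ≤ 0) : ∃ C, ∀ n, x n ≤ C * ρ i n := by
  refine ⟨|D| / ρ i N, fun n => ?_⟩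
  have hp := hρ.pos i
  rcases le_total N n with h | h
  · exact (hN n h).trans (mul_nonneg (div_nonneg (abs_nonneg _) (hp N).le) (hp n).le)
  · calc x n ≤ |D| := (hD n).trans (le_abs_self D)
      _ = |D| / ρ i N * ρ i N := by field_simp [(hp N).ne']
      _ ≤ |D| / ρ i N * ρ i n := mul_le_mul_of_nonneg_left (hρ.anti i h)
          (div_nonneg (abs_nonneg _) (hp N).le)

theorem PowerSeries.coeff_mk_mul_mk (a b : ℕ → ℝ) (n : ℕ) :
    PowerSeries.coeff n (PowerSeries.mk a * PowerSeries.mk b) = seqConv a b n := by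
  rw [PowerSeries.coeff_mul, seqConv]
  simp only [PowerSeries.coeff_mk]
  exact Finset.Nat.sum_antidiagonal_eq_sum_range_succ (fun i j => a i * b j) n

theorem PowerSeries.mk_seqConv (a b : ℕ → ℝ) :
    PowerSeries.mk (seqConv a b) = PowerSeries.mk a * PowerSeries.mk b := by
  ext n
  rw [PowerSeries.coeff_mk_mul_mk, PowerSeries.coeff_mk]

theorem PowerSeries.mk_mul_mk_eq_one {a b : ℕ → ℝ}
    (h : ∀ n, seqConv a b n = if n = 0 then 1 else 0) :
    PowerSeries.mk a * PowerSeries.mk b = 1 := by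
  ext n
  rw [PowerSeries.coeff_mk_mul_mk, h, PowerSeries.coeff_one]

/-- The inverse of an absolutely convergent power series inherits the decay of the tails. -/
theorem IsRateFamily.exists_absTail_inverse_le {ι : Type*} {ρ : ι → ℕ → ℝ} (hρ : IsRateFamily ρ)
    {i : ι} {a b : ℕ → ℝ} (ha : Summable fun n => |a n|) (hb : Summable fun n => |b n|)
    {C : ℝ} (hC : ∀ n, absTail a n ≤ C * ρ i n)
    (hab : ∀ n, seqConv a b n = if n = 0 then 1 else 0) :
    ∃ j C', ∀ n, absTail b n ≤ C' * ρ j n := by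
  obtain ⟨N, hN⟩ : ∃ N, absTail a 0 * absTail b N < 1 := by
    have h1 := (absTail_tendsto_zero b).const_mul (absTail a 0)
    rw [mul_zero] at h1
    exact (h1.eventually_lt_const zero_lt_one).exists
  set p : ℕ → ℝ := fun n => if n < N then b n else 0 with hp
  set q : ℕ → ℝ := fun n => if n < N then 0 else b n with hq
  have hpb : ∀ n, |p n| ≤ |b n| := fun n => by
    simp only [hp]; split_ifs <;> simp
  have hqb : ∀ n, |q n| ≤ |b n| := fun n => by
    simp only [hq]; split_ifs <;> simp
  have hps : Summable fun n => |p n| := .of_nonneg_of_le (fun _ => abs_nonneg _) hpb hb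
  have hqs : Summable fun n => |q n| := .of_nonneg_of_le (fun _ => abs_nonneg _) hqb hb
  have hpq : PowerSeries.mk b = PowerSeries.mk p + PowerSeries.mk q := by
    ext n
    simp only [PowerSeries.coeff_mk, map_add, hp, hq]
    split_ifs <;> simp
  have hq0 : absTail q 0 = absTail b N := by
    have h1 := sum_add_absTail hqs N
    rw [Finset.sum_eq_zero, zero_add] at h1
    · rw [← h1]
      refine tsum_congr fun k => ?_
      simp [hq]
    · intro k hk
      simp [hq, Finset.mem_range.1 hk]
  have hptail : ∀ n, N ≤ n → absTail p n ≤ 0 := by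
    intro n hn
    refine le_of_eq ((tsum_congr fun k => ?_).trans tsum_zero)
    have : ¬ (k + n < N) := by omega
    simp [hp, this]
  set e : ℕ → ℝ := seqConv a q with he
  have hes : Summable fun n => |e n| := (hasSum_seqConv ha hqs).1
  have he1 : absTail e 0 < 1 := by
    refine lt_of_le_of_lt ?_ hN
    have h1 := absTail_seqConv_le ha hqs 0
    have h2 : ∑' n, |e n| ≤ ∑' n, seqConv (fun k => |a k|) (fun k => |q k|) n := by
      have ha' : Summable fun n => |(|a n|)| := by simpa only [abs_abs] using ha
      have hq' : Summable fun n => |(|q n|)| := by simpa only [abs_abs] using hqs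
      exact hes.tsum_le_tsum (abs_seqConv_le a q) (Summable.of_abs (hasSum_seqConv ha' hq').1)
    rw [absTail_zero]
    refine h2.trans (le_of_eq ?_)
    rw [(hasSum_seqConv (by simpa only [abs_abs] using ha)
      (by simpa only [abs_abs] using hqs)).2, ← absTail_zero, ← absTail_zero, hq0]
  have hone := PowerSeries.mk_mul_mk_eq_one hab
  have heq : ∀ n, e n = (if n = 0 then 1 else 0) - seqConv a p n := by
    intro n
    rw [← hab, ← PowerSeries.coeff_mk_mul_mk, ← PowerSeries.coeff_mk_mul_mk, hpq, mul_add, map_add,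
      PowerSeries.coeff_mk_mul_mk a q, he]
    ring
  have hbe : ∀ n, b n = p n + seqConv e b n := by
    intro n
    have h1 : PowerSeries.mk b = PowerSeries.mk p + PowerSeries.mk e * PowerSeries.mk b := by
      rw [he, PowerSeries.mk_seqConv]
      calc PowerSeries.mk b = PowerSeries.mk p + PowerSeries.mk q := hpq
        _ = PowerSeries.mk p + (PowerSeries.mk a * PowerSeries.mk b) * PowerSeries.mk q := by
            rw [hone, one_mul]
        _ = _ := by ring
    have h2 := congrArg (PowerSeries.coeff n) h1
    rwa [map_add, PowerSeries.coeff_mk_mul_mk, PowerSeries.coeff_mk, PowerSeries.coeff_mk] at h2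
  obtain ⟨Cp, hCp⟩ := hρ.exists_le_of_eventually_zero i
    (fun n => absTail_antitone hps (Nat.zero_le n)) hptail
  obtain ⟨j, hj⟩ := hρ.exists_absTail_seqConv_le i
  obtain ⟨C1, hC1⟩ := hj (absTail a 0) (absTail p 0) C Cp
  have hap := hC1 a p ha hps le_rfl le_rfl hC hCp
  have haps := (hasSum_seqConv ha hps).1
  obtain ⟨C2, hC2⟩ : ∃ C2, ∀ n, absTail e n ≤ C2 * ρ j n := by
    obtain ⟨C3, hC3⟩ := hρ.exists_le_of_eventually_zero j (N := 1)
      (x := fun n => absTail e n - absTail (seqConv a p) n) (D := absTail e 0)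
      (fun n => by linarith [absTail_nonneg (seqConv a p) n, absTail_antitone hes (Nat.zero_le n)])
      (fun n hn => by
        rw [sub_nonpos]
        refine le_of_eq (tsum_congr fun k => ?_)
        rw [heq, if_neg (by omega), zero_sub, abs_neg])
    exact ⟨C3 + C1, fun n => by linarith [hC3 n, hap n]⟩
  obtain ⟨Cp', hCp'⟩ := hρ.exists_le_of_eventually_zero j
    (fun n => absTail_antitone hps (Nat.zero_le n)) hptail
  obtain ⟨k, hk⟩ := hρ.renewal j (fun n => |e n|) (fun _ => abs_nonneg _) hes he1
    ⟨C2, by simpa only [absTail, abs_abs] using hC2⟩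
  obtain ⟨C', hC'⟩ := hk (Cp' + C2 * absTail b 0)
  refine ⟨k, C', hC' (fun n => absTail p n + absTail e n * absTail b 0) _ (absTail_nonneg b)
    (fun n => ?_) fun n => ?_⟩
  · have := mul_le_mul_of_nonneg_right (hC2 n) (absTail_nonneg b 0)
    linarith [hCp' n]
  · have hebs := (hasSum_seqConv hes hb).1
    have heb := absTail_seqConv_le hes hb n
    have h1 : absTail b n ≤ absTail p n + absTail (seqConv e b) n := by
      have s1 := (summable_nat_add_iff (f := fun k => |b k|) n).2 hb
      have s2 := (summable_nat_add_iff (f := fun k => |p k|) n).2 hps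
      have s3 := (summable_nat_add_iff (f := fun k => |seqConv e b k|) n).2 hebs
      rw [absTail, absTail, absTail, ← s2.tsum_add s3]
      refine s1.tsum_le_tsum (fun m => ?_) (s2.add s3)
      conv_lhs => rw [hbe]
      exact abs_add_le _ _
    linarith

section Renewal

variable {f W : ℕ → ℝ}

theorem tsum_mul_pow_ne_zero_of_gcd (hf : ∀ n, 0 ≤ f n) (hf0 : f 0 = 0)
    (hgcd : ∀ d : ℕ, (∀ n, 0 < f n → d ∣ n) → d = 1)
    (hW : ∀ n, W n = 1 - ∑ k ∈ Finset.range (n + 1), f k) (hW0 : ∀ n, 0 ≤ W n)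
    (hWs : Summable W) {z : ℂ} (hz : ‖z‖ ≤ 1) : ∑' n, (W n : ℂ) * z ^ n ≠ 0 := by
  intro h0
  have hsz : ∀ {g : ℕ → ℝ}, (∀ n, 0 ≤ g n) → Summable g → Summable fun n => (g n : ℂ) * z ^ n := by
    intro g hg hgs
    refine Summable.of_norm_bounded hgs fun n => ?_
    rw [norm_mul, Complex.norm_real, Real.norm_of_nonneg (hg n), norm_pow]
    exact mul_le_of_le_one_right (hg n) (pow_le_one₀ (norm_nonneg _) hz)
  have hfsum : HasSum f 1 := by
    rw [hasSum_iff_tendsto_nat_of_nonneg hf, ← tendsto_add_atTop_iff_nat 1]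
    have h1 : Tendsto (fun n => 1 - W n) atTop (𝓝 (1 - 0)) :=
      tendsto_const_nhds.sub hWs.tendsto_atTop_zero
    rw [sub_zero] at h1
    refine h1.congr fun n => ?_
    rw [hW n]; ring
  have hsW := hsz hW0 hWs
  have hsf := hsz hf hfsum.summable
  have hfz : ∑' n, (f n : ℂ) * z ^ n = 1 := by
    have h1 : ∑' n, (W (n + 1) : ℂ) * z ^ (n + 1) + W 0 = 0 := by
      rw [← h0, hsW.tsum_eq_zero_add]
      simp [add_comm]
    have h2 : ∑' n, (W n : ℂ) * z ^ (n + 1) = 0 := by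
      simp only [pow_succ, ← mul_assoc]
      rw [tsum_mul_right, h0, zero_mul]
    have s1 : Summable fun n => (W (n + 1) : ℂ) * z ^ (n + 1) := (summable_nat_add_iff 1).2 hsW
    have s2 : Summable fun n => (W n : ℂ) * z ^ (n + 1) := by
      simp only [pow_succ, ← mul_assoc]
      exact hsW.mul_right z
    have h3 : ∑' n, (f (n + 1) : ℂ) * z ^ (n + 1) = 1 := by
      have h4 : ∀ n, (f (n + 1) : ℂ) * z ^ (n + 1) =
          (W n : ℂ) * z ^ (n + 1) - (W (n + 1) : ℂ) * z ^ (n + 1) := by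
        intro n
        rw [← sub_mul, ← Complex.ofReal_sub, hW n, hW (n + 1), Finset.sum_range_succ _ (n + 1)]
        congr 2
        ring
      rw [tsum_congr h4, s2.tsum_sub s1, h2]
      have h5 : W 0 = 1 := by rw [hW 0]; simp [hf0]
      rw [h5] at h1
      push_cast at h1
      linear_combination -h1
    rw [hsf.tsum_eq_zero_add, hf0, h3]
    simp
  have hpow : ∀ n, 0 < f n → z ^ n = 1 := by
    have hre : HasSum (fun n => f n * (z ^ n).re) 1 := by
      have := Complex.hasSum_re hsf.hasSum
      rw [hfz] at this
      simpa [Complex.re_ofReal_mul] using this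
    have hzn : ∀ n, ‖z ^ n‖ ≤ 1 := fun n => by
      rw [norm_pow]; exact pow_le_one₀ (norm_nonneg _) hz
    have hd := hfsum.sub hre
    rw [sub_self] at hd
    have hnn : ∀ n, 0 ≤ f n - f n * (z ^ n).re := fun n => by
      have := (Complex.re_le_norm (z ^ n)).trans (hzn n)
      nlinarith [hf n]
    intro n hn
    have h1 := (hasSum_zero_iff_of_nonneg hnn).1 hd
    have h2 : f n - f n * (z ^ n).re = 0 := congrFun h1 n
    have h3 : (z ^ n).re = 1 := by
      have : f n * (1 - (z ^ n).re) = 0 := by linarith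
      rcases mul_eq_zero.1 this with h | h <;> linarith
    have h4 : (z ^ n).im = 0 := by
      have h5 := Complex.sq_norm (z ^ n)
      rw [Complex.normSq_apply, h3] at h5
      have h6 := hzn n
      have : (z ^ n).im * (z ^ n).im ≤ 0 := by nlinarith [norm_nonneg (z ^ n)]
      nlinarith [mul_self_nonneg (z ^ n).im,
        mul_self_eq_zero.1 (le_antisymm this (mul_self_nonneg _))]
    exact Complex.ext (by simpa using h3) (by simpa using h4)
  have hz1 : z = 1 := by
    rw [← orderOf_eq_one_iff]
    exact hgcd _ fun n hn => orderOf_dvd_of_pow_eq_one (hpow n hn)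
  rw [hz1] at h0
  simp only [one_pow, mul_one] at h0
  rw [← Complex.ofReal_tsum] at h0
  have h1 := hWs.le_tsum 0 fun n _ => hW0 n
  have h2 : W 0 = 1 := by rw [hW 0]; simp [hf0]
  have h3 : ∑' n, W n = 0 := by exact_mod_cast h0
  linarith

/-- The renewal theorem with rates: for an aperiodic renewal sequence whose waiting time has
integrable tails `W`, the solutions of the renewal equations with sources dominated by `W`
converge at the rate of the sums of the tails. -/
theorem IsRateFamily.exists_renewal_le {ι : Type*} {ρ : ι → ℕ → ℝ} (hρ : IsRateFamily ρ)
    (hf : ∀ n, 0 ≤ f n) (hf0 : f 0 = 0)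
    (hgcd : ∀ d : ℕ, (∀ n, 0 < f n → d ∣ n) → d = 1)
    (hW : ∀ n, W n = 1 - ∑ k ∈ Finset.range (n + 1), f k) (hW0 : ∀ n, 0 ≤ W n)
    (hWs : Summable W) {i : ι} {C : ℝ} (hC : ∀ n, absTail W n ≤ C * ρ i n) :
    ∃ j C', ∀ w y : ℕ → ℝ, (∀ n, 0 ≤ w n) → (∀ n, w n ≤ W n) →
      (∀ n, y n = w n + seqConv f y n) →
      ∀ n, |y n - (∑' k, w k) / ∑' k, W k| ≤ C' * ρ j n := by
  obtain ⟨b, hb, hWb⟩ := exists_summable_inverse_real hWs.abs fun z hz =>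
    tsum_mul_pow_ne_zero_of_gcd hf hf0 hgcd hW hW0 hWs hz
  change ∀ n, seqConv W b n = _ at hWb
  obtain ⟨i₁, C₁, hC₁⟩ := hρ.exists_absTail_inverse_le hWs.abs hb hC hWb
  obtain ⟨i₂, C₂, hC₂, h₂⟩ := hρ.directed i i₁
  have hWt : ∀ n, absTail W n ≤ |C| * C₂ * ρ i₂ n := fun n => by
    calc absTail W n ≤ C * ρ i n := hC n
      _ ≤ |C| * ρ i n := mul_le_mul_of_nonneg_right (le_abs_self _) (hρ.pos i n).le
      _ ≤ |C| * (C₂ * ρ i₂ n) := mul_le_mul_of_nonneg_left (h₂ n).1 (abs_nonneg _)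
      _ = _ := by ring
  have hbt : ∀ n, absTail b n ≤ |C₁| * C₂ * ρ i₂ n := fun n => by
    calc absTail b n ≤ C₁ * ρ i₁ n := hC₁ n
      _ ≤ |C₁| * ρ i₁ n := mul_le_mul_of_nonneg_right (le_abs_self _) (hρ.pos i₁ n).le
      _ ≤ |C₁| * (C₂ * ρ i₂ n) := mul_le_mul_of_nonneg_left (h₂ n).2 (abs_nonneg _)
      _ = _ := by ring
  obtain ⟨j, hj⟩ := hρ.exists_absTail_seqConv_le i₂
  obtain ⟨C', hC'⟩ := hj (absTail W 0) (absTail b 0) (|C| * C₂) (|C₁| * C₂)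
  refine ⟨j, C', fun w y hw hwW hy n => ?_⟩
  have hwabs : ∀ n, |w n| ≤ |W n| := fun n => by
    rw [abs_of_nonneg (hw n), abs_of_nonneg (hW0 n)]; exact hwW n
  have hws : Summable fun n => |w n| := .of_nonneg_of_le (fun _ => abs_nonneg _) hwabs hWs.abs
  have htail := hC' w b hws hb (absTail_mono hWs.abs hwabs 0) le_rfl
    (fun n => (absTail_mono hWs.abs hwabs n).trans (hWt n)) hbt n
  have hone := PowerSeries.mk_mul_mk_eq_one hWb
  have hWX : (1 : PowerSeries ℝ) - PowerSeries.mk f = (1 - PowerSeries.X) * PowerSeries.mk W := by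
    ext m
    rw [sub_mul, one_mul, map_sub, map_sub, PowerSeries.coeff_mk, PowerSeries.coeff_mk,
      PowerSeries.coeff_one]
    cases m with
    | zero => simp [hW 0]
    | succ m =>
      rw [PowerSeries.coeff_succ_X_mul, PowerSeries.coeff_mk, hW, hW,
        Finset.sum_range_succ _ (m + 1)]
      simp
  have hyW : (1 - PowerSeries.mk f) * PowerSeries.mk y = PowerSeries.mk w := by
    ext m
    rw [sub_mul, one_mul, map_sub, PowerSeries.coeff_mk_mul_mk, PowerSeries.coeff_mk,
      PowerSeries.coeff_mk, hy m]
    ring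
  have hdiff : (1 - PowerSeries.X) * PowerSeries.mk y = PowerSeries.mk (seqConv w b) := by
    rw [PowerSeries.mk_seqConv, ← hyW, hWX]
    calc (1 - PowerSeries.X) * PowerSeries.mk y
        = (PowerSeries.mk W * PowerSeries.mk b) * ((1 - PowerSeries.X) * PowerSeries.mk y) := by
          rw [hone, one_mul]
      _ = _ := by ring
  have hysum : ∀ m, y m = ∑ k ∈ Finset.range (m + 1), seqConv w b k := by
    intro m
    induction m with
    | zero =>
      have := congrArg (PowerSeries.coeff 0) hdiff
      rw [sub_mul, one_mul, map_sub, PowerSeries.coeff_mk, PowerSeries.coeff_mk] at this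
      simpa using this
    | succ m ih =>
      have := congrArg (PowerSeries.coeff (m + 1)) hdiff
      rw [sub_mul, one_mul, map_sub, PowerSeries.coeff_mk, PowerSeries.coeff_mk,
        PowerSeries.coeff_succ_X_mul, PowerSeries.coeff_mk] at this
      rw [Finset.sum_range_succ, ← ih]
      linarith
  obtain ⟨hcs, hct⟩ := hasSum_seqConv hws hb
  have hWbt : (∑' k, W k) * ∑' k, b k = 1 := by
    rw [← (hasSum_seqConv hWs.abs hb).2, tsum_congr hWb]
    exact tsum_ite_eq 0 (fun _ => (1 : ℝ))
  have hL : (∑' k, w k) / ∑' k, W k = ∑' k, seqConv w b k := by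
    rw [hct, div_eq_iff (left_ne_zero_of_mul_eq_one hWbt), mul_assoc, mul_comm (∑' k, b k), hWbt,
      mul_one]
  have hsplit := (Summable.of_abs hcs).sum_add_tsum_nat_add (n + 1)
  rw [hL, hysum, ← hsplit]
  have hs' : Summable fun k => |seqConv w b (k + (n + 1))| :=
    (summable_nat_add_iff (f := fun k => |seqConv w b k|) (n + 1)).2 hcs
  have h1 : |∑' k, seqConv w b (k + (n + 1))| ≤ absTail (seqConv w b) (n + 1) := by
    have := norm_tsum_le_tsum_norm (f := fun k => seqConv w b (k + (n + 1))) hs'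
    exact this
  have h2 := absTail_antitone hcs (Nat.le_succ n)
  rw [sub_add_cancel_left, abs_neg]
  exact h1.trans (h2.trans htail)

end Renewal

theorem summable_and_absTail_le_of_sum_le {e : ℕ → ℝ} (he : ∀ n, 0 ≤ e n) {n : ℕ} {B : ℝ}
    (h : ∀ N, ∑ k ∈ Finset.range N, e (k + n) ≤ B) : Summable e ∧ absTail e n ≤ B := by
  refine ⟨(summable_nat_add_iff n).1 (summable_of_sum_range_le (fun k => he _) h), ?_⟩
  refine Real.tsum_le_of_sum_range_le (fun _ => abs_nonneg _) fun N => ?_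
  simpa only [abs_of_nonneg (he _)] using h N

/-- The kernel obtained from a decreasing sequence of survival probabilities, thinned by `1 - ε`. -/
def thinnedKernel (ε : ℝ) (Q : ℕ → ℝ) : ℕ → ℝ
  | 0 => 0
  | n + 1 => (1 - ε) * (Q n - Q (n + 1))

section Thinned

variable {ε : ℝ} {Q : ℕ → ℝ}

theorem thinnedKernel_nonneg (hε : ε < 1) (hQ : Antitone Q) (n : ℕ) : 0 ≤ thinnedKernel ε Q n := by
  cases n with
  | zero => exact le_rfl
  | succ n => exact mul_nonneg (by linarith) (sub_nonneg.2 (hQ n.le_succ))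

theorem sum_thinnedKernel_le (hε : ε < 1) (hQ0 : ∀ n, 0 ≤ Q n) (n N : ℕ) :
    ∑ k ∈ Finset.range N, thinnedKernel ε Q (k + n) ≤ (1 - ε) * Q (n - 1) := by
  have hε' : 0 ≤ 1 - ε := by linarith
  have key : ∀ n N, ∑ k ∈ Finset.range N, thinnedKernel ε Q (k + (n + 1)) ≤ (1 - ε) * Q n := by
    intro n N
    have : ∑ k ∈ Finset.range N, thinnedKernel ε Q (k + (n + 1)) = (1 - ε) * (Q n - Q (N + n)) := by
      induction N with
      | zero => simp
      | succ N ih =>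
        rw [Finset.sum_range_succ, ih, ← add_assoc, thinnedKernel,
          show N + n + 1 = N + 1 + n by ring]
        ring
    rw [this]
    exact mul_le_mul_of_nonneg_left (by linarith [hQ0 (N + n)]) hε'
  cases n with
  | zero =>
    cases N with
    | zero => simpa using mul_nonneg hε' (hQ0 _)
    | succ N =>
      rw [Finset.sum_range_succ']
      simpa [thinnedKernel] using key 0 N
  | succ n => exact key n N

theorem absTail_thinnedKernel_le (hε0 : 0 < ε) (hε : ε < 1) (hQ : Antitone Q)
    (hQ0 : ∀ n, 0 ≤ Q n) (n : ℕ) :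
    Summable (thinnedKernel ε Q) ∧ absTail (thinnedKernel ε Q) n ≤ Q (n / 2) := by
  obtain ⟨h1, h2⟩ := summable_and_absTail_le_of_sum_le (thinnedKernel_nonneg hε hQ)
    (sum_thinnedKernel_le hε hQ0 n)
  refine ⟨h1, h2.trans ?_⟩
  have h3 : Q (n - 1) ≤ Q (n / 2) := hQ (by omega)
  nlinarith [hQ0 (n - 1)]

theorem seqConv_survival_eq (hQ1 : Q 0 = 1) {g V : ℕ → ℝ} {σ : ℝ}
    (hV : ∀ n, V n = σ - ∑ k ∈ Finset.range (n + 1), g k) (n : ℕ) :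
    (1 - ε) * seqConv g Q n =
      (1 - ε) * (σ * Q n - V n) + seqConv (thinnedKernel ε Q) V n := by
  have h1 : PowerSeries.mk g = PowerSeries.C σ - (1 - PowerSeries.X) * PowerSeries.mk V := by
    ext m
    rw [sub_mul, one_mul, map_sub, map_sub, PowerSeries.coeff_mk, PowerSeries.coeff_mk,
      PowerSeries.coeff_C]
    cases m with
    | zero => simp [hV 0]
    | succ m =>
      rw [PowerSeries.coeff_succ_X_mul, PowerSeries.coeff_mk, hV, hV,
        Finset.sum_range_succ _ (m + 1)]
      simp
  have h2 : PowerSeries.mk (thinnedKernel ε Q) =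
      PowerSeries.C (1 - ε) * (1 - (1 - PowerSeries.X) * PowerSeries.mk Q) := by
    ext m
    rw [PowerSeries.coeff_C_mul, sub_mul 1 PowerSeries.X, one_mul, map_sub, map_sub,
      PowerSeries.coeff_mk, PowerSeries.coeff_mk, PowerSeries.coeff_one]
    cases m with
    | zero => simp [thinnedKernel, hQ1]
    | succ m =>
      rw [PowerSeries.coeff_succ_X_mul, PowerSeries.coeff_mk, thinnedKernel]
      simp
  have h3 : PowerSeries.C (1 - ε) * (PowerSeries.mk g * PowerSeries.mk Q) =
      PowerSeries.C (1 - ε) * (PowerSeries.C σ * PowerSeries.mk Q - PowerSeries.mk V) +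
        PowerSeries.mk (thinnedKernel ε Q) * PowerSeries.mk V := by
    rw [h1, h2]
    ring
  have h4 := congrArg (PowerSeries.coeff n) h3
  rwa [map_add, PowerSeries.coeff_C_mul, PowerSeries.coeff_C_mul, PowerSeries.coeff_mk_mul_mk,
    PowerSeries.coeff_mk_mul_mk, map_sub, PowerSeries.coeff_C_mul, PowerSeries.coeff_mk,
    PowerSeries.coeff_mk] at h4

/-- Tails of a randomly stopped sum: `V n` is the mass that has not been stopped at time `n`,
each visit being stopped with probability `ε`, and the waiting times between visits being
dominated by a law with survival function `Q`. -/
theorem IsRateFamily.exists_stopped_le {ι : Type*} {ρ : ι → ℕ → ℝ} (hρ : IsRateFamily ρ)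
    (hε0 : 0 < ε) (hε : ε < 1) (hQ : Antitone Q) (hQ0 : ∀ n, 0 ≤ Q n) (hQ1 : Q 0 = 1)
    {i : ι} {CQ : ℝ} (hCQ : ∀ n, Q n ≤ CQ * ρ i n) :
    ∃ j, ∀ C σ₀, ∃ C', ∀ (g V s : ℕ → ℝ) (σ : ℝ), σ ≤ σ₀ → 0 ≤ σ →
      (∀ n, V n = σ - ∑ k ∈ Finset.range (n + 1), g k) → (∀ n, 0 ≤ V n) →
      (∀ n, s n ≤ C * ρ i n) → (∀ n, V n ≤ s n + (1 - ε) / ε * seqConv g Q n) →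
      ∀ n, V n ≤ C' * ρ j n := by
  obtain ⟨k, D, hD, hk⟩ := hρ.half i
  have hCQ0 : 0 ≤ CQ := by
    have := (hQ0 0).trans (hCQ 0)
    exact nonneg_of_mul_nonneg_left this (hρ.pos i 0)
  have htail : ∀ n, absTail (thinnedKernel ε Q) n ≤ CQ * D * ρ k n := fun n => by
    calc absTail (thinnedKernel ε Q) n ≤ Q (n / 2) := (absTail_thinnedKernel_le hε0 hε hQ hQ0 n).2
      _ ≤ CQ * ρ i (n / 2) := hCQ _
      _ ≤ CQ * (D * ρ k n) := mul_le_mul_of_nonneg_left (hk n) hCQ0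
      _ = _ := by ring
  have hlt : ∑' n, thinnedKernel ε Q n < 1 := by
    have h1 := (summable_and_absTail_le_of_sum_le (thinnedKernel_nonneg hε hQ)
      (sum_thinnedKernel_le hε hQ0 0)).2
    rw [absTail_zero] at h1
    simp only [abs_of_nonneg (thinnedKernel_nonneg hε hQ _), hQ1] at h1
    linarith
  obtain ⟨j, hj⟩ := hρ.renewal k _ (thinnedKernel_nonneg hε hQ)
    (absTail_thinnedKernel_le hε0 hε hQ hQ0 0).1 hlt ⟨_, htail⟩
  refine ⟨j, fun C σ₀ => ?_⟩
  obtain ⟨C', hC'⟩ := hj (|C| * D + σ₀ * (CQ * D))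
  refine ⟨C', fun g V s σ hσ hσ0 hV hV0 hs hsub =>
    hC' (fun n => ε * s n + (1 - ε) * (σ * Q n)) V hV0 (fun n => ?_) fun n => ?_⟩
  · have h0 : ρ i n ≤ D * ρ k n := (hρ.anti i (Nat.div_le_self n 2)).trans (hk n)
    have hpk := (hρ.pos k n).le
    have h1 : s n ≤ |C| * (D * ρ k n) := by
      calc s n ≤ C * ρ i n := hs n
        _ ≤ |C| * ρ i n := mul_le_mul_of_nonneg_right (le_abs_self _) (hρ.pos i n).le
        _ ≤ _ := mul_le_mul_of_nonneg_left h0 (abs_nonneg _)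
    have h2 : σ * Q n ≤ σ₀ * (CQ * (D * ρ k n)) := by
      have h3 : Q n ≤ CQ * (D * ρ k n) := (hCQ n).trans (mul_le_mul_of_nonneg_left h0 hCQ0)
      exact mul_le_mul hσ h3 (hQ0 n) (hσ0.trans hσ)
    have h4 : 0 ≤ |C| * (D * ρ k n) := by positivity
    have h5 : 0 ≤ σ₀ * (CQ * (D * ρ k n)) := (mul_nonneg hσ0 (hQ0 n)).trans h2
    have h6 := mul_le_mul_of_nonneg_left h1 hε0.le
    have h7 := mul_le_mul_of_nonneg_left h2 (by linarith : 0 ≤ 1 - ε)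
    nlinarith
  · have h1 := seqConv_survival_eq (ε := ε) hQ1 hV n
    have h2 := mul_le_mul_of_nonneg_left (hsub n) hε0.le
    have h3 : ε * (s n + (1 - ε) / ε * seqConv g Q n) = ε * s n + (1 - ε) * seqConv g Q n := by
      field_simp
    rw [h3, h1] at h2
    linarith

end Thinned

/-- Superposition of delayed copies of a converging sequence. -/
theorem IsRateFamily.exists_delayed_le {ι : Type*} {ρ : ι → ℕ → ℝ} (hρ : IsRateFamily ρ) (i : ι) :
    ∃ j, ∀ Cy CV σ₀, ∃ C', ∀ (y g V v A : ℕ → ℝ) (L σ : ℝ), 0 ≤ L → L ≤ 1 → 0 ≤ σ → σ ≤ σ₀ →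
      (∀ n, |y n - L| ≤ Cy * ρ i n) → (∀ n, 0 ≤ g n) →
      (∀ n, V n = σ - ∑ k ∈ Finset.range (n + 1), g k) → (∀ n, V n ≤ CV * ρ i n) →
      (∀ n, 0 ≤ v n) → (∀ n, v n ≤ V n) → (∀ n, A n = v n + seqConv g y n) →
      ∀ n, |A n - σ * L| ≤ C' * ρ j n := by
  obtain ⟨k, D, hD, hk⟩ := hρ.half i
  obtain ⟨j, D', hD', hj⟩ := hρ.half k
  refine ⟨j, fun Cy CV σ₀ => ⟨(|CV| + σ₀ * |Cy| + |Cy| * ρ i 0 * (|CV| + σ₀ / ρ i 0)) * (D * D'),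
    fun y g V v A L σ hL0 hL1 hσ0 hσ hy hg hV hCV hv0 hv hA n => ?_⟩⟩
  have hp0 := hρ.pos i 0
  have hσ₀ : 0 ≤ σ₀ := hσ0.trans hσ
  have hV0 : ∀ m, 0 ≤ V m := fun m => (hv0 m).trans (hv m)
  have hCV' : ∀ m, V m ≤ |CV| * ρ i m := fun m =>
    (hCV m).trans (mul_le_mul_of_nonneg_right (le_abs_self _) (hρ.pos i m).le)
  have hCy' : ∀ m, |y m - L| ≤ |Cy| * ρ i m := fun m =>
    (hy m).trans (mul_le_mul_of_nonneg_right (le_abs_self _) (hρ.pos i m).le)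
  have hgsum : ∀ m N, ∑ l ∈ Finset.range N, g (l + m) ≤ (|CV| + σ₀ / ρ i 0) * ρ i (m / 2) := by
    intro m N
    have hq : 0 ≤ σ₀ / ρ i 0 := div_nonneg hσ₀ hp0.le
    have hpm := (hρ.pos i (m / 2)).le
    cases m with
    | zero =>
      have h1 : ∑ l ∈ Finset.range N, g (l + 0) ≤ σ := by
        have h2 := hV N
        rw [Finset.sum_range_succ] at h2
        have := hV0 N
        have := hg N
        simp only [add_zero]
        linarith
      have h3 : σ₀ / ρ i 0 * ρ i 0 = σ₀ := by field_simp
      have h4 : 0 ≤ |CV| * ρ i 0 := mul_nonneg (abs_nonneg _) hp0.le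
      rw [Nat.zero_div, add_mul, h3]
      linarith
    | succ m =>
      have h1 : ∑ l ∈ Finset.range N, g (l + (m + 1)) = V m - V (m + N) := by
        rw [hV, hV, show m + N + 1 = (m + 1) + N by ring, Finset.sum_range_add g (m + 1) N]
        simp only [add_comm (m + 1)]
        ring
      rw [h1]
      have h2 := hV0 (m + N)
      have h3 := hCV' m
      have h4 : ρ i m ≤ ρ i ((m + 1) / 2) := hρ.anti i (by omega)
      have h5 := mul_le_mul_of_nonneg_left h4 (abs_nonneg CV)
      have h6 := mul_nonneg hq hpm
      rw [add_mul]
      linarith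
  have hgs := fun m => summable_and_absTail_le_of_sum_le hg (hgsum m)
  have hgσ : ∑' l, g l ≤ σ₀ := by
    refine Real.tsum_le_of_sum_range_le hg fun N => ?_
    have h2 := hV N
    rw [Finset.sum_range_succ] at h2
    linarith [hV0 N, hg N]
  have hdecomp : A n - σ * L = (v n - V n * L) + seqConv g (fun m => y m - L) n := by
    have h1 : seqConv g (fun m => y m - L) n =
        seqConv g y n - (∑ l ∈ Finset.range (n + 1), g l) * L := by
      simp only [seqConv, mul_sub, Finset.sum_sub_distrib, Finset.sum_mul]
    rw [h1, hA, hV]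
    ring
  have h1 : |v n - V n * L| ≤ V n := by
    rw [abs_le]
    have := hv0 n
    have := hv n
    have := hV0 n
    constructor <;> nlinarith
  have h2 : |seqConv g (fun m => y m - L) n| ≤ seqConv g (fun m => |Cy| * ρ i m) n := by
    refine (abs_seqConv_le _ _ n).trans ?_
    simp only [abs_of_nonneg (hg _)]
    exact seqConv_mono hg (fun _ => abs_nonneg _) (fun _ => le_rfl) hCy' n
  have h3 := seqConv_le_half hg (hgs 0).1 (x := fun m => |Cy| * ρ i m)
    (fun m => mul_nonneg (abs_nonneg _) (hρ.pos i m).le)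
    (fun a b hab => mul_le_mul_of_nonneg_left (hρ.anti i hab) (abs_nonneg _)) n
  have h4 := (hgs (n / 2)).2
  have e1 : ρ i (n / 2 / 2) ≤ D * D' * ρ j n := by
    calc ρ i (n / 2 / 2) ≤ D * ρ k (n / 2) := hk _
      _ ≤ D * (D' * ρ j n) := mul_le_mul_of_nonneg_left (hj n) hD.le
      _ = _ := by ring
  have e2 : ρ i (n / 2) ≤ ρ i (n / 2 / 2) := hρ.anti i (Nat.div_le_self _ _)
  have e3 : ρ i n ≤ ρ i (n / 2) := hρ.anti i (Nat.div_le_self _ _)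
  set r := ρ i (n / 2 / 2)
  have hr : 0 < r := hρ.pos i _
  calc |A n - σ * L| ≤ |v n - V n * L| + |seqConv g (fun m => y m - L) n| := by
        rw [hdecomp]; exact abs_add_le _ _
    _ ≤ |CV| * r + (σ₀ * (|Cy| * r) + |Cy| * ρ i 0 * ((|CV| + σ₀ / ρ i 0) * r)) := by
        refine add_le_add (h1.trans ((hCV' n).trans ?_)) (h2.trans (h3.trans ?_))
        · exact mul_le_mul_of_nonneg_left (e3.trans e2) (abs_nonneg _)
        · refine add_le_add (mul_le_mul hgσ ?_ ?_ hσ₀) (mul_le_mul_of_nonneg_left h4 ?_)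
          · exact mul_le_mul_of_nonneg_left e2 (abs_nonneg _)
          · exact mul_nonneg (abs_nonneg _) (hρ.pos i _).le
          · exact mul_nonneg (abs_nonneg _) hp0.le
    _ = (|CV| + σ₀ * |Cy| + |Cy| * ρ i 0 * (|CV| + σ₀ / ρ i 0)) * r := by ring
    _ ≤ (|CV| + σ₀ * |Cy| + |Cy| * ρ i 0 * (|CV| + σ₀ / ρ i 0)) * (D * D' * ρ j n) := by
        refine mul_le_mul_of_nonneg_left e1 ?_
        have : 0 ≤ σ₀ / ρ i 0 := div_nonneg hσ₀ hp0.le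
        positivity
    _ = _ := by ring

/-! ### The transfer operators of the return map -/

theorem epow_nonneg {β : ℝ} (hβ : 0 ≤ β) (s : ℕ∞) : 0 ≤ epow β s := by
  rw [epow]
  split_ifs
  · exact le_rfl
  · positivity

theorem epow_le_one {β : ℝ} (hβ : 0 ≤ β) (hβ1 : β ≤ 1) (s : ℕ∞) : epow β s ≤ 1 := by
  rw [epow]
  split_ifs
  · exact zero_le_one
  · exact pow_le_one₀ hβ hβ1

theorem epow_anti {β : ℝ} (hβ : 0 ≤ β) (hβ1 : β ≤ 1) {s t : ℕ∞} (h : s ≤ t) :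
    epow β t ≤ epow β s := by
  by_cases ht : t = ⊤
  · rw [ht, epow, if_pos rfl]
    exact epow_nonneg hβ s
  · have hs : s ≠ ⊤ := ne_top_of_le_ne_top ht h
    rw [epow, epow, if_neg ht, if_neg hs]
    exact pow_le_pow_of_le_one hβ hβ1 (ENat.toNat_le_toNat h ht)

theorem epow_add_one (β : ℝ) (s : ℕ∞) : epow β (s + 1) = β * epow β s := by
  by_cases hs : s = ⊤
  · simp [hs, epow]
  · have h1 : s + 1 ≠ ⊤ := by simpa using hs
    rw [epow, epow, if_neg h1, if_neg hs, ENat.toNat_add hs (by simp), ENat.toNat_one, pow_succ']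

theorem epow_natCast (β : ℝ) (n : ℕ) : epow β n = β ^ n := by
  simp [epow]

namespace YoungTower

variable (T : YoungTower.{u})

/-- The symbolic distance `β ^ s(x, y)` on the base. -/
def sepDist (x y : T.Δ₀) : ℝ := epow T.β (sepTime T.I T.Λ T.FR x y)

theorem sepDist_nonneg (x y : T.Δ₀) : 0 ≤ T.sepDist x y := epow_nonneg T.β_pos.le _

theorem sepDist_le_one (x y : T.Δ₀) : T.sepDist x y ≤ 1 := epow_le_one T.β_pos.le T.β_lt_one.le _

theorem sepDist_le_mul {i : ℕ} (hi : i ∈ T.I) {x y : T.Δ₀} (hx : x ∈ T.Λ i) (hy : y ∈ T.Λ i) :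
    T.sepDist x y ≤ T.β * T.sepDist (T.FR x) (T.FR y) := by
  rw [sepDist, sepDist, ← epow_add_one]
  refine epow_anti T.β_pos.le T.β_lt_one.le (le_iInf₂ fun n hn => ?_)
  cases n with
  | zero => exact absurd ⟨i, hi, hx, hy⟩ hn
  | succ n =>
    push_cast
    gcongr
    refine iInf₂_le n ?_
    simpa only [mem_ofPred_eq, Function.iterate_succ_apply] using hn

/-- The inverse branch of the return map with values in `Λ i`. -/
def branch (i : ℕ) (y : T.Δ₀) : T.Δ₀ := @Function.invFunOn _ _ ⟨y⟩ T.FR (T.Λ i) y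

variable {T}

theorem branch_spec {i : ℕ} (hi : i ∈ T.I) (y : T.Δ₀) :
    T.branch i y ∈ T.Λ i ∧ T.FR (T.branch i y) = y := by
  have : Nonempty T.Δ₀ := ⟨y⟩
  exact Function.invFunOn_pos ((T.FR_bij i hi).surjOn (mem_univ y))

theorem branch_FR {i : ℕ} (hi : i ∈ T.I) {x : T.Δ₀} (hx : x ∈ T.Λ i) :
    T.branch i (T.FR x) = x :=
  (T.FR_bij i hi).injOn (branch_spec hi _).1 hx (branch_spec hi _).2

theorem mem_image_FR_iff {i : ℕ} (hi : i ∈ T.I) {A : Set T.Δ₀} (hA : A ⊆ T.Λ i) (y : T.Δ₀) :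
    y ∈ T.FR '' A ↔ T.branch i y ∈ A := by
  constructor
  · rintro ⟨x, hx, rfl⟩
    rwa [branch_FR hi (hA hx)]
  · exact fun h => ⟨_, h, (branch_spec hi y).2⟩

theorem map_FR_withDensity {i : ℕ} (hi : i ∈ T.I) :
    ((T.m₀.restrict (T.Λ i)).withDensity fun x => ENNReal.ofReal (T.JFR x)).map T.FR = T.m₀ := by
  ext E hE
  have hE' := T.FR_meas hE
  rw [Measure.map_apply T.FR_meas hE, withDensity_apply _ hE', Measure.restrict_restrict hE',
    ← T.JFR_jac i hi _ inter_subset_right (hE'.inter (T.Λ_meas i hi))]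
  congr 1
  ext y
  rw [mem_image_FR_iff hi inter_subset_right]
  simp [branch_spec hi y]

theorem nullMeasurableSet_image_FR {i : ℕ} (hi : i ∈ T.I) {A : Set T.Δ₀} (hA : A ⊆ T.Λ i)
    (hAm : MeasurableSet A) : NullMeasurableSet (T.FR '' A) T.m₀ := by
  set A' := T.Λ i \ A
  have hA'm : MeasurableSet A' := (T.Λ_meas i hi).diff hAm
  set B := toMeasurable T.m₀ (T.FR '' A)
  set B' := toMeasurable T.m₀ (T.FR '' A')
  have hB : MeasurableSet B := measurableSet_toMeasurable _ _
  have hB' : MeasurableSet B' := measurableSet_toMeasurable _ _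
  have hcover : B ∪ B' = univ := by
    refine eq_univ_of_forall fun y => ?_
    by_cases h : T.branch i y ∈ A
    · exact Or.inl (subset_toMeasurable _ _ ((mem_image_FR_iff hi hA y).2 h))
    · exact Or.inr (subset_toMeasurable _ _
        ((mem_image_FR_iff hi sdiff_subset y).2 ⟨(branch_spec hi y).1, h⟩))
  have hsum : T.m₀ B + T.m₀ B' = T.m₀ univ := by
    rw [measure_toMeasurable, measure_toMeasurable, T.JFR_jac i hi A hA hAm,
      T.JFR_jac i hi A' sdiff_subset hA'm, ← lintegral_union hA'm disjoint_sdiff_self_right,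
      union_sdiff_cancel hA, ← T.JFR_jac i hi _ subset_rfl (T.Λ_meas i hi),
      (T.FR_bij i hi).image_eq]
  have hinter : T.m₀ (B ∩ B') = 0 := by
    have h1 := measure_union_add_inter (μ := T.m₀) B hB'
    rw [hcover, hsum] at h1
    exact (ENNReal.add_right_inj (measure_ne_top T.m₀ univ)).1 (h1.trans (add_zero _).symm)
  have heq : T.FR '' A =ᵐ[T.m₀] B := by
    refine (subset_toMeasurable _ _).eventuallyLE.antisymm ?_
    rw [ae_le_set]
    refine measure_mono_null ?_ hinter
    rintro y ⟨hy, hy'⟩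
    refine ⟨hy, subset_toMeasurable _ _ ((mem_image_FR_iff hi sdiff_subset y).2
      ⟨(branch_spec hi y).1, fun h => hy' ((mem_image_FR_iff hi hA y).2 h)⟩)⟩
  exact hB.nullMeasurableSet.congr heq.symm

theorem aemeasurable_comp_branch {i : ℕ} (hi : i ∈ T.I) {k : T.Δ₀ → ℝ≥0∞}
    (hk : AEMeasurable k T.m₀) : AEMeasurable (fun y => k (T.branch i y)) T.m₀ := by
  have hmeas : ∀ {k : T.Δ₀ → ℝ≥0∞}, Measurable k →
      AEMeasurable (fun y => k (T.branch i y)) T.m₀ := by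
    intro k hk
    refine NullMeasurable.aemeasurable fun S hS => ?_
    have : (fun y => k (T.branch i y)) ⁻¹' S = T.FR '' (T.Λ i ∩ k ⁻¹' S) := by
      ext y
      rw [mem_image_FR_iff hi inter_subset_left]
      simp [(branch_spec hi y).1]
    rw [this]
    exact nullMeasurableSet_image_FR hi inter_subset_left ((T.Λ_meas i hi).inter (hk hS))
  refine (hmeas hk.measurable_mk).congr ?_
  set N := toMeasurable T.m₀ {x | k x ≠ hk.mk k x}
  have hN : T.m₀ N = 0 := by
    rw [measure_toMeasurable]
    exact hk.ae_eq_mk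
  have hNm : MeasurableSet (T.Λ i ∩ N) :=
    (T.Λ_meas i hi).inter (measurableSet_toMeasurable _ _)
  have h0 : T.m₀ (T.FR '' (T.Λ i ∩ N)) = 0 := by
    rw [T.JFR_jac i hi _ inter_subset_left hNm]
    exact setLIntegral_measure_zero _ _ (measure_mono_null inter_subset_right hN)
  refine measure_mono_null (fun y hy => ?_) h0
  rw [mem_image_FR_iff hi inter_subset_left]
  refine ⟨(branch_spec hi y).1, subset_toMeasurable _ _ ?_⟩
  intro h
  exact hy h.symm

variable (T) in
/-- The contribution of the branch `i` to the density of the push-forward under the return map. -/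
def branchTransfer (i : ℕ) (h : T.Δ₀ → ℝ≥0∞) (y : T.Δ₀) : ℝ≥0∞ :=
  h (T.branch i y) / ENNReal.ofReal (T.JFR (T.branch i y))

theorem aemeasurable_branchTransfer {i : ℕ} (hi : i ∈ T.I) {h : T.Δ₀ → ℝ≥0∞}
    (hh : AEMeasurable h T.m₀) : AEMeasurable (T.branchTransfer i h) T.m₀ :=
  aemeasurable_comp_branch hi (hh.div T.JFR_meas.ennreal_ofReal.aemeasurable)

theorem lintegral_branchTransfer_mul {i : ℕ} (hi : i ∈ T.I) {h G : T.Δ₀ → ℝ≥0∞}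
    (hh : AEMeasurable h T.m₀) (hG : Measurable G) :
    ∫⁻ y, T.branchTransfer i h y * G y ∂T.m₀ = ∫⁻ x in T.Λ i, h x * G (T.FR x) ∂T.m₀ := by
  have hJ : Measurable fun x => ENNReal.ofReal (T.JFR x) := T.JFR_meas.ennreal_ofReal
  have hm : AEMeasurable (fun y => T.branchTransfer i h y * G y) T.m₀ :=
    (aemeasurable_branchTransfer hi hh).mul hG.aemeasurable
  have hm' := hm
  rw [← map_FR_withDensity hi] at hm'
  conv_lhs => rw [← map_FR_withDensity hi]
  rw [lintegral_map' hm' T.FR_meas.aemeasurable,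
    lintegral_withDensity_eq_lintegral_mul₀' hJ.aemeasurable
      (g := fun x => T.branchTransfer i h (T.FR x) * G (T.FR x))
      (hm'.comp_aemeasurable T.FR_meas.aemeasurable)]
  refine setLIntegral_congr_fun (T.Λ_meas i hi) fun x hx => ?_
  have hJx : ENNReal.ofReal (T.JFR x) ≠ 0 := by
    simpa using T.JFR_pos i hi x hx
  simp only [Pi.mul_apply, branchTransfer, branch_FR hi hx, ← mul_assoc]
  rw [ENNReal.mul_div_cancel hJx ENNReal.ofReal_ne_top]

variable (T) in
/-- The density of the push-forward under the return map of the part of `h` with return time `r`. -/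
def transfer (r : ℕ) (h : T.Δ₀ → ℝ≥0∞) (y : T.Δ₀) : ℝ≥0∞ :=
  ∑' i : {i // i ∈ T.I ∧ T.Ret i = r}, T.branchTransfer i h y

theorem aemeasurable_transfer (r : ℕ) {h : T.Δ₀ → ℝ≥0∞} (hh : AEMeasurable h T.m₀) :
    AEMeasurable (T.transfer r h) T.m₀ :=
  AEMeasurable.tsum fun i => aemeasurable_branchTransfer i.2.1 hh

theorem setOf_R_eq_ae (r : ℕ) :
    {x | T.R x = r} =ᵐ[T.m₀] ⋃ i : {i // i ∈ T.I ∧ T.Ret i = r}, T.Λ i := by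
  have h0 : ∀ᵐ x ∂T.m₀, x ∈ ⋃ i ∈ T.I, T.Λ i := by
    rw [ae_iff]
    convert T.Λ_full using 2
    ext x
    simp
  filter_upwards [h0] with x hx
  obtain ⟨i, hi, hxi⟩ : ∃ i ∈ T.I, x ∈ T.Λ i := by simpa using hx
  refine propext ⟨fun h => ?_, fun h => ?_⟩
  · exact mem_iUnion.2 ⟨⟨i, hi, (T.R_eq i hi x hxi).symm.trans h⟩, hxi⟩
  · obtain ⟨j, hj⟩ := mem_iUnion.1 h
    exact (T.R_eq j j.2.1 x hj).trans j.2.2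

theorem lintegral_transfer_mul (r : ℕ) {h G : T.Δ₀ → ℝ≥0∞}
    (hh : AEMeasurable h T.m₀) (hG : Measurable G) :
    ∫⁻ y, T.transfer r h y * G y ∂T.m₀ = ∫⁻ x in {x | T.R x = r}, h x * G (T.FR x) ∂T.m₀ := by
  simp only [transfer, ← ENNReal.tsum_mul_right]
  rw [lintegral_tsum (f := fun (i : {i // i ∈ T.I ∧ T.Ret i = r}) y =>
      T.branchTransfer i h y * G y) fun i =>
        (aemeasurable_branchTransfer i.2.1 hh).mul hG.aemeasurable,
    Measure.restrict_congr_set (setOf_R_eq_ae r),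
    lintegral_iUnion (s := fun i : {i // i ∈ T.I ∧ T.Ret i = r} => T.Λ i)
      (fun i => T.Λ_meas i i.2.1) fun i j hij =>
      T.Λ_disj i.2.1 j.2.1 fun h => hij (Subtype.ext h)]
  exact tsum_congr fun i => lintegral_branchTransfer_mul i.2.1 hh hG

variable (T) in
/-- Log-Lipschitz densities with respect to the symbolic distance. -/
def LogLip (K : ℝ) (h : T.Δ₀ → ℝ≥0∞) : Prop :=
  ∀ x y, h x ≤ ENNReal.ofReal (Real.exp (K * T.sepDist x y)) * h y

variable (T) in
/-- Densities that are log-Lipschitz on every partition element with return time `r`. -/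
def LogLipOn (r : ℕ) (K : ℝ) (h : T.Δ₀ → ℝ≥0∞) : Prop :=
  ∀ i ∈ T.I, T.Ret i = r → ∀ x ∈ T.Λ i, ∀ y ∈ T.Λ i,
    h x ≤ ENNReal.ofReal (Real.exp (K * T.sepDist x y)) * h y

theorem LogLip.logLipOn {K : ℝ} {h : T.Δ₀ → ℝ≥0∞} (hh : T.LogLip K h) (r : ℕ) :
    T.LogLipOn r K h := fun _ _ _ x _ y _ => hh x y

theorem LogLip.mono {K K' : ℝ} {h : T.Δ₀ → ℝ≥0∞} (hh : T.LogLip K h) (hK : K ≤ K') :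
    T.LogLip K' h := fun x y => (hh x y).trans (by
      gcongr
      exact T.sepDist_nonneg x y)

theorem LogLip.add {K : ℝ} {h g : T.Δ₀ → ℝ≥0∞} (hh : T.LogLip K h) (hg : T.LogLip K g) :
    T.LogLip K fun x => h x + g x := fun x y => by
  rw [mul_add]
  exact add_le_add (hh x y) (hg x y)

theorem LogLip.tsum {ι : Type*} {K : ℝ} {h : ι → T.Δ₀ → ℝ≥0∞} (hh : ∀ i, T.LogLip K (h i)) :
    T.LogLip K fun x => ∑' i, h i x := fun x y => by
  rw [← ENNReal.tsum_mul_left]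
  exact ENNReal.tsum_le_tsum fun i => hh i x y

theorem LogLip.sum {ι : Type*} {K : ℝ} {h : ι → T.Δ₀ → ℝ≥0∞} (s : Finset ι)
    (hh : ∀ i ∈ s, T.LogLip K (h i)) :
    T.LogLip K fun x => ∑ i ∈ s, h i x := fun x y => by
  rw [Finset.mul_sum]
  exact Finset.sum_le_sum fun i hi => hh i hi x y

theorem LogLipOn.transfer {r : ℕ} {K : ℝ} (hK : 0 ≤ K) {h : T.Δ₀ → ℝ≥0∞}
    (hh : T.LogLipOn r K h) : T.LogLip (T.β * K + T.CF) (T.transfer r h) := by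
  refine LogLip.tsum fun i => ?_
  intro x y
  obtain ⟨hbx, hFx⟩ := branch_spec i.2.1 x
  obtain ⟨hby, hFy⟩ := branch_spec i.2.1 y
  set x' := T.branch i x
  set y' := T.branch i y
  have hJx := T.JFR_pos i i.2.1 x' hbx
  have hJy := T.JFR_pos i i.2.1 y' hby
  have h1 : h x' ≤ ENNReal.ofReal (Real.exp (T.β * K * T.sepDist x y)) * h y' := by
    refine (hh i i.2.1 i.2.2 x' hbx y' hby).trans ?_
    have h3 := T.sepDist_le_mul i.2.1 hbx hby
    rw [hFx, hFy] at h3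
    have h4 : K * T.sepDist x' y' ≤ T.β * K * T.sepDist x y := by nlinarith
    gcongr
  have h2 : (ENNReal.ofReal (T.JFR x'))⁻¹ ≤
      ENNReal.ofReal (Real.exp (T.CF * T.sepDist x y)) * (ENNReal.ofReal (T.JFR y'))⁻¹ := by
    rw [← ENNReal.ofReal_inv_of_pos hJx, ← ENNReal.ofReal_inv_of_pos hJy,
      ← ENNReal.ofReal_mul (Real.exp_pos _).le]
    refine ENNReal.ofReal_le_ofReal ?_
    have h3 := T.distortion i i.2.1 y' hby x' hbx
    have h4 : epow T.β (sepTime T.I T.Λ T.FR (T.FR y') (T.FR x')) = T.sepDist x y := by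
      rw [hFx, hFy, sepDist, sepTime, sepTime]
      simp only [and_comm]
    rw [h4] at h3
    have h5 := (le_abs_self _).trans h3
    rw [Real.log_le_iff_le_exp (div_pos hJy hJx), div_le_iff₀ hJx] at h5
    rw [← div_eq_mul_inv, le_div_iff₀ hJy, inv_mul_le_iff₀ hJx]
    linarith
  calc T.branchTransfer i h x = h x' * (ENNReal.ofReal (T.JFR x'))⁻¹ := rfl
    _ ≤ (ENNReal.ofReal (Real.exp (T.β * K * T.sepDist x y)) * h y') *
        (ENNReal.ofReal (Real.exp (T.CF * T.sepDist x y)) * (ENNReal.ofReal (T.JFR y'))⁻¹) :=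
        mul_le_mul' h1 h2
    _ = ENNReal.ofReal (Real.exp ((T.β * K + T.CF) * T.sepDist x y)) *
        (h y' * (ENNReal.ofReal (T.JFR y'))⁻¹) := by
        rw [add_mul, Real.exp_add, ENNReal.ofReal_mul (Real.exp_pos _).le]
        ring
    _ = _ := rfl

end YoungTower

namespace YoungTower

variable (T : YoungTower.{u})

/-! ### Splitting off a multiple of the reference measure -/

/-- The regularity constant of the densities to which the splitting is applied. -/
def regConst : ℝ := 2 * (T.CF + 1) / (1 - T.β)

/-- The largest proportion of a regular density that is split off. -/
def splitRatio : ℝ := (1 - T.β) / (1 + T.β)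

/-- The proportion of the mass of a regular density that is split off. -/
def splitProb : ℝ := T.splitRatio * Real.exp (-T.regConst)

theorem splitRatio_pos : 0 < T.splitRatio :=
  div_pos (by linarith [T.β_lt_one]) (by linarith [T.β_pos])

theorem splitRatio_lt_one : T.splitRatio < 1 := by
  rw [splitRatio, div_lt_one (by linarith [T.β_pos])]
  linarith [T.β_pos]

theorem regConst_pos : 0 < T.regConst :=
  div_pos (by linarith [T.CF_pos]) (by linarith [T.β_lt_one])

theorem splitProb_pos : 0 < T.splitProb := mul_pos T.splitRatio_pos (Real.exp_pos _)

theorem splitProb_lt_one : T.splitProb < 1 := by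
  have h1 : Real.exp (-T.regConst) < 1 := by
    rw [Real.exp_lt_one_iff]
    linarith [T.regConst_pos]
  have := T.splitRatio_pos
  have := T.splitRatio_lt_one
  rw [splitProb]
  nlinarith [Real.exp_pos (-T.regConst)]

theorem contraction_regConst :
    T.β * (T.regConst / (1 - T.splitRatio)) + T.CF ≤ T.regConst := by
  have hβ := T.β_pos
  have hβ1 := T.β_lt_one
  have h1 : 1 - T.splitRatio = 2 * T.β / (1 + T.β) := by
    rw [splitRatio]
    field_simp
    ring
  have h2 : T.β * (T.regConst / (1 - T.splitRatio)) = T.regConst * (1 + T.β) / 2 := by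
    rw [h1]
    field_simp
  have h3 : T.regConst * (1 - T.β) = 2 * (T.CF + 1) := by
    rw [regConst]
    field_simp [(by linarith : (1 - T.β) ≠ 0)]
  rw [h2]
  linarith

theorem one_add_CF_le_regConst : T.β * 1 + T.CF ≤ T.regConst := by
  have h3 : T.regConst * (1 - T.β) = 2 * (T.CF + 1) := by
    rw [regConst]
    have : 1 - T.β ≠ 0 := by linarith [T.β_lt_one]
    field_simp
  have := T.regConst_pos
  nlinarith [T.β_lt_one, T.β_pos, T.CF_pos]

theorem exists_mem_I : ∃ i, i ∈ T.I := by
  by_contra h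
  push Not at h
  have := T.Ret_gcd 0 fun i hi => absurd hi (h i)
  omega

theorem m₀_univ_ne_zero : T.m₀ univ ≠ 0 := by
  obtain ⟨i, hi⟩ := T.exists_mem_I
  exact pos_iff_ne_zero.1 ((T.Λ_pos i hi).trans_le (measure_mono (subset_univ _)))

/-- The constant that is split off from the density `h`. -/
def splitConst (h : T.Δ₀ → ℝ≥0∞) : ℝ≥0∞ :=
  ENNReal.ofReal T.splitProb * (∫⁻ x, h x ∂T.m₀) / T.m₀ univ

/-- What remains of the density `h` after splitting. -/
def remainder (h : T.Δ₀ → ℝ≥0∞) (x : T.Δ₀) : ℝ≥0∞ := h x - T.splitConst h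

variable {T}

theorem LogLip.le_exp_mul {K : ℝ} (hK : 0 ≤ K) {h : T.Δ₀ → ℝ≥0∞} (hh : T.LogLip K h)
    (x y : T.Δ₀) : h x ≤ ENNReal.ofReal (Real.exp K) * h y := by
  refine (hh x y).trans ?_
  have : K * T.sepDist x y ≤ K := by
    have := T.sepDist_le_one x y
    nlinarith
  gcongr

theorem LogLip.lintegral_le {K : ℝ} (hK : 0 ≤ K) {h : T.Δ₀ → ℝ≥0∞} (hh : T.LogLip K h)
    (x : T.Δ₀) : ∫⁻ y, h y ∂T.m₀ ≤ ENNReal.ofReal (Real.exp K) * h x * T.m₀ univ := by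
  rw [← lintegral_const]
  exact lintegral_mono fun y => hh.le_exp_mul hK y x

theorem LogLip.mul_le_lintegral {K : ℝ} (hK : 0 ≤ K) {h : T.Δ₀ → ℝ≥0∞} (hh : T.LogLip K h)
    (x : T.Δ₀) : h x * T.m₀ univ ≤ ENNReal.ofReal (Real.exp K) * ∫⁻ y, h y ∂T.m₀ := by
  rw [← lintegral_const, ← lintegral_const_mul' _ _ ENNReal.ofReal_ne_top]
  exact lintegral_mono fun y => hh.le_exp_mul hK x y

theorem LogLip.ne_top {K : ℝ} (hK : 0 ≤ K) {h : T.Δ₀ → ℝ≥0∞} (hh : T.LogLip K h)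
    (hfin : ∫⁻ x, h x ∂T.m₀ ≠ ⊤) (x : T.Δ₀) : h x ≠ ⊤ := by
  intro hx
  have h1 := hh.mul_le_lintegral hK x
  rw [hx, ENNReal.top_mul T.m₀_univ_ne_zero, top_le_iff] at h1
  exact ENNReal.mul_ne_top ENNReal.ofReal_ne_top hfin h1

variable {h : T.Δ₀ → ℝ≥0∞}

theorem splitConst_le (hh : T.LogLip T.regConst h) (x : T.Δ₀) :
    T.splitConst h ≤ ENNReal.ofReal T.splitRatio * h x := by
  rw [splitConst]
  refine ENNReal.div_le_of_le_mul ?_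
  calc ENNReal.ofReal T.splitProb * ∫⁻ y, h y ∂T.m₀
      ≤ ENNReal.ofReal T.splitProb *
        (ENNReal.ofReal (Real.exp T.regConst) * h x * T.m₀ univ) := by
        gcongr
        exact hh.lintegral_le T.regConst_pos.le x
    _ = (ENNReal.ofReal T.splitProb * ENNReal.ofReal (Real.exp T.regConst)) * h x * T.m₀ univ := by
        ring
    _ = _ := by
        rw [← ENNReal.ofReal_mul T.splitProb_pos.le, splitProb, mul_assoc T.splitRatio,
          ← Real.exp_add,
          neg_add_cancel, Real.exp_zero, mul_one]

theorem remainder_add_splitConst (hh : T.LogLip T.regConst h) (x : T.Δ₀) :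
    T.remainder h x + T.splitConst h = h x := by
  refine tsub_add_cancel_of_le ((splitConst_le hh x).trans ?_)
  refine mul_le_of_le_one_left' ?_
  rw [← ENNReal.ofReal_one]
  exact ENNReal.ofReal_le_ofReal T.splitRatio_lt_one.le

theorem remainder_le (h : T.Δ₀ → ℝ≥0∞) (x : T.Δ₀) : T.remainder h x ≤ h x := tsub_le_self

theorem splitConst_mul_univ (h : T.Δ₀ → ℝ≥0∞) :
    T.splitConst h * T.m₀ univ = ENNReal.ofReal T.splitProb * ∫⁻ x, h x ∂T.m₀ :=
  ENNReal.div_mul_cancel T.m₀_univ_ne_zero (measure_ne_top _ _)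

theorem splitConst_ne_top (hfin : ∫⁻ x, h x ∂T.m₀ ≠ ⊤) : T.splitConst h ≠ ⊤ :=
  ENNReal.div_ne_top (ENNReal.mul_ne_top ENNReal.ofReal_ne_top hfin) T.m₀_univ_ne_zero

theorem aemeasurable_remainder (hm : AEMeasurable h T.m₀) : AEMeasurable (T.remainder h) T.m₀ :=
  hm.sub aemeasurable_const

theorem logLip_remainder (hh : T.LogLip T.regConst h) (hfin : ∫⁻ x, h x ∂T.m₀ ≠ ⊤) :
    T.LogLip (T.regConst / (1 - T.splitRatio)) (T.remainder h) := by
  intro x y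
  have hθ0 := T.splitRatio_pos
  have hθ1 := T.splitRatio_lt_one
  set θ := T.splitRatio
  set d := T.sepDist x y
  have hd : 0 ≤ d := T.sepDist_nonneg x y
  set E := Real.exp (T.regConst * d)
  set E' := Real.exp (T.regConst / (1 - θ) * d)
  have hE'1 : 1 ≤ E' := Real.one_le_exp (mul_nonneg (div_nonneg T.regConst_pos.le
    (by linarith)) hd)
  have hconv : E ≤ θ + (1 - θ) * E' := by
    have h1 := convexOn_exp.2 (mem_univ 0) (mem_univ (T.regConst / (1 - θ) * d)) hθ0.le
      (by linarith : (0 : ℝ) ≤ 1 - θ) (by ring)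
    simp only [smul_eq_mul, mul_zero, zero_add, Real.exp_zero, mul_one] at h1
    have h2 : (1 - θ) * (T.regConst / (1 - θ) * d) = T.regConst * d := by
      have : 1 - θ ≠ 0 := by linarith
      field_simp
    rwa [h2] at h1
  have hxy := hh x y
  have hcy := splitConst_le hh y
  have hc := splitConst_ne_top hfin
  have hrem : T.remainder h y ≠ ⊤ :=
    ne_top_of_le_ne_top (hh.ne_top T.regConst_pos.le hfin y) (remainder_le h y)
  rw [← remainder_add_splitConst hh y] at hxy hcy
  change h x - T.splitConst h ≤ _
  refine tsub_le_iff_right.2 (hxy.trans ?_)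
  rw [← ENNReal.ofReal_toReal hrem, ← ENNReal.ofReal_toReal hc] at hcy ⊢
  set p := (T.remainder h y).toReal
  set c := (T.splitConst h).toReal
  have hp : 0 ≤ p := ENNReal.toReal_nonneg
  have hc0 : 0 ≤ c := ENNReal.toReal_nonneg
  have hE : 0 ≤ E := (Real.exp_pos _).le
  have hE' : 0 ≤ E' := (Real.exp_pos _).le
  rw [← ENNReal.ofReal_add hp hc0, ← ENNReal.ofReal_mul hθ0.le,
    ENNReal.ofReal_le_ofReal_iff (by positivity)] at hcy
  rw [← ENNReal.ofReal_add hp hc0, ← ENNReal.ofReal_mul hE, ← ENNReal.ofReal_mul hE',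
    ← ENNReal.ofReal_add (by positivity) hc0]
  refine ENNReal.ofReal_le_ofReal ?_
  have h1 := mul_le_mul_of_nonneg_right hconv (add_nonneg hp hc0)
  have h2 : 0 ≤ (E' - 1) * (θ * p - (1 - θ) * c) :=
    mul_nonneg (by linarith) (by nlinarith)
  nlinarith

theorem logLip_transfer_remainder (hh : T.LogLip T.regConst h) (hfin : ∫⁻ x, h x ∂T.m₀ ≠ ⊤)
    (r : ℕ) : T.LogLip T.regConst (T.transfer r (T.remainder h)) :=
  (((logLip_remainder hh hfin).logLipOn r).transfer
    (div_nonneg T.regConst_pos.le (by linarith [T.splitRatio_lt_one]))).mono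
      T.contraction_regConst

theorem lintegral_transfer (r : ℕ) (hm : AEMeasurable h T.m₀) :
    ∫⁻ y, T.transfer r h y ∂T.m₀ = ∫⁻ x in {x | T.R x = r}, h x ∂T.m₀ := by
  simpa using lintegral_transfer_mul r hm (measurable_const (a := (1 : ℝ≥0∞)))

theorem lintegral_remainder_add (hm : AEMeasurable h T.m₀) (hh : T.LogLip T.regConst h) :
    ∫⁻ x, T.remainder h x ∂T.m₀ + ENNReal.ofReal T.splitProb * ∫⁻ x, h x ∂T.m₀ =
      ∫⁻ x, h x ∂T.m₀ := by
  rw [← splitConst_mul_univ, ← lintegral_const,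
    ← lintegral_add_left' (aemeasurable_remainder hm)]
  exact lintegral_congr fun x => remainder_add_splitConst hh x

/-! ### Densities of the arrivals at the base -/

variable (T) in
/-- The density of the arrivals at the base at time `n` that have never been split off, for the
source `S`. -/
def arrival (S : ℕ → T.Δ₀ → ℝ≥0∞) : ℕ → T.Δ₀ → ℝ≥0∞
  | n => fun x => S n x + ∑ k : Fin n, T.transfer (n - k) (T.remainder (arrival S k)) x
  decreasing_by exact k.2

theorem arrival_eq (S : ℕ → T.Δ₀ → ℝ≥0∞) (n : ℕ) (x : T.Δ₀) :
    T.arrival S n x =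
      S n x + ∑ k ∈ Finset.range n, T.transfer (n - k) (T.remainder (T.arrival S k)) x := by
  rw [arrival, Finset.sum_range]

variable (T) in
/-- Regular sources. -/
structure IsSource (S : ℕ → T.Δ₀ → ℝ≥0∞) : Prop where
  aemeasurable : ∀ n, AEMeasurable (S n) T.m₀
  logLip : ∀ n, T.LogLip T.regConst (S n)
  lintegral_ne_top : ∀ n, ∫⁻ x, S n x ∂T.m₀ ≠ ⊤

theorem IsSource.arrival {S : ℕ → T.Δ₀ → ℝ≥0∞} (hS : T.IsSource S) : T.IsSource (T.arrival S) := by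
  have key : ∀ n, AEMeasurable (T.arrival S n) T.m₀ ∧ T.LogLip T.regConst (T.arrival S n) ∧
      ∫⁻ x, T.arrival S n x ∂T.m₀ ≠ ⊤ := by
    intro n
    induction n using Nat.strong_induction_on with
    | _ n ih =>
      have heq : T.arrival S n = fun x => S n x +
          ∑ k ∈ Finset.range n, T.transfer (n - k) (T.remainder (T.arrival S k)) x :=
        funext (arrival_eq S n)
      have hmk : ∀ k ∈ Finset.range n,
          AEMeasurable (T.transfer (n - k) (T.remainder (T.arrival S k))) T.m₀ := fun k hk =>
        aemeasurable_transfer _ (aemeasurable_remainder (ih k (Finset.mem_range.1 hk)).1)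
      refine ⟨?_, ?_, ?_⟩
      · rw [heq]
        exact (hS.aemeasurable n).add (Finset.aemeasurable_fun_sum _ hmk)
      · rw [heq]
        refine (hS.logLip n).add (LogLip.sum _ fun k hk => ?_)
        have := ih k (Finset.mem_range.1 hk)
        exact logLip_transfer_remainder this.2.1 this.2.2 _
      · rw [heq, lintegral_add_left' (hS.aemeasurable n), lintegral_finsetSum' _ hmk]
        refine ENNReal.add_ne_top.2 ⟨hS.lintegral_ne_top n, ?_⟩
        refine ENNReal.sum_ne_top.2 fun k hk => ?_
        have := ih k (Finset.mem_range.1 hk)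
        rw [lintegral_transfer _ (aemeasurable_remainder this.1)]
        exact ne_top_of_le_ne_top this.2.2
          ((setLIntegral_le_lintegral _ _).trans (lintegral_mono (remainder_le _)))
  exact ⟨fun n => (key n).1, fun n => (key n).2.1, fun n => (key n).2.2⟩

end YoungTower

namespace YoungTower

variable (T : YoungTower.{u})

/-! ### The renewal equation -/

/-- The tower map as a total map of `Δ₀ × ℕ`. -/
def rawMap (p : T.Δ₀ × ℕ) : T.Δ₀ × ℕ :=
  if p.2 + 1 < T.R p.1 then (p.1, p.2 + 1) else (T.FR p.1, 0)

/-- The indicator that the orbit of `(x, l)` is in `E` at time `n`. -/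
def obs (E : Set (T.Δ₀ × ℕ)) (n l : ℕ) (x : T.Δ₀) : ℝ≥0∞ :=
  E.indicator 1 (T.rawMap^[n] (x, l))

variable {T}

theorem measurable_rawMap : Measurable T.rawMap := by
  refine Measurable.ite ?_ (by fun_prop) ((T.FR_meas.comp measurable_fst).prodMk measurable_const)
  exact measurableSet_lt (by fun_prop) (T.R_meas.comp measurable_fst)

theorem measurable_obs {E : Set (T.Δ₀ × ℕ)} (hE : MeasurableSet E) (n l : ℕ) :
    Measurable (T.obs E n l) :=
  (measurable_one.indicator hE).comp
    ((measurable_rawMap.iterate n).comp (measurable_id.prodMk measurable_const))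

theorem obs_le_one (E : Set (T.Δ₀ × ℕ)) (n l : ℕ) (x : T.Δ₀) : T.obs E n l x ≤ 1 :=
  indicator_apply_le' (fun _ => le_rfl) fun _ => zero_le_one

theorem obs_univ (n l : ℕ) (x : T.Δ₀) : T.obs univ n l x = 1 := by simp [obs]

theorem rawMap_iterate_of_lt {x : T.Δ₀} {l n : ℕ} (h : l + n < T.R x) :
    T.rawMap^[n] (x, l) = (x, l + n) := by
  induction n with
  | zero => rfl
  | succ n ih =>
    rw [Function.iterate_succ_apply', ih (by omega), rawMap, if_pos (by simpa [add_assoc] using h)]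
    rfl

theorem rawMap_iterate_of_eq {x : T.Δ₀} {l k n : ℕ} (h : T.R x = l + (k + 1)) (hkn : k < n) :
    T.rawMap^[n] (x, l) = T.rawMap^[n - (k + 1)] (T.FR x, 0) := by
  obtain ⟨m, rfl⟩ := Nat.exists_eq_add_of_lt hkn
  rw [show k + m + 1 = m + 1 + k by ring, Function.iterate_add_apply,
    rawMap_iterate_of_lt (x := x) (by omega), Function.iterate_succ_apply, rawMap,
    if_neg (by simp; omega)]
  congr 1
  omega

theorem measurableSet_lt_R (n : ℕ) : MeasurableSet {x | n < T.R x} :=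
  measurableSet_lt measurable_const T.R_meas

theorem measurableSet_R_eq (n : ℕ) : MeasurableSet {x | T.R x = n} :=
  T.R_meas (measurableSet_singleton n)

theorem setLIntegral_lt_R_eq (g : T.Δ₀ → ℝ≥0∞) (l n : ℕ) :
    ∫⁻ x in {x | l < T.R x}, g x ∂T.m₀ = ∫⁻ x in {x | l + n < T.R x}, g x ∂T.m₀ +
      ∑ k ∈ Finset.range n, ∫⁻ x in {x | T.R x = l + (k + 1)}, g x ∂T.m₀ := by
  induction n with
  | zero => simp
  | succ n ih =>
    have h1 : {x | l + n < T.R x} = {x | l + (n + 1) < T.R x} ∪ {x | T.R x = l + (n + 1)} := by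
      ext x
      simp only [mem_ofPred_eq, mem_union]
      omega
    rw [ih, h1, lintegral_union (measurableSet_R_eq _), Finset.sum_range_succ, add_assoc,
      add_comm (∑ k ∈ _, _)]
    rw [Set.disjoint_left]
    intro x hx hx'
    simp only [mem_ofPred_eq] at hx hx'
    omega

theorem setLIntegral_mul_obs {E : Set (T.Δ₀ × ℕ)} (hE : MeasurableSet E) {φ : T.Δ₀ → ℝ≥0∞}
    (hφ : AEMeasurable φ T.m₀) (l n : ℕ) :
    ∫⁻ x in {x | l < T.R x}, φ x * T.obs E n l x ∂T.m₀ =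
      ∫⁻ x in {x | l + n < T.R x}, φ x * T.obs E n l x ∂T.m₀ +
      ∑ k ∈ Finset.range n,
        ∫⁻ y, T.transfer (l + (k + 1)) φ y * T.obs E (n - (k + 1)) 0 y ∂T.m₀ := by
  rw [setLIntegral_lt_R_eq _ l n]
  congr 1
  refine Finset.sum_congr rfl fun k hk => ?_
  rw [lintegral_transfer_mul _ hφ (measurable_obs hE _ _)]
  refine setLIntegral_congr_fun (measurableSet_R_eq _) fun x hx => ?_
  simp only [obs]
  rw [rawMap_iterate_of_eq hx (Finset.mem_range.1 hk)]

theorem lintegral_mul_obs {E : Set (T.Δ₀ × ℕ)} (hE : MeasurableSet E) {h : T.Δ₀ → ℝ≥0∞}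
    (hh : AEMeasurable h T.m₀) (n : ℕ) :
    ∫⁻ x, h x * T.obs E n 0 x ∂T.m₀ =
      ∫⁻ x in {x | n < T.R x}, h x * T.obs E n 0 x ∂T.m₀ +
      ∑ k ∈ Finset.range n,
        ∫⁻ y, T.transfer (k + 1) h y * T.obs E (n - (k + 1)) 0 y ∂T.m₀ := by
  have h1 := setLIntegral_mul_obs hE hh 0 n
  have h2 : {x | 0 < T.R x} = univ := eq_univ_of_forall T.R_pos
  simpa only [zero_add, h2, Measure.restrict_univ] using h1

theorem lintegral_mul_obs_le (E : Set (T.Δ₀ × ℕ)) (h : T.Δ₀ → ℝ≥0∞) (n l : ℕ) (μ : Measure T.Δ₀) :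
    ∫⁻ x, h x * T.obs E n l x ∂μ ≤ ∫⁻ x, h x ∂μ :=
  lintegral_mono fun x => mul_le_of_le_one_right' (obs_le_one E n l x)

/-- Everything that arrives at the base is either split off at some time or still on the way. -/
theorem IsSource.sum_lintegral_mul_obs {S : ℕ → T.Δ₀ → ℝ≥0∞} (hS : T.IsSource S)
    {E : Set (T.Δ₀ × ℕ)} (hE : MeasurableSet E) (n : ℕ) :
    ∑ k ∈ Finset.range (n + 1), ∫⁻ x, S k x * T.obs E (n - k) 0 x ∂T.m₀ =
      ∑ k ∈ Finset.range (n + 1), ∫⁻ x in {x | n - k < T.R x},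
        T.remainder (T.arrival S k) x * T.obs E (n - k) 0 x ∂T.m₀ +
      ∑ k ∈ Finset.range (n + 1), T.splitConst (T.arrival S k) *
        ∫⁻ x, T.obs E (n - k) 0 x ∂T.m₀ := by
  have hH := hS.arrival
  set H := T.arrival S with hHdef
  have hrem : ∀ k, AEMeasurable (T.remainder (H k)) T.m₀ := fun k =>
    aemeasurable_remainder (hH.aemeasurable k)
  have htr : ∀ k r, AEMeasurable (T.transfer r (T.remainder (H k))) T.m₀ := fun k r =>
    aemeasurable_transfer r (hrem k)
  set D := ∑ k ∈ Finset.range (n + 1), ∑ j ∈ Finset.range k,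
    ∫⁻ y, T.transfer (k - j) (T.remainder (H j)) y * T.obs E (n - k) 0 y ∂T.m₀ with hD
  have e1 : ∑ k ∈ Finset.range (n + 1), ∫⁻ x, H k x * T.obs E (n - k) 0 x ∂T.m₀ =
      ∑ k ∈ Finset.range (n + 1), ∫⁻ x, S k x * T.obs E (n - k) 0 x ∂T.m₀ + D := by
    rw [hD, ← Finset.sum_add_distrib]
    refine Finset.sum_congr rfl fun k _ => ?_
    have hobs := (measurable_obs hE (n - k) 0).aemeasurable (μ := T.m₀)
    rw [← lintegral_finsetSum' _ fun j _ => (htr j _).fun_mul hobs,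
      ← lintegral_add_left' ((hS.aemeasurable k).fun_mul hobs)]
    refine lintegral_congr fun x => ?_
    rw [hHdef, arrival_eq, add_mul, Finset.sum_mul]
  have e2 : ∑ k ∈ Finset.range (n + 1), ∫⁻ x, H k x * T.obs E (n - k) 0 x ∂T.m₀ =
      (∑ k ∈ Finset.range (n + 1), ∫⁻ x in {x | n - k < T.R x},
        T.remainder (H k) x * T.obs E (n - k) 0 x ∂T.m₀ +
      ∑ k ∈ Finset.range (n + 1), T.splitConst (H k) *
        ∫⁻ x, T.obs E (n - k) 0 x ∂T.m₀) + D := by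
    have hswap : D = ∑ k ∈ Finset.range (n + 1), ∑ j ∈ Finset.range (n - k),
        ∫⁻ y, T.transfer (j + 1) (T.remainder (H k)) y *
          T.obs E (n - k - (j + 1)) 0 y ∂T.m₀ := by
      rw [hD, Finset.sum_comm' (t' := Finset.range (n + 1))
        (s' := fun j => Finset.Ico (j + 1) (n + 1))]
      · refine Finset.sum_congr rfl fun k _ => ?_
        rw [Finset.sum_Ico_eq_sum_range, show n + 1 - (k + 1) = n - k by omega]
        refine Finset.sum_congr rfl fun j _ => ?_
        rw [show k + 1 + j - k = j + 1 by omega, show n - (k + 1 + j) = n - k - (j + 1) by omega]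
      · intro k j
        simp only [Finset.mem_range, Finset.mem_Ico]
        omega
    rw [hswap, ← Finset.sum_add_distrib, ← Finset.sum_add_distrib]
    refine Finset.sum_congr rfl fun k _ => ?_
    have hobs := measurable_obs hE (n - k) 0
    rw [add_right_comm, ← lintegral_mul_obs hE (hrem k), ← lintegral_const_mul _ hobs,
      ← lintegral_add_left' ((hrem k).fun_mul hobs.aemeasurable)]
    refine lintegral_congr fun x => ?_
    rw [← add_mul, remainder_add_splitConst (hH.logLip k)]
  have hfin : D ≠ ⊤ := by
    have h1 : D ≤ ∑ k ∈ Finset.range (n + 1), ∫⁻ x, H k x * T.obs E (n - k) 0 x ∂T.m₀ := by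
      rw [e1]
      exact le_add_self
    refine ne_top_of_le_ne_top (ENNReal.sum_ne_top.2 fun k _ => ?_) h1
    exact ne_top_of_le_ne_top (hH.lintegral_ne_top k) (lintegral_mul_obs_le E _ _ _ _)
  exact (ENNReal.add_left_inj hfin).1 (e1.symm.trans e2)

variable (T) in
/-- Densities on the tower, given level by level, that are log-Lipschitz on the partition
elements. -/
structure IsProfile (φ : ℕ → T.Δ₀ → ℝ≥0∞) : Prop where
  aemeasurable : ∀ l, AEMeasurable (φ l) T.m₀
  logLipOn : ∀ l r, l < r → T.LogLipOn r 1 (φ l)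
  lintegral_ne_top : ∑' l, ∫⁻ x in {x | l < T.R x}, φ l x ∂T.m₀ ≠ ⊤

variable (T) in
/-- The density of the first arrivals at the base. -/
def firstArrival (φ : ℕ → T.Δ₀ → ℝ≥0∞) : ℕ → T.Δ₀ → ℝ≥0∞
  | 0 => fun _ => 0
  | k + 1 => fun y => ∑' l, T.transfer (l + (k + 1)) (φ l) y

variable (T) in
/-- The mass of the density `φ` that is in `E` at time `n`. -/
def pushMass (φ : ℕ → T.Δ₀ → ℝ≥0∞) (E : Set (T.Δ₀ × ℕ)) (n : ℕ) : ℝ≥0∞ :=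
  ∑' l, ∫⁻ x in {x | l < T.R x}, φ l x * T.obs E n l x ∂T.m₀

variable (T) in
/-- The mass of the density `φ` that has not returned to the base at time `n` and is in `E`. -/
def firstMass (φ : ℕ → T.Δ₀ → ℝ≥0∞) (E : Set (T.Δ₀ × ℕ)) (n : ℕ) : ℝ≥0∞ :=
  ∑' l, ∫⁻ x in {x | l + n < T.R x}, φ l x * T.obs E n l x ∂T.m₀

variable (T) in
/-- The mass of the density `φ` that has not been split off at time `n` and is in `E`. -/
def survivalMass (φ : ℕ → T.Δ₀ → ℝ≥0∞) (E : Set (T.Δ₀ × ℕ)) (n : ℕ) : ℝ≥0∞ :=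
  T.firstMass φ E n + ∑ k ∈ Finset.range (n + 1), ∫⁻ x in {x | n - k < T.R x},
    T.remainder (T.arrival (T.firstArrival φ) k) x * T.obs E (n - k) 0 x ∂T.m₀

variable (T) in
/-- The mass of the density `φ` that is split off at time `n`. -/
def stopMass (φ : ℕ → T.Δ₀ → ℝ≥0∞) (n : ℕ) : ℝ≥0∞ :=
  ENNReal.ofReal T.splitProb * ∫⁻ x, T.arrival (T.firstArrival φ) n x ∂T.m₀

variable (T) in
/-- The probability that the orbit of a random point of the base is in `E` at time `n`. -/
def baseProb (E : Set (T.Δ₀ × ℕ)) (n : ℕ) : ℝ≥0∞ :=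
  (∫⁻ x, T.obs E n 0 x ∂T.m₀) / T.m₀ univ

variable {φ : ℕ → T.Δ₀ → ℝ≥0∞}

theorem pushMass_univ (φ : ℕ → T.Δ₀ → ℝ≥0∞) (n : ℕ) :
    T.pushMass φ univ n = ∑' l, ∫⁻ x in {x | l < T.R x}, φ l x ∂T.m₀ := by
  simp only [pushMass, obs_univ, mul_one]

theorem pushMass_le (φ : ℕ → T.Δ₀ → ℝ≥0∞) (E : Set (T.Δ₀ × ℕ)) (n : ℕ) :
    T.pushMass φ E n ≤ ∑' l, ∫⁻ x in {x | l < T.R x}, φ l x ∂T.m₀ :=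
  ENNReal.tsum_le_tsum fun _ => lintegral_mul_obs_le _ _ _ _ _

theorem baseProb_univ (n : ℕ) : T.baseProb univ n = 1 := by
  simp only [baseProb, obs_univ, lintegral_one]
  exact ENNReal.div_self T.m₀_univ_ne_zero (measure_ne_top _ _)

theorem survivalMass_le_univ (φ : ℕ → T.Δ₀ → ℝ≥0∞) (E : Set (T.Δ₀ × ℕ)) (n : ℕ) :
    T.survivalMass φ E n ≤ T.survivalMass φ univ n := by
  simp only [survivalMass, firstMass, obs_univ, mul_one]
  gcongr
  · exact mul_le_of_le_one_right' (obs_le_one _ _ _ _)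
  · exact mul_le_of_le_one_right' (obs_le_one _ _ _ _)

theorem lintegral_firstArrival_mul (hφ : T.IsProfile φ) {G : T.Δ₀ → ℝ≥0∞} (hG : Measurable G)
    (k : ℕ) : ∫⁻ x, T.firstArrival φ (k + 1) x * G x ∂T.m₀ =
      ∑' l, ∫⁻ x, T.transfer (l + (k + 1)) (φ l) x * G x ∂T.m₀ := by
  simp only [firstArrival, ← ENNReal.tsum_mul_right]
  exact lintegral_tsum fun l =>
    (aemeasurable_transfer _ (hφ.aemeasurable l)).mul hG.aemeasurable

theorem IsProfile.isSource (hφ : T.IsProfile φ) : T.IsSource (T.firstArrival φ) where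
  aemeasurable n := by
    cases n with
    | zero => exact aemeasurable_const
    | succ k => exact AEMeasurable.tsum fun l => aemeasurable_transfer _ (hφ.aemeasurable l)
  logLip n := by
    cases n with
    | zero => exact fun x y => by simp [firstArrival]
    | succ k =>
      refine LogLip.tsum fun l => ?_
      exact ((hφ.logLipOn l _ (by omega)).transfer zero_le_one).mono T.one_add_CF_le_regConst
  lintegral_ne_top n := by
    cases n with
    | zero => simp [firstArrival]
    | succ k =>
      have h1 := lintegral_firstArrival_mul hφ (measurable_const (a := (1 : ℝ≥0∞))) k
      simp only [mul_one] at h1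
      rw [h1]
      refine ne_top_of_le_ne_top hφ.lintegral_ne_top (ENNReal.tsum_le_tsum fun l => ?_)
      rw [lintegral_transfer _ (hφ.aemeasurable l)]
      refine lintegral_mono_set fun x hx => ?_
      simp only [mem_ofPred_eq] at hx ⊢
      omega

/-- The renewal equation for the push-forwards of a regular density. -/
theorem IsProfile.pushMass_eq (hφ : T.IsProfile φ) {E : Set (T.Δ₀ × ℕ)} (hE : MeasurableSet E)
    (n : ℕ) : T.pushMass φ E n = T.survivalMass φ E n +
      ∑ k ∈ Finset.range (n + 1), T.stopMass φ k * T.baseProb E (n - k) := by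
  have h1 : T.pushMass φ E n = T.firstMass φ E n + ∑ k ∈ Finset.range (n + 1),
      ∫⁻ x, T.firstArrival φ k x * T.obs E (n - k) 0 x ∂T.m₀ := by
    rw [Finset.sum_range_succ']
    simp only [lintegral_firstArrival_mul hφ (measurable_obs hE _ _)]
    simp only [firstArrival, zero_mul, lintegral_zero, add_zero, pushMass, firstMass]
    rw [← Summable.tsum_finsetSum fun _ _ => ENNReal.summable, ← ENNReal.tsum_add]
    exact tsum_congr fun l => setLIntegral_mul_obs hE (hφ.aemeasurable l) l n
  rw [h1, hφ.isSource.sum_lintegral_mul_obs hE n, survivalMass, ← add_assoc]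
  congr 1
  refine Finset.sum_congr rfl fun k _ => ?_
  rw [stopMass, baseProb, ← splitConst_mul_univ, mul_assoc,
    ENNReal.mul_div_cancel T.m₀_univ_ne_zero (measure_ne_top _ _)]

end YoungTower

namespace YoungTower

variable {T : YoungTower.{u}}

/-! ### Convergence of the push-forwards -/

variable (T) in
/-- A bound for the conditional survival function of the return time. -/
def survivalBound (n : ℕ) : ℝ :=
  min 1 (Real.exp T.regConst / ((1 - T.splitProb) * T.m₀.real univ) * T.m₀.real {x | n < T.R x})

theorem m₀_real_univ_pos : 0 < T.m₀.real univ :=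
  ENNReal.toReal_pos T.m₀_univ_ne_zero (measure_ne_top _ _)

theorem survivalCoeff_pos :
    0 < Real.exp T.regConst / ((1 - T.splitProb) * T.m₀.real univ) :=
  div_pos (Real.exp_pos _) (mul_pos (by linarith [T.splitProb_lt_one]) m₀_real_univ_pos)

theorem survivalBound_nonneg (n : ℕ) : 0 ≤ T.survivalBound n :=
  le_min zero_le_one (mul_nonneg survivalCoeff_pos.le measureReal_nonneg)

theorem survivalBound_antitone : Antitone T.survivalBound := by
  intro m n hmn
  refine min_le_min le_rfl (mul_le_mul_of_nonneg_left ?_ survivalCoeff_pos.le)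
  refine measureReal_mono fun x hx => ?_
  simp only [mem_ofPred_eq] at hx ⊢
  omega

theorem survivalBound_zero : T.survivalBound 0 = 1 := by
  refine min_eq_left ?_
  have h1 : {x | 0 < T.R x} = univ := eq_univ_of_forall T.R_pos
  have h2 := m₀_real_univ_pos (T := T)
  have h3 := T.splitProb_pos
  have h4 := T.splitProb_lt_one
  have h5 : 1 ≤ Real.exp T.regConst := Real.one_le_exp T.regConst_pos.le
  rw [h1, div_mul_eq_mul_div, le_div_iff₀ (mul_pos (by linarith) h2)]
  nlinarith

theorem toReal_setLIntegral_remainder_le {h : T.Δ₀ → ℝ≥0∞} (hm : AEMeasurable h T.m₀)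
    (hh : T.LogLip T.regConst h) (hfin : ∫⁻ x, h x ∂T.m₀ ≠ ⊤) (n : ℕ) :
    (∫⁻ x in {x | n < T.R x}, T.remainder h x ∂T.m₀).toReal ≤
      (1 - T.splitProb) * (∫⁻ x, h x ∂T.m₀).toReal * T.survivalBound n := by
  have hε := T.splitProb_lt_one
  have hM := m₀_real_univ_pos (T := T)
  set a := (∫⁻ x, h x ∂T.m₀).toReal
  have ha : 0 ≤ a := ENNReal.toReal_nonneg
  have hrfin : ∫⁻ x, T.remainder h x ∂T.m₀ ≠ ⊤ :=
    ne_top_of_le_ne_top hfin (lintegral_mono (remainder_le h))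
  rw [survivalBound, mul_min_of_nonneg _ _ (mul_nonneg (by linarith) ha), le_min_iff]
  constructor
  · have h1 := congrArg ENNReal.toReal (lintegral_remainder_add hm hh)
    rw [ENNReal.toReal_add hrfin (ENNReal.mul_ne_top ENNReal.ofReal_ne_top hfin),
      ENNReal.toReal_mul, ENNReal.toReal_ofReal T.splitProb_pos.le] at h1
    have h2 := ENNReal.toReal_mono hrfin (setLIntegral_le_lintegral {x | n < T.R x}
      (T.remainder h) (μ := T.m₀))
    linarith
  · have h1 : ∫⁻ x in {x | n < T.R x}, T.remainder h x ∂T.m₀ ≤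
        ENNReal.ofReal (Real.exp T.regConst) * (∫⁻ y, h y ∂T.m₀) / T.m₀ univ *
          T.m₀ {x | n < T.R x} := by
      rw [← setLIntegral_const]
      refine setLIntegral_mono' (measurableSet_lt_R n) fun x _ => (remainder_le h x).trans ?_
      rw [ENNReal.le_div_iff_mul_le (Or.inl T.m₀_univ_ne_zero) (Or.inl (measure_ne_top _ _))]
      exact hh.mul_le_lintegral T.regConst_pos.le x
    have h2 := ENNReal.toReal_mono (ENNReal.mul_ne_top (ENNReal.div_ne_top
      (ENNReal.mul_ne_top ENNReal.ofReal_ne_top hfin) T.m₀_univ_ne_zero) (measure_ne_top _ _)) h1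
    rw [ENNReal.toReal_mul, ENNReal.toReal_div, ENNReal.toReal_mul,
      ENNReal.toReal_ofReal (Real.exp_pos _).le] at h2
    refine h2.trans (le_of_eq ?_)
    change Real.exp T.regConst * a / T.m₀.real univ * T.m₀.real {x | n < T.R x} = _
    have : 1 - T.splitProb ≠ 0 := by linarith
    field_simp

section Profile

variable {φ : ℕ → T.Δ₀ → ℝ≥0∞}

variable (T) in
/-- The total mass of the density `φ`. -/
def totalMass (φ : ℕ → T.Δ₀ → ℝ≥0∞) : ℝ≥0∞ := ∑' l, ∫⁻ x in {x | l < T.R x}, φ l x ∂T.m₀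

theorem IsProfile.totalMass_eq (hφ : T.IsProfile φ) (n : ℕ) :
    T.totalMass φ = T.survivalMass φ univ n + ∑ k ∈ Finset.range (n + 1), T.stopMass φ k := by
  have := hφ.pushMass_eq MeasurableSet.univ n
  simp only [pushMass_univ, baseProb_univ, mul_one] at this
  exact this

theorem IsProfile.survivalMass_ne_top (hφ : T.IsProfile φ) (E : Set (T.Δ₀ × ℕ)) (n : ℕ) :
    T.survivalMass φ E n ≠ ⊤ := by
  refine ne_top_of_le_ne_top hφ.lintegral_ne_top ((survivalMass_le_univ φ E n).trans ?_)
  change _ ≤ T.totalMass φ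
  rw [hφ.totalMass_eq n]
  exact le_self_add

theorem IsProfile.stopMass_ne_top (hφ : T.IsProfile φ) (n : ℕ) : T.stopMass φ n ≠ ⊤ :=
  ENNReal.mul_ne_top ENNReal.ofReal_ne_top (hφ.isSource.arrival.lintegral_ne_top n)

theorem baseProb_ne_top (E : Set (T.Δ₀ × ℕ)) (n : ℕ) : T.baseProb E n ≠ ⊤ := by
  refine ENNReal.div_ne_top (ne_top_of_le_ne_top (measure_ne_top T.m₀ univ) ?_) T.m₀_univ_ne_zero
  rw [← lintegral_one]
  exact lintegral_mono fun x => obs_le_one E n 0 x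

theorem IsProfile.toReal_survivalMass_univ (hφ : T.IsProfile φ) (n : ℕ) :
    (T.survivalMass φ univ n).toReal = (T.totalMass φ).toReal -
      ∑ k ∈ Finset.range (n + 1), (T.stopMass φ k).toReal := by
  rw [hφ.totalMass_eq n, ENNReal.toReal_add (hφ.survivalMass_ne_top univ n)
    (ENNReal.sum_ne_top.2 fun k _ => hφ.stopMass_ne_top k),
    ENNReal.toReal_sum fun k _ => hφ.stopMass_ne_top k, add_sub_cancel_right]

theorem IsProfile.toReal_pushMass (hφ : T.IsProfile φ) {E : Set (T.Δ₀ × ℕ)} (hE : MeasurableSet E)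
    (n : ℕ) : (T.pushMass φ E n).toReal = (T.survivalMass φ E n).toReal +
      seqConv (fun k => (T.stopMass φ k).toReal) (fun k => (T.baseProb E k).toReal) n := by
  have hfin : ∀ k ∈ Finset.range (n + 1), T.stopMass φ k * T.baseProb E (n - k) ≠ ⊤ := fun k _ =>
    ENNReal.mul_ne_top (hφ.stopMass_ne_top k) (baseProb_ne_top E _)
  rw [hφ.pushMass_eq hE n, ENNReal.toReal_add (hφ.survivalMass_ne_top E n)
    (ENNReal.sum_ne_top.2 hfin), ENNReal.toReal_sum hfin]
  simp only [ENNReal.toReal_mul, seqConv]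

theorem IsProfile.toReal_survivalMass_le (hφ : T.IsProfile φ) (E : Set (T.Δ₀ × ℕ)) (n : ℕ) :
    (T.survivalMass φ E n).toReal ≤ (T.survivalMass φ univ n).toReal :=
  ENNReal.toReal_mono (hφ.survivalMass_ne_top univ n) (survivalMass_le_univ φ E n)

theorem IsProfile.survivalMass_univ_le (hφ : T.IsProfile φ) (n : ℕ) :
    (T.survivalMass φ univ n).toReal ≤ (T.firstMass φ univ n).toReal +
      (1 - T.splitProb) / T.splitProb *
        seqConv (fun k => (T.stopMass φ k).toReal) T.survivalBound n := by
  have hH := hφ.isSource.arrival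
  have hε := T.splitProb_pos
  have hfin : ∀ k ∈ Finset.range (n + 1), ∫⁻ x in {x | n - k < T.R x},
      T.remainder (T.arrival (T.firstArrival φ) k) x ∂T.m₀ ≠ ⊤ := fun k _ =>
    ne_top_of_le_ne_top (hH.lintegral_ne_top k)
      ((setLIntegral_le_lintegral _ _).trans (lintegral_mono (remainder_le _)))
  have h1 : T.survivalMass φ univ n = T.firstMass φ univ n + ∑ k ∈ Finset.range (n + 1),
      ∫⁻ x in {x | n - k < T.R x}, T.remainder (T.arrival (T.firstArrival φ) k) x ∂T.m₀ := by
    simp only [survivalMass, obs_univ, mul_one]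
  have h2 : T.firstMass φ univ n ≠ ⊤ :=
    ne_top_of_le_ne_top (hφ.survivalMass_ne_top univ n) (by rw [h1]; exact le_self_add)
  rw [h1, ENNReal.toReal_add h2 (ENNReal.sum_ne_top.2 hfin), ENNReal.toReal_sum hfin, seqConv,
    Finset.mul_sum]
  gcongr with k hk
  refine (toReal_setLIntegral_remainder_le (hH.aemeasurable k) (hH.logLip k)
    (hH.lintegral_ne_top k) (n - k)).trans (le_of_eq ?_)
  rw [stopMass, ENNReal.toReal_mul, ENNReal.toReal_ofReal hε.le]
  field_simp

end Profile

variable (T) in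
/-- The normalized reference measure of the base as a density on the tower. -/
def baseProfile (l : ℕ) (_ : T.Δ₀) : ℝ≥0∞ := if l = 0 then (T.m₀ univ)⁻¹ else 0

theorem tsum_baseProfile (c : ℕ → T.Δ₀ → ℝ≥0∞) (A : ℕ → Set T.Δ₀) :
    ∑' l, ∫⁻ x in A l, T.baseProfile l x * c l x ∂T.m₀ =
      (∫⁻ x in A 0, c 0 x ∂T.m₀) / T.m₀ univ := by
  rw [tsum_eq_single 0 fun l hl => by simp [baseProfile, hl]]
  simp only [baseProfile, if_true]
  rw [lintegral_const_mul' _ _ (ENNReal.inv_ne_top.2 T.m₀_univ_ne_zero), mul_comm,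
    ENNReal.div_eq_inv_mul,
    mul_comm]

theorem setOf_zero_lt_R : {x | 0 < T.R x} = univ := eq_univ_of_forall T.R_pos

theorem pushMass_baseProfile (E : Set (T.Δ₀ × ℕ)) (n : ℕ) :
    T.pushMass T.baseProfile E n = T.baseProb E n := by
  rw [pushMass, tsum_baseProfile, setOf_zero_lt_R, Measure.restrict_univ, baseProb]

theorem totalMass_baseProfile : T.totalMass T.baseProfile = 1 := by
  have := pushMass_univ T.baseProfile 0
  rw [pushMass_baseProfile, baseProb_univ] at this
  exact this.symm

theorem firstMass_baseProfile (n : ℕ) :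
    (T.firstMass T.baseProfile univ n).toReal = T.m₀.real {x | n < T.R x} / T.m₀.real univ := by
  rw [firstMass, tsum_baseProfile]
  simp only [obs_univ, lintegral_one, Measure.restrict_apply_univ, zero_add, ENNReal.toReal_div]
  rfl

theorem isProfile_baseProfile : T.IsProfile T.baseProfile where
  aemeasurable _ := aemeasurable_const
  logLipOn l r _ i _ _ x _ y _ := by
    refine le_mul_of_one_le_left' ?_
    rw [ENNReal.one_le_ofReal, one_mul]
    exact Real.one_le_exp (T.sepDist_nonneg x y)
  lintegral_ne_top := by
    change T.totalMass T.baseProfile ≠ ⊤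
    rw [totalMass_baseProfile]
    exact ENNReal.one_ne_top

theorem stopMass_baseProfile_zero : T.stopMass T.baseProfile 0 = 0 := by
  simp [stopMass, arrival_eq, firstArrival]

theorem stopMass_baseProfile_pos {i : ℕ} (hi : i ∈ T.I) :
    0 < T.stopMass T.baseProfile (T.Ret i) := by
  obtain ⟨k, hk⟩ : ∃ k, T.Ret i = k + 1 := ⟨T.Ret i - 1, by have := T.Ret_pos i hi; omega⟩
  refine ENNReal.mul_pos (by simpa using T.splitProb_pos) (ne_of_gt ?_)
  have h1 := lintegral_firstArrival_mul (T := T) isProfile_baseProfile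
    (measurable_const (a := (1 : ℝ≥0∞))) k
  simp only [mul_one] at h1
  calc 0 < T.m₀ (T.Λ i) / T.m₀ univ :=
        ENNReal.div_pos (T.Λ_pos i hi).ne' (measure_ne_top _ _)
    _ ≤ T.m₀ {x | T.R x = k + 1} / T.m₀ univ := by
        gcongr
        exact fun x hx => (T.R_eq i hi x hx).trans hk
    _ = ∫⁻ x, T.transfer (0 + (k + 1)) (T.baseProfile 0) x ∂T.m₀ := by
        rw [lintegral_transfer _ (isProfile_baseProfile.aemeasurable 0)]
        simp [baseProfile, ENNReal.div_eq_inv_mul]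
    _ ≤ ∫⁻ x, T.firstArrival T.baseProfile (k + 1) x ∂T.m₀ := by
        rw [h1]
        exact ENNReal.le_tsum 0
    _ ≤ ∫⁻ x, T.arrival (T.firstArrival T.baseProfile) (T.Ret i) x ∂T.m₀ := by
        rw [hk]
        refine lintegral_mono fun x => ?_
        rw [arrival_eq]
        exact le_self_add

variable (T) in
/-- The mass in `E` of a renewal cycle, normalized. -/
def cycleMass (E : Set (T.Δ₀ × ℕ)) : ℝ :=
  (∑' n, (T.survivalMass T.baseProfile E n).toReal) /
    ∑' n, (T.survivalMass T.baseProfile univ n).toReal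

/-- The convergence of the push-forwards of regular densities, with rates. -/
theorem exists_pushMass_le {ι κ : Type*} {r : ι → ℕ → ℝ} {ρ : κ → ℕ → ℝ} (hr : IsRateFamily r)
    (hρ : IsRateFamily ρ) (hrs : ∀ i, Summable (r i))
    (hrρ : ∀ i, ∃ j C, ∀ n, absTail (r i) n ≤ C * ρ j n)
    {i : ι} {C : ℝ} (hC : ∀ n, T.m₀.real {x | n < T.R x} ≤ C * r i n) :
    (Summable fun n => (T.survivalMass T.baseProfile univ n).toReal) ∧
    (∃ j C', ∀ E, MeasurableSet E → ∀ n,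
      |(T.baseProb E n).toReal - T.cycleMass E| ≤ C' * ρ j n) ∧
    ∃ j, ∀ B σ₀ : ℝ, 0 ≤ B → ∃ C', ∀ φ, T.IsProfile φ → (∀ l x, φ l x ≤ ENNReal.ofReal B) →
      (T.totalMass φ).toReal ≤ σ₀ → ∀ E, MeasurableSet E → ∀ n,
        |(T.pushMass φ E n).toReal - (T.totalMass φ).toReal * T.cycleMass E| ≤ C' * ρ j n := by
  have hC0 : 0 ≤ C :=
    nonneg_of_mul_nonneg_left (measureReal_nonneg.trans (hC 0)) (hr.pos i 0)
  have hM := m₀_real_univ_pos (T := T)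
  have hbase := isProfile_baseProfile (T := T)
  set c₀ := Real.exp T.regConst / ((1 - T.splitProb) * T.m₀.real univ)
  have hc₀ : 0 < c₀ := survivalCoeff_pos
  have hQ : ∀ n, T.survivalBound n ≤ c₀ * C * r i n := fun n => by
    rw [mul_assoc]
    exact (min_le_right _ _).trans (mul_le_mul_of_nonneg_left (hC n) hc₀.le)
  obtain ⟨j₁, hj₁⟩ := hr.exists_stopped_le T.splitProb_pos T.splitProb_lt_one
    survivalBound_antitone survivalBound_nonneg survivalBound_zero hQ
  obtain ⟨C₁, hC₁⟩ := hj₁ (C / T.m₀.real univ) 1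
  set W := fun n => (T.survivalMass T.baseProfile univ n).toReal with hWdef
  have hW : ∀ n, W n = 1 - ∑ k ∈ Finset.range (n + 1), (T.stopMass T.baseProfile k).toReal := by
    intro n
    have := hbase.toReal_survivalMass_univ n
    rwa [totalMass_baseProfile, ENNReal.toReal_one] at this
  have hW0 : ∀ n, 0 ≤ W n := fun n => ENNReal.toReal_nonneg
  have hWr : ∀ n, W n ≤ C₁ * r j₁ n := by
    refine hC₁ _ W (fun n => (T.firstMass T.baseProfile univ n).toReal) 1 le_rfl zero_le_one hW hW0
      (fun n => ?_) hbase.survivalMass_univ_le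
    rw [firstMass_baseProfile, div_mul_eq_mul_div]
    gcongr
    exact hC n
  have hWs : Summable W := .of_nonneg_of_le hW0 hWr ((hrs j₁).mul_left C₁)
  obtain ⟨j₂, C₂, hC₂⟩ := hrρ j₁
  have hWt : ∀ n, absTail W n ≤ |C₁| * C₂ * ρ j₂ n := by
    intro n
    have h1 : absTail W n ≤ absTail (fun k => C₁ * r j₁ k) n :=
      absTail_mono ((hrs j₁).mul_left C₁).abs (fun k => by
        rw [abs_of_nonneg (hW0 k)]
        exact (hWr k).trans (le_abs_self _)) n
    have h2 : absTail (fun k => C₁ * r j₁ k) n = |C₁| * absTail (r j₁) n := by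
      simp only [absTail, abs_mul, tsum_mul_left]
    rw [h2] at h1
    rw [mul_assoc]
    exact h1.trans (mul_le_mul_of_nonneg_left (hC₂ n) (abs_nonneg _))
  obtain ⟨j₃, C₃, hC₃⟩ := hρ.exists_renewal_le
    (f := fun n => (T.stopMass T.baseProfile n).toReal) (fun n => ENNReal.toReal_nonneg)
    (by simp [stopMass_baseProfile_zero])
    (fun d hd => T.Ret_gcd d fun i hi => hd _ (ENNReal.toReal_pos
      (stopMass_baseProfile_pos hi).ne' (hbase.stopMass_ne_top _))) hW hW0 hWs hWt
  have hy : ∀ E, MeasurableSet E → ∀ n,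
      |(T.baseProb E n).toReal - T.cycleMass E| ≤ C₃ * ρ j₃ n := by
    intro E hE
    refine hC₃ (fun n => (T.survivalMass T.baseProfile E n).toReal) _
      (fun n => ENNReal.toReal_nonneg) (hbase.toReal_survivalMass_le E) fun n => ?_
    rw [← pushMass_baseProfile]
    exact hbase.toReal_pushMass hE n
  have hL0 : ∀ E, 0 ≤ T.cycleMass E := fun E =>
    div_nonneg (tsum_nonneg fun n => ENNReal.toReal_nonneg) (tsum_nonneg hW0)
  have hL1 : ∀ E, T.cycleMass E ≤ 1 := fun E => by
    refine div_le_one_of_le₀ (Summable.tsum_le_tsum (hbase.toReal_survivalMass_le E)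
      (.of_nonneg_of_le (fun n => ENNReal.toReal_nonneg) (hbase.toReal_survivalMass_le E) hWs)
      hWs) (tsum_nonneg hW0)
  refine ⟨hWs, ⟨j₃, C₃, hy⟩, ?_⟩
  obtain ⟨j₄, C₄, hC₄⟩ := hrρ i
  have hrC₄ : ∀ n, r i n ≤ C₄ * ρ j₄ n := fun n =>
    ((le_abs_self _).trans (abs_le_absTail (hrs i).abs n)).trans (hC₄ n)
  obtain ⟨j₅, hj₅⟩ := hρ.exists_stopped_le T.splitProb_pos T.splitProb_lt_one
    survivalBound_antitone survivalBound_nonneg survivalBound_zero (i := j₄)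
    (CQ := c₀ * C * C₄) (fun n => (hQ n).trans (by
      rw [mul_assoc _ C₄]
      exact mul_le_mul_of_nonneg_left (hrC₄ n) (by positivity)))
  obtain ⟨j₆, C₆, hC₆0, hC₆⟩ := hρ.directed j₃ j₅
  obtain ⟨j₇, hj₇⟩ := hρ.exists_delayed_le j₆
  refine ⟨j₇, fun B σ₀ hB => ?_⟩
  obtain ⟨C₅, hC₅⟩ := hj₅ (B * C * C₄) σ₀
  obtain ⟨C₇, hC₇⟩ := hj₇ (|C₃| * C₆) (|C₅| * C₆) σ₀
  refine ⟨C₇, fun φ hφ hφB hσ E hE => ?_⟩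
  have hs : ∀ n, (T.firstMass φ univ n).toReal ≤ B * C * C₄ * ρ j₄ n := by
    intro n
    have hsum := (summable_nat_add_iff n).2 (hrs i)
    have h1 : T.firstMass φ univ n ≤ ENNReal.ofReal (∑' l, B * (C * r i (l + n))) := by
      rw [ENNReal.ofReal_tsum_of_nonneg (fun l => mul_nonneg hB (mul_nonneg hC0 (hr.pos i _).le))
        ((hsum.mul_left C).mul_left B)]
      refine ENNReal.tsum_le_tsum fun l => ?_
      calc ∫⁻ x in {x | l + n < T.R x}, φ l x * T.obs univ n l x ∂T.m₀
          ≤ ∫⁻ x in {x | l + n < T.R x}, ENNReal.ofReal B ∂T.m₀ := by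
            refine lintegral_mono fun x => ?_
            rw [obs_univ, mul_one]
            exact hφB l x
        _ = ENNReal.ofReal (B * T.m₀.real {x | l + n < T.R x}) := by
            rw [setLIntegral_const, ENNReal.ofReal_mul hB, ofReal_measureReal]
        _ ≤ _ := by
            gcongr
            exact hC (l + n)
    have h2 : ∑' l, B * (C * r i (l + n)) = B * C * absTail (r i) n := by
      rw [tsum_mul_left, tsum_mul_left, ← mul_assoc, absTail]
      simp only [abs_of_pos (hr.pos i _)]
    rw [h2] at h1
    refine (ENNReal.toReal_mono ENNReal.ofReal_ne_top h1).trans ?_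
    rw [ENNReal.toReal_ofReal (mul_nonneg (mul_nonneg hB hC0) (absTail_nonneg _ _)),
      mul_assoc _ C₄]
    exact mul_le_mul_of_nonneg_left (hC₄ n) (mul_nonneg hB hC0)
  have hV := hC₅ (fun k => (T.stopMass φ k).toReal) (fun n => (T.survivalMass φ univ n).toReal)
    (fun n => (T.firstMass φ univ n).toReal) (T.totalMass φ).toReal hσ ENNReal.toReal_nonneg
    hφ.toReal_survivalMass_univ (fun n => ENNReal.toReal_nonneg) hs hφ.survivalMass_univ_le
  refine hC₇ (fun n => (T.baseProb E n).toReal) (fun k => (T.stopMass φ k).toReal)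
    (fun n => (T.survivalMass φ univ n).toReal) (fun n => (T.survivalMass φ E n).toReal)
    (fun n => (T.pushMass φ E n).toReal) (T.cycleMass E) (T.totalMass φ).toReal (hL0 E) (hL1 E)
    ENNReal.toReal_nonneg hσ (fun n => ?_) (fun n => ENNReal.toReal_nonneg)
    hφ.toReal_survivalMass_univ (fun n => ?_) (fun n => ENNReal.toReal_nonneg)
    (hφ.toReal_survivalMass_le E) (hφ.toReal_pushMass hE)
  · calc |(T.baseProb E n).toReal - T.cycleMass E| ≤ C₃ * ρ j₃ n := hy E hE n
      _ ≤ |C₃| * ρ j₃ n := mul_le_mul_of_nonneg_right (le_abs_self _) (hρ.pos _ n).le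
      _ ≤ |C₃| * (C₆ * ρ j₆ n) := mul_le_mul_of_nonneg_left (hC₆ n).1 (abs_nonneg _)
      _ = _ := by ring
  · calc (T.survivalMass φ univ n).toReal ≤ C₅ * ρ j₅ n := hV n
      _ ≤ |C₅| * ρ j₅ n := mul_le_mul_of_nonneg_right (le_abs_self _) (hρ.pos _ n).le
      _ ≤ |C₅| * (C₆ * ρ j₆ n) := mul_le_mul_of_nonneg_left (hC₆ n).2 (abs_nonneg _)
      _ = _ := by ring

end YoungTower

namespace YoungTower

variable {T : YoungTower.{u}}

/-- Quantitative convergence to equilibrium for densities given level by level. -/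
structure HasRate {κ : Type*} (T : YoungTower.{u}) (ρ : κ → ℕ → ℝ) : Prop where
  tendsto : ∀ j, Tendsto (ρ j) atTop (𝓝 0)
  tsum_ne_top : ∑' l, T.m₀ {x | l < T.R x} ≠ ⊤
  summable : Summable fun n => (T.survivalMass T.baseProfile univ n).toReal
  base : ∀ E, MeasurableSet E →
    Tendsto (fun n => (T.baseProb E n).toReal) atTop (𝓝 (T.cycleMass E))
  lipschitz : ∃ j, ∀ A B : ℝ, 0 ≤ A → 0 ≤ B → ∃ C', ∀ ψ : ℕ → T.Δ₀ → ℝ≥0∞,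
    (∀ l, AEMeasurable (ψ l) T.m₀) → (∀ l x, ψ l x ≤ ENNReal.ofReal B) →
    (∀ l, ∀ i ∈ T.I, l < T.Ret i → ∀ x ∈ T.Λ i, ∀ y ∈ T.Λ i,
      ψ l x ≤ ψ l y + ENNReal.ofReal (A * T.sepDist x y)) →
    ∀ E, MeasurableSet E → ∀ n,
      |(T.pushMass ψ E n).toReal - (T.totalMass ψ).toReal * T.cycleMass E| ≤ C' * ρ j n

theorem totalMass_le {ψ : ℕ → T.Δ₀ → ℝ≥0∞} {b : ℝ≥0∞} (hb : ∀ l x, ψ l x ≤ b) :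
    T.totalMass ψ ≤ b * ∑' l, T.m₀ {x | l < T.R x} := by
  rw [← ENNReal.tsum_mul_left]
  refine ENNReal.tsum_le_tsum fun l => ?_
  rw [← setLIntegral_const]
  exact lintegral_mono fun x => hb l x

theorem pushMass_add {ψ χ : ℕ → T.Δ₀ → ℝ≥0∞} (hψ : ∀ l, AEMeasurable (ψ l) T.m₀)
    {E : Set (T.Δ₀ × ℕ)} (hE : MeasurableSet E) (n : ℕ) :
    T.pushMass (fun l x => ψ l x + χ l x) E n = T.pushMass ψ E n + T.pushMass χ E n := by
  rw [pushMass, pushMass, pushMass, ← ENNReal.tsum_add]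
  refine tsum_congr fun l => ?_
  simp only [add_mul]
  exact lintegral_add_left'
    (((hψ l).fun_mul (measurable_obs hE n l).aemeasurable).mono_measure Measure.restrict_le_self) _

theorem totalMass_eq_pushMass (ψ : ℕ → T.Δ₀ → ℝ≥0∞) : T.totalMass ψ = T.pushMass ψ univ 0 :=
  (pushMass_univ ψ 0).symm

theorem logLip_add_const {A a b d : ℝ} (hA : 0 ≤ A) (hb : 0 ≤ b) (hd : 0 ≤ d)
    (h : a ≤ b + A * d) : a + A ≤ Real.exp d * (b + A) := by
  have h1 := Real.add_one_le_exp d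
  have h2 : (d + 1) * (b + A) ≤ Real.exp d * (b + A) := by gcongr
  nlinarith

theorem isProfile_add_const (hfin : ∑' l, T.m₀ {x | l < T.R x} ≠ ⊤) {A B : ℝ} (hA : 0 ≤ A)
    (hB : 0 ≤ B) {ψ : ℕ → T.Δ₀ → ℝ≥0∞} (hψm : ∀ l, AEMeasurable (ψ l) T.m₀)
    (hψB : ∀ l x, ψ l x ≤ ENNReal.ofReal B)
    (hψL : ∀ l, ∀ i ∈ T.I, l < T.Ret i → ∀ x ∈ T.Λ i, ∀ y ∈ T.Λ i,
      ψ l x ≤ ψ l y + ENNReal.ofReal (A * T.sepDist x y)) :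
    T.IsProfile fun l x => ψ l x + ENNReal.ofReal A where
  aemeasurable l := (hψm l).add aemeasurable_const
  logLipOn l r hlr i hi hir x hx y hy := by
    have hd := T.sepDist_nonneg x y
    have h1 := hψL l i hi (by omega) x hx y hy
    have hxt := ne_top_of_le_ne_top ENNReal.ofReal_ne_top (hψB l x)
    have hyt := ne_top_of_le_ne_top ENNReal.ofReal_ne_top (hψB l y)
    change ψ l x + _ ≤ _ * (ψ l y + _)
    rw [← ENNReal.ofReal_toReal hxt, ← ENNReal.ofReal_toReal hyt] at h1 ⊢
    set a := (ψ l x).toReal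
    set b := (ψ l y).toReal
    have ha : 0 ≤ a := ENNReal.toReal_nonneg
    have hb : 0 ≤ b := ENNReal.toReal_nonneg
    rw [← ENNReal.ofReal_add hb (by positivity),
      ENNReal.ofReal_le_ofReal_iff (by positivity)] at h1
    rw [← ENNReal.ofReal_add ha hA, ← ENNReal.ofReal_add hb hA,
      ← ENNReal.ofReal_mul (Real.exp_pos _).le, one_mul]
    exact ENNReal.ofReal_le_ofReal (logLip_add_const hA hb hd h1)
  lintegral_ne_top := by
    refine ne_top_of_le_ne_top (ENNReal.mul_ne_top (ENNReal.ofReal_ne_top (r := B + A)) hfin)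
      (totalMass_le fun l x => ?_)
    rw [ENNReal.ofReal_add hB hA]
    gcongr
    exact hψB l x

theorem hasRate_of_tail {ι κ : Type*} {r : ι → ℕ → ℝ} {ρ : κ → ℕ → ℝ} (hr : IsRateFamily r)
    (hρ : IsRateFamily ρ) (hrs : ∀ i, Summable (r i))
    (hrρ : ∀ i, ∃ j C, ∀ n, absTail (r i) n ≤ C * ρ j n)
    {i : ι} {C : ℝ} (hC : ∀ n, T.m₀.real {x | n < T.R x} ≤ C * r i n) : T.HasRate ρ := by
  obtain ⟨hs, ⟨j₁, C₁, hbase⟩, j, hj⟩ := exists_pushMass_le hr hρ hrs hrρ hC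
  have hfin : ∑' l, T.m₀ {x | l < T.R x} ≠ ⊤ := by
    have h1 : Summable fun l => T.m₀.real {x | l < T.R x} :=
      .of_nonneg_of_le (fun _ => measureReal_nonneg) hC ((hrs i).mul_left C)
    have h2 : ∑' l, T.m₀ {x | l < T.R x} = ∑' l, ENNReal.ofReal (T.m₀.real {x | l < T.R x}) :=
      tsum_congr fun l => (ofReal_measureReal).symm
    rw [h2, ← ENNReal.ofReal_tsum_of_nonneg (fun _ => measureReal_nonneg) h1]
    exact ENNReal.ofReal_ne_top
  refine ⟨hρ.tendsto, hfin, hs, fun E hE => ?_, j, fun A B hA hB => ?_⟩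
  · rw [tendsto_iff_norm_sub_tendsto_zero]
    have h1 := (hρ.tendsto j₁).const_mul C₁
    rw [mul_zero] at h1
    exact squeeze_zero (fun _ => norm_nonneg _) (hbase E hE) h1
  · set m := (∑' l, T.m₀ {x | l < T.R x}).toReal
    obtain ⟨C', hC'⟩ := hj (B + A) ((B + A) * m) (by positivity)
    refine ⟨C' + C', fun ψ hψm hψB hψL E hE n => ?_⟩
    have hσ : ∀ {χ : ℕ → T.Δ₀ → ℝ≥0∞}, (∀ l x, χ l x ≤ ENNReal.ofReal (B + A)) →
        T.totalMass χ ≠ ⊤ ∧ (T.totalMass χ).toReal ≤ (B + A) * m := by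
      intro χ hχ
      have hne := ENNReal.mul_ne_top (ENNReal.ofReal_ne_top (r := B + A)) hfin
      refine ⟨ne_top_of_le_ne_top hne (totalMass_le hχ), ?_⟩
      refine (ENNReal.toReal_mono hne (totalMass_le hχ)).trans (le_of_eq ?_)
      rw [ENNReal.toReal_mul, ENNReal.toReal_ofReal (by positivity)]
    have hψA : ∀ l x, ψ l x + ENNReal.ofReal A ≤ ENNReal.ofReal (B + A) := fun l x => by
      rw [ENNReal.ofReal_add hB hA]
      gcongr
      exact hψB l x
    have hcA : ∀ (l : ℕ) (x : T.Δ₀), 0 + ENNReal.ofReal A ≤ ENNReal.ofReal (B + A) := fun l x => by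
      rw [zero_add]
      exact ENNReal.ofReal_le_ofReal (by linarith)
    have hψ' : ∀ l x, ψ l x ≤ ENNReal.ofReal (B + A) := fun l x => le_self_add.trans (hψA l x)
    have p1 := isProfile_add_const hfin hA hB hψm hψB hψL
    have p2 := isProfile_add_const hfin (ψ := fun _ _ => 0) hA hB (fun _ => aemeasurable_const)
      (fun _ _ => zero_le) (fun _ _ _ _ _ _ _ _ => zero_le)
    have b1 := hC' _ p1 hψA (hσ hψA).2 E hE n
    have b2 := hC' _ p2 hcA (hσ hcA).2 E hE n
    have hpush : ∀ (E : Set (T.Δ₀ × ℕ)), MeasurableSet E → ∀ n,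
        (T.pushMass (fun l x => ψ l x + ENNReal.ofReal A) E n).toReal =
        (T.pushMass ψ E n).toReal +
          (T.pushMass (fun _ _ => 0 + ENNReal.ofReal A) E n).toReal := by
      intro E hE n
      rw [pushMass_add hψm hE]
      simp only [zero_add]
      refine ENNReal.toReal_add (ne_top_of_le_ne_top (hσ hψ').1 (pushMass_le _ _ _)) ?_
      refine ne_top_of_le_ne_top (hσ (χ := fun _ _ => ENNReal.ofReal A) fun l x => ?_).1
        (pushMass_le _ _ _)
      exact ENNReal.ofReal_le_ofReal (by linarith)
    have htot := hpush univ MeasurableSet.univ 0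
    rw [← totalMass_eq_pushMass, ← totalMass_eq_pushMass, ← totalMass_eq_pushMass] at htot
    rw [hpush E hE n, htot] at b1
    rw [abs_le] at b1 b2 ⊢
    constructor <;> nlinarith

/-! ### Measures on the tower -/

theorem measurableSet_tower : MeasurableSet {p : T.Δ₀ × ℕ | p.2 < T.R p.1} :=
  measurableSet_lt measurable_snd (T.R_meas.comp measurable_fst)

theorem measurableEmbedding_val : MeasurableEmbedding (Subtype.val : T.Tower → T.Δ₀ × ℕ) :=
  MeasurableEmbedding.subtype_coe measurableSet_tower

theorem val_towerMap (p : T.Tower) : (T.towerMap p).1 = T.rawMap p.1 := by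
  rw [towerMap, rawMap]
  split_ifs <;> rfl

theorem val_towerMap_iterate (n : ℕ) (p : T.Tower) :
    (T.towerMap^[n] p).1 = T.rawMap^[n] p.1 := by
  induction n with
  | zero => rfl
  | succ n ih => rw [Function.iterate_succ_apply', Function.iterate_succ_apply', val_towerMap, ih]

theorem measurable_towerMap : Measurable T.towerMap := by
  rw [← measurableEmbedding_val.measurable_comp_iff]
  have : Subtype.val ∘ T.towerMap = T.rawMap ∘ Subtype.val := funext val_towerMap
  rw [this]
  exact measurable_rawMap.comp measurable_subtype_coe

theorem lintegral_towerMeasure {G : T.Δ₀ × ℕ → ℝ≥0∞} (hG : Measurable G) :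
    ∫⁻ p, G p.1 ∂T.towerMeasure = ∑' l, ∫⁻ x in {x | l < T.R x}, G (x, l) ∂T.m₀ := by
  have hm : ∀ l : ℕ, Measurable fun x : T.Δ₀ => (x, l) := fun l => by fun_prop
  rw [towerMeasure, ← measurableEmbedding_val.lintegral_map, measurableEmbedding_val.map_comap,
    Measure.restrict_sum _ (by simpa using measurableSet_tower), lintegral_sum_measure]
  refine tsum_congr fun l => ?_
  rw [Measure.restrict_map (hm l) (by simpa using measurableSet_tower), lintegral_map hG (hm l),
    Measure.restrict_restrict (hm l (by simpa using measurableSet_tower))]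
  congr 2
  ext x
  simp

end YoungTower

theorem ENNReal.tsum_sum_range_sub (c : ℕ → ℕ → ℝ≥0∞) :
    ∑' n, ∑ k ∈ Finset.range (n + 1), c k (n - k) = ∑' k, ∑' m, c k m := by
  rw [← ENNReal.tsum_prod, ← (Finset.HasAntidiagonal.sigmaAntidiagonalEquivProd (A := ℕ)).tsum_eq,
    ENNReal.tsum_sigma']
  refine tsum_congr fun n => ?_
  rw [tsum_fintype, ← Finset.Nat.sum_antidiagonal_eq_sum_range_succ c n, ← Finset.sum_attach]
  rfl

namespace YoungTower

variable {T : YoungTower.{u}}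

/-! ### The equilibrium measure -/

variable (T) in
/-- The density of a renewal cycle. -/
def cycleDensity (x : T.Δ₀) : ℝ≥0∞ :=
  (T.m₀ univ)⁻¹ + ∑' k, T.remainder (T.arrival (T.firstArrival T.baseProfile) k) x

theorem aemeasurable_cycleDensity : AEMeasurable T.cycleDensity T.m₀ :=
  aemeasurable_const.add (AEMeasurable.tsum fun k => aemeasurable_remainder
    (isProfile_baseProfile.isSource.arrival.aemeasurable k))

theorem tsum_survivalMass_baseProfile {E : Set (T.Δ₀ × ℕ)} (hE : MeasurableSet E) :
    ∑' n, T.survivalMass T.baseProfile E n =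
      ∑' n, ∫⁻ x in {x | n < T.R x}, T.cycleDensity x * E.indicator 1 (x, n) ∂T.m₀ := by
  have hobs : ∀ (h : T.Δ₀ → ℝ≥0∞) (n : ℕ),
      ∫⁻ x in {x | n < T.R x}, h x * T.obs E n 0 x ∂T.m₀ =
      ∫⁻ x in {x | n < T.R x}, h x * E.indicator 1 (x, n) ∂T.m₀ := by
    intro h n
    refine setLIntegral_congr_fun (measurableSet_lt_R n) fun x hx => ?_
    simp only [obs]
    rw [rawMap_iterate_of_lt (by simpa using hx), zero_add]
  have hrem := fun k => aemeasurable_remainder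
    ((isProfile_baseProfile (T := T)).isSource.arrival.aemeasurable k)
  have hind : ∀ n : ℕ, Measurable fun x : T.Δ₀ => E.indicator (1 : T.Δ₀ × ℕ → ℝ≥0∞) (x, n) :=
    fun n =>
    (measurable_one.indicator hE).comp (measurable_id.prodMk measurable_const)
  simp only [survivalMass]
  rw [ENNReal.tsum_add, ENNReal.tsum_sum_range_sub (fun k m => ∫⁻ x in {x | m < T.R x},
    T.remainder (T.arrival (T.firstArrival T.baseProfile) k) x * T.obs E m 0 x ∂T.m₀),
    ENNReal.tsum_comm, ← ENNReal.tsum_add]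
  refine tsum_congr fun n => ?_
  simp only [hobs, cycleDensity, add_mul, ← ENNReal.tsum_mul_right]
  rw [lintegral_add_left (f := fun x => (T.m₀ univ)⁻¹ * _) (measurable_const.mul (hind n)),
    lintegral_tsum fun k =>
    (((hrem k).fun_mul (hind n).aemeasurable).mono_measure Measure.restrict_le_self)]
  congr 1
  have h1 := tsum_baseProfile (T := T) (fun l => T.obs E n l) fun l => {x | l + n < T.R x}
  have h2 := hobs (fun _ => 1) n
  simp only [one_mul] at h2
  rw [firstMass, h1, zero_add, h2,
    lintegral_const_mul' _ _ (ENNReal.inv_ne_top.2 T.m₀_univ_ne_zero), ENNReal.div_eq_inv_mul]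

variable (T) in
/-- The mass of a renewal cycle. -/
def cycleTotal : ℝ≥0∞ := ∑' n, T.survivalMass T.baseProfile univ n

theorem survivalMass_baseProfile_univ_zero : T.survivalMass T.baseProfile univ 0 = 1 := by
  have := (isProfile_baseProfile (T := T)).totalMass_eq 0
  simpa [totalMass_baseProfile, stopMass_baseProfile_zero] using this.symm

theorem cycleTotal_ne_zero : T.cycleTotal ≠ 0 := by
  have h1 : T.survivalMass T.baseProfile univ 0 ≤ T.cycleTotal := ENNReal.le_tsum 0
  rw [survivalMass_baseProfile_univ_zero] at h1
  exact (zero_lt_one.trans_le h1).ne'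

section Equilibrium

variable {κ : Type*} {ρ : κ → ℕ → ℝ}

theorem HasRate.cycleTotal_ne_top (hT : T.HasRate ρ) : T.cycleTotal ≠ ⊤ := by
  have h1 : T.cycleTotal = ∑' n, ENNReal.ofReal (T.survivalMass T.baseProfile univ n).toReal :=
    tsum_congr fun n => (ENNReal.ofReal_toReal
      (isProfile_baseProfile.survivalMass_ne_top univ n)).symm
  rw [h1, ← ENNReal.ofReal_tsum_of_nonneg (fun _ => ENNReal.toReal_nonneg) hT.summable]
  exact ENNReal.ofReal_ne_top

end Equilibrium

variable (T) in
/-- The measure with the density of a renewal cycle, normalized. -/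
def equilibrium : Measure T.Tower :=
  (T.cycleTotal)⁻¹ • T.towerMeasure.withDensity
    fun p => (aemeasurable_cycleDensity (T := T)).mk T.cycleDensity p.1.1

theorem equilibrium_preimage_val {E : Set (T.Δ₀ × ℕ)} (hE : MeasurableSet E) :
    T.equilibrium (Subtype.val ⁻¹' E) =
      (∑' n, T.survivalMass T.baseProfile E n) / T.cycleTotal := by
  have hm := (aemeasurable_cycleDensity (T := T)).measurable_mk
  have hE' : MeasurableSet (Subtype.val ⁻¹' E : Set T.Tower) := measurable_subtype_coe hE
  rw [equilibrium, Measure.smul_apply, withDensity_apply _ hE', smul_eq_mul,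
    ← ENNReal.div_eq_inv_mul, ← lintegral_indicator hE']
  congr 1
  have h1 := lintegral_towerMeasure (T := T) (G := E.indicator fun p =>
    (aemeasurable_cycleDensity (T := T)).mk T.cycleDensity p.1)
    ((hm.comp measurable_fst).indicator hE)
  rw [tsum_survivalMass_baseProfile hE]
  refine Eq.trans ?_ (h1.trans (tsum_congr fun l => ?_))
  · rfl
  · refine lintegral_congr_ae (ae_restrict_of_ae ?_)
    filter_upwards [(aemeasurable_cycleDensity (T := T)).ae_eq_mk] with x hx
    simp only [indicator, hx]
    split_ifs <;> simp

theorem preimage_val_image_val (E : Set T.Tower) :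
    (Subtype.val ⁻¹' (Subtype.val '' E : Set (T.Δ₀ × ℕ)) : Set T.Tower) = E :=
  Subtype.val_injective.preimage_image E

section Equilibrium

variable {κ : Type*} {ρ : κ → ℕ → ℝ}

theorem real_equilibrium_preimage_val {E : Set (T.Δ₀ × ℕ)} (hE : MeasurableSet E) :
    T.equilibrium.real (Subtype.val ⁻¹' E) = T.cycleMass E := by
  have hb := isProfile_baseProfile (T := T)
  rw [measureReal_def, equilibrium_preimage_val hE, ENNReal.toReal_div, cycleTotal, cycleMass,
    ENNReal.tsum_toReal_eq (hb.survivalMass_ne_top E), ENNReal.tsum_toReal_eq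
      (hb.survivalMass_ne_top univ)]

theorem HasRate.isProbabilityMeasure_equilibrium (hT : T.HasRate ρ) :
     IsProbabilityMeasure T.equilibrium := by
  constructor
  have := equilibrium_preimage_val (T := T) MeasurableSet.univ
  rw [preimage_univ] at this
  rw [this]
  exact ENNReal.div_self cycleTotal_ne_zero hT.cycleTotal_ne_top

theorem HasRate.cycleMass_preimage (hT : T.HasRate ρ) {E : Set (T.Δ₀ × ℕ)}
    (hE : MeasurableSet E) :
    T.cycleMass (T.rawMap ⁻¹' E) = T.cycleMass E := by
  refine tendsto_nhds_unique (hT.base _ (measurable_rawMap hE)) ?_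
  refine ((tendsto_add_atTop_iff_nat 1).2 (hT.base E hE)).congr fun n => ?_
  rw [baseProb, baseProb]
  congr 2
  refine lintegral_congr fun x => ?_
  rw [obs, obs, Function.iterate_succ_apply']
  rfl

theorem HasRate.measurePreserving_equilibrium (hT : T.HasRate ρ) :
    MeasurePreserving T.towerMap T.equilibrium T.equilibrium := by
  have := hT.isProbabilityMeasure_equilibrium
  refine ⟨measurable_towerMap, ?_⟩
  ext E hE
  rw [Measure.map_apply measurable_towerMap hE]
  set E' : Set (T.Δ₀ × ℕ) := Subtype.val '' E with hE'
  have hE'm : MeasurableSet E' := measurableEmbedding_val.measurableSet_image.2 hE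
  have h1 : E = Subtype.val ⁻¹' E' := (preimage_val_image_val E).symm
  have h2 : T.towerMap ⁻¹' E = Subtype.val ⁻¹' (T.rawMap ⁻¹' E') := by
    ext p
    rw [h1]
    simp only [mem_preimage, val_towerMap]
  have h3 : T.equilibrium.real (T.towerMap ⁻¹' E) = T.equilibrium.real E := by
    rw [h2, h1, real_equilibrium_preimage_val hE'm,
      real_equilibrium_preimage_val (measurable_rawMap hE'm), hT.cycleMass_preimage hE'm]
  exact (ENNReal.toReal_eq_toReal_iff' (measure_ne_top _ _) (measure_ne_top _ _)).1 h3

theorem equilibrium_absolutelyContinuous : T.equilibrium ≪ T.towerMeasure :=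
  (withDensity_absolutelyContinuous _ _).smul_left _

theorem HasRate.absolutelyContinuous_equilibrium (hT : T.HasRate ρ) :
    T.towerMeasure ≪ T.equilibrium := by
  refine Measure.AbsolutelyContinuous.mk fun E hE h0 => ?_
  have hm := (aemeasurable_cycleDensity (T := T)).measurable_mk
  have hae : ∀ᵐ p ∂T.towerMeasure,
      (aemeasurable_cycleDensity (T := T)).mk T.cycleDensity p.1.1 ≠ 0 := by
    set N := {x | (aemeasurable_cycleDensity (T := T)).mk T.cycleDensity x = 0} with hN
    have hNm : MeasurableSet N := hm (measurableSet_singleton 0)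
    have hN0 : T.m₀ N = 0 := by
      refine measure_mono_null (fun x hx => ?_) (aemeasurable_cycleDensity (T := T)).ae_eq_mk
      intro h
      change T.cycleDensity x = _ at h
      rw [hx] at h
      rw [cycleDensity, add_eq_zero] at h
      exact ENNReal.inv_ne_zero.2 (measure_ne_top T.m₀ univ) h.1
    have h1 := lintegral_towerMeasure (T := T) (G := (Prod.fst ⁻¹' N).indicator 1)
      (measurable_one.indicator (measurable_fst hNm))
    have h2 : ∫⁻ p, (Prod.fst ⁻¹' N : Set (T.Δ₀ × ℕ)).indicator (1 : T.Δ₀ × ℕ → ℝ≥0∞) p.1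
        ∂T.towerMeasure = T.towerMeasure {p | p.1.1 ∈ N} := by
      exact lintegral_indicator_one ((measurable_fst.comp measurable_subtype_coe) hNm)
    rw [ae_iff]
    simp only [not_not]
    change T.towerMeasure {p | p.1.1 ∈ N} = 0
    rw [← h2, h1, ENNReal.tsum_eq_zero]
    intro l
    have h3 : ∀ x : T.Δ₀, (Prod.fst ⁻¹' N : Set (T.Δ₀ × ℕ)).indicator (1 : T.Δ₀ × ℕ → ℝ≥0∞) (x, l) =
        N.indicator 1 x := fun x => rfl
    simp only [h3]
    rw [lintegral_indicator_one hNm]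
    exact measure_mono_null (le_refl _) (Measure.restrict_le_self.absolutelyContinuous hN0)
  have h1 : T.towerMeasure.withDensity
      (fun p => (aemeasurable_cycleDensity (T := T)).mk T.cycleDensity p.1.1) E = 0 := by
    rw [equilibrium, Measure.smul_apply, smul_eq_mul, mul_eq_zero] at h0
    exact h0.resolve_left (ENNReal.inv_ne_zero.2 hT.cycleTotal_ne_top)
  exact withDensity_absolutelyContinuous'
    (hm.comp (measurable_fst.comp measurable_subtype_coe)).aemeasurable hae h1

end Equilibrium

end YoungTower

/-- A bound for the total variation distance from a bound on every measurable set. -/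
theorem tvDist_le {X : Type*} [MeasurableSpace X] (μ ν : Measure X) [IsFiniteMeasure μ]
    [IsFiniteMeasure ν] {B : ℝ} (h : ∀ E, MeasurableSet E → |μ.real E - ν.real E| ≤ B) :
    tvDist μ ν ≤ ENNReal.ofReal (2 * B) := by
  set s := μ.toSignedMeasure - ν.toSignedMeasure with hs
  have hsE : ∀ E, MeasurableSet E → s E = μ.real E - ν.real E := fun E hE => by
    rw [hs, Measure.toSignedMeasure_sub_apply hE]
  obtain ⟨i, hi, h1, h2, h3, h4⟩ := s.toJordanDecomposition_spec
  have hB : 0 ≤ B := (abs_nonneg _).trans (h ∅ MeasurableSet.empty)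
  have e1 : s.toJordanDecomposition.posPart univ ≤ ENNReal.ofReal B := by
    rw [h3, SignedMeasure.toMeasureOfZeroLE_apply _ _ hi MeasurableSet.univ, ENNReal.ofReal,
      ENNReal.coe_le_coe, ← NNReal.coe_le_coe, Real.coe_toNNReal _ hB]
    change s (i ∩ univ) ≤ B
    rw [inter_univ, hsE i hi]
    exact (le_abs_self _).trans (h i hi)
  have e2 : s.toJordanDecomposition.negPart univ ≤ ENNReal.ofReal B := by
    rw [h4, SignedMeasure.toMeasureOfLEZero_apply _ _ hi.compl MeasurableSet.univ, ENNReal.ofReal,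
      ENNReal.coe_le_coe, ← NNReal.coe_le_coe, Real.coe_toNNReal _ hB]
    change -s (iᶜ ∩ univ) ≤ B
    rw [inter_univ, hsE iᶜ hi.compl]
    exact (neg_le_abs _).trans (h iᶜ hi.compl)
  rw [tvDist, ← hs, SignedMeasure.totalVariation, Measure.add_apply, two_mul,
    ENNReal.ofReal_add hB hB]
  exact add_le_add e1 e2

namespace YoungTower

variable {T : YoungTower.{u}} {κ : Type*} {ρ : κ → ℕ → ℝ}

/-! ### Ergodicity -/

variable (T) in
/-- Measurable subsets of the base that are determined by finitely many symbols. -/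
def finiteMemory : Set (Set T.Δ₀) :=
  {A | MeasurableSet A ∧ ∃ N : ℕ, ∀ x y, (N : ℕ∞) ≤ sepTime T.I T.Λ T.FR x y → x ∈ A → y ∈ A}

theorem isPiSystem_finiteMemory : IsPiSystem T.finiteMemory := by
  rintro A ⟨hA, N, hN⟩ B ⟨hB, M, hM⟩ -
  refine ⟨hA.inter hB, max N M, fun x y h hx => ?_⟩
  exact ⟨hN x y (le_trans (by exact_mod_cast le_max_left N M) h) hx.1,
    hM x y (le_trans (by exact_mod_cast le_max_right N M) h) hx.2⟩

theorem exists_common_of_lt_sepTime {x y : T.Δ₀} {k : ℕ}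
    (h : ((k + 1 : ℕ) : ℕ∞) ≤ sepTime T.I T.Λ T.FR x y) :
    ∃ i ∈ T.I, T.FR^[k] x ∈ T.Λ i ∧ T.FR^[k] y ∈ T.Λ i := by
  by_contra hk
  have h1 : sepTime T.I T.Λ T.FR x y ≤ (k : ℕ∞) := iInf₂_le k hk
  have h2 : ((k + 1 : ℕ) : ℕ∞) ≤ (k : ℕ∞) := h.trans h1
  have h3 : k + 1 ≤ k := by exact_mod_cast h2
  omega

theorem preimage_iterate_mem_finiteMemory (k : ℕ) {i : ℕ} (hi : i ∈ T.I) :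
    T.FR^[k] ⁻¹' T.Λ i ∈ T.finiteMemory := by
  refine ⟨T.FR_meas.iterate k (T.Λ_meas i hi), k + 1, fun x y h hx => ?_⟩
  obtain ⟨j, hj, hxj, hyj⟩ := exists_common_of_lt_sepTime h
  have hij : i = j := by
    by_contra hne
    exact Set.disjoint_left.1 (T.Λ_disj hi hj hne) hx hxj
  rw [hij]
  exact hyj

theorem indicator_finiteMemory_le {A : Set T.Δ₀} {N : ℕ}
    (hN : ∀ x y, (N : ℕ∞) ≤ sepTime T.I T.Λ T.FR x y → x ∈ A → y ∈ A) (x y : T.Δ₀) :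
    A.indicator (1 : T.Δ₀ → ℝ≥0∞) x ≤
      A.indicator 1 y + ENNReal.ofReal ((T.β ^ N)⁻¹ * T.sepDist x y) := by
  by_cases hx : x ∈ A
  · by_cases hy : y ∈ A
    · simp [hx, hy]
    · rw [indicator_of_mem hx, indicator_of_notMem hy, zero_add, Pi.one_apply,
        ENNReal.one_le_ofReal]
      have hβ := pow_pos T.β_pos N
      rw [← div_eq_inv_mul, one_le_div hβ, sepDist, ← epow_natCast]
      refine epow_anti T.β_pos.le T.β_lt_one.le ?_
      by_contra h
      exact hy (hN x y (not_le.1 h).le hx)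
  · simp [hx]

section Mixing

variable {E : Set (T.Δ₀ × ℕ)} (l : ℕ)

variable (T E) in
/-- The part of the `l`-th level that is in `E` at time `n`. -/
def levelMeasure (n : ℕ) : Measure T.Δ₀ :=
  (T.m₀.restrict {x | l < T.R x}).withDensity (T.obs E n l)

theorem levelMeasure_le (n : ℕ) : T.levelMeasure E l n ≤ T.m₀.restrict {x | l < T.R x} := by
  refine (withDensity_mono (ae_of_all _ fun x => obs_le_one E n l x)).trans ?_
  exact le_of_eq withDensity_one

theorem isFiniteMeasure_levelMeasure (n : ℕ) : IsFiniteMeasure (T.levelMeasure E l n) :=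
  isFiniteMeasure_of_le _ (levelMeasure_le l n)

theorem levelMeasure_real_le (n : ℕ) (A : Set T.Δ₀) :
    (T.levelMeasure E l n).real A ≤ (T.m₀.restrict {x | l < T.R x}).real A :=
  ENNReal.toReal_mono (measure_ne_top _ _) (levelMeasure_le l n A)

theorem tendsto_levelMeasure_of_finiteMemory (hT : T.HasRate ρ) (hE : MeasurableSet E)
    {A : Set T.Δ₀} (hA : A ∈ T.finiteMemory) :
    Tendsto (fun n => (T.levelMeasure E l n).real A) atTop
      (𝓝 ((T.m₀.restrict {x | l < T.R x}).real A * T.cycleMass E)) := by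
  obtain ⟨hAm, N, hN⟩ := hA
  obtain ⟨j, hj⟩ := hT.lipschitz
  have hβ := pow_pos T.β_pos N
  obtain ⟨C, hC⟩ := hj (T.β ^ N)⁻¹ 1 (by positivity) zero_le_one
  set ψ : ℕ → T.Δ₀ → ℝ≥0∞ := fun l' => if l' = l then A.indicator 1 else 0 with hψ
  have h1 := hC ψ (fun l' => by
      simp only [hψ]
      split_ifs
      · exact (measurable_one.indicator hAm).aemeasurable
      · exact aemeasurable_const)
    (fun l' x => by
      simp only [hψ, ENNReal.ofReal_one]
      split_ifs
      · exact indicator_apply_le' (fun _ => le_rfl) fun _ => zero_le_one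
      · exact zero_le_one)
    (fun l' i _ _ x _ y _ => by
      simp only [hψ]
      split_ifs
      · exact indicator_finiteMemory_le hN x y
      · exact zero_le) E hE
  have hpush : ∀ n, T.pushMass ψ E n = T.levelMeasure E l n A := by
    intro n
    rw [pushMass, tsum_eq_single l fun l' hl' => by simp [hψ, hl'], levelMeasure,
      withDensity_apply _ hAm, ← lintegral_indicator hAm]
    refine lintegral_congr fun x => ?_
    by_cases hx : x ∈ A <;> simp [hψ, hx]
  have htot : T.totalMass ψ = T.m₀.restrict {x | l < T.R x} A := by
    rw [totalMass, tsum_eq_single l fun l' hl' => by simp [hψ, hl']]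
    simp only [hψ, if_true]
    exact lintegral_indicator_one hAm
  simp only [hpush, htot] at h1
  rw [tendsto_iff_norm_sub_tendsto_zero]
  have h2 := (hT.tendsto j).const_mul C
  rw [mul_zero] at h2
  exact squeeze_zero (fun _ => norm_nonneg _) h1 h2

theorem tendsto_levelMeasure (hT : T.HasRate ρ) (hE : MeasurableSet E) {A : Set T.Δ₀}
    (hA : MeasurableSet A) :
    Tendsto (fun n => (T.levelMeasure E l n).real A) atTop
      (𝓝 ((T.m₀.restrict {x | l < T.R x}).real A * T.cycleMass E)) := by
  have hfin := fun n => isFiniteMeasure_levelMeasure (T := T) (E := E) l n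
  set μ := T.m₀.restrict {x | l < T.R x} with hμ
  have hle : MeasurableSpace.generateFrom T.finiteMemory ≤ T.meas :=
    MeasurableSpace.generateFrom_le fun A hA => hA.1
  have huniv : univ ∈ T.finiteMemory := ⟨MeasurableSet.univ, 0, fun _ _ _ _ => mem_univ _⟩
  have key : ∀ B, MeasurableSet[MeasurableSpace.generateFrom T.finiteMemory] B →
      Tendsto (fun n => (T.levelMeasure E l n).real B) atTop
        (𝓝 (μ.real B * T.cycleMass E)) := by
    intro B hB
    induction B, hB using MeasurableSpace.induction_on_inter
      (m := MeasurableSpace.generateFrom T.finiteMemory) rfl isPiSystem_finiteMemory with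
    | empty => simp
    | basic B hB => exact tendsto_levelMeasure_of_finiteMemory l hT hE hB
    | compl B hB ih =>
      have h1 := (tendsto_levelMeasure_of_finiteMemory l hT hE huniv).sub ih
      rw [← hμ, ← sub_mul, ← measureReal_compl (hle _ hB)] at h1
      refine h1.congr fun n => ?_
      rw [measureReal_compl (hle _ hB)]
    | iUnion f hd hf ih =>
      have hfm := fun k => hle _ (hf k)
      have hsum : ∀ (ν : Measure T.Δ₀) [IsFiniteMeasure ν],
          HasSum (fun k => ν.real (f k)) (ν.real (⋃ k, f k)) := by
        intro ν _
        have hne : ∑' k, ν (f k) ≠ ⊤ := by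
          rw [← measure_iUnion hd hfm]
          exact measure_ne_top ν _
        rw [measureReal_def, measure_iUnion hd hfm,
          ENNReal.tsum_toReal_eq (ENNReal.ne_top_of_tsum_ne_top hne)]
        exact ENNReal.hasSum_toReal hne
      rw [← (hsum μ).tsum_eq, ← tsum_mul_right]
      have hsum' : ∀ n, (T.levelMeasure E l n).real (⋃ k, f k) =
          ∑' k, (T.levelMeasure E l n).real (f k) := fun n =>
        (hsum (T.levelMeasure E l n)).tsum_eq.symm
      simp only [hsum']
      refine tendsto_tsum_of_dominated_convergence (hsum μ).summable ih ?_
      refine Eventually.of_forall fun n k => ?_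
      rw [Real.norm_of_nonneg measureReal_nonneg]
      exact levelMeasure_real_le l n (f k)
  obtain ⟨B, hB, hAB⟩ := T.generating A hA
  have hB' : MeasurableSet[MeasurableSpace.generateFrom T.finiteMemory] B := by
    refine MeasurableSpace.generateFrom_mono ?_ _ hB
    rintro S ⟨k, i, hi, rfl⟩
    exact preimage_iterate_mem_finiteMemory k hi
  have hABμ : A =ᵐ[μ] B := ae_restrict_of_ae hAB
  have h1 := key B hB'
  rw [← measureReal_congr hABμ] at h1
  refine h1.congr fun n => ?_
  exact (measureReal_congr ((withDensity_absolutelyContinuous _ _).ae_eq hABμ)).symm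

end Mixing

theorem HasRate.ergodic_equilibrium (hT : T.HasRate ρ) : Ergodic T.towerMap T.equilibrium := by
  have hprob := hT.isProbabilityMeasure_equilibrium
  refine ⟨hT.measurePreserving_equilibrium, ⟨fun A hA hinv => ?_⟩⟩
  rw [eventuallyConst_set']
  by_cases h0 : T.towerMeasure A = 0
  · left
    exact ae_eq_empty.2 (equilibrium_absolutelyContinuous h0)
  right
  set A' : Set (T.Δ₀ × ℕ) := Subtype.val '' A with hA'
  have hA'm : MeasurableSet A' := measurableEmbedding_val.measurableSet_image.2 hA
  set E : Set (T.Δ₀ × ℕ) := Subtype.val '' Aᶜ with hE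
  have hEm : MeasurableSet E := measurableEmbedding_val.measurableSet_image.2 hA.compl
  have hm : ∀ l, MeasurableSet {x : T.Δ₀ | (x, l) ∈ A'} := fun l =>
    (measurable_id.prodMk measurable_const : Measurable fun x : T.Δ₀ => (x, l)) hA'm
  obtain ⟨l, hl⟩ : ∃ l, T.m₀.restrict {x | l < T.R x} {x | (x, l) ∈ A'} ≠ 0 := by
    by_contra hcon
    push Not at hcon
    refine h0 ?_
    have h1 := lintegral_towerMeasure (T := T) (G := A'.indicator 1)
      (measurable_one.indicator hA'm)
    have h2 : ∫⁻ p, A'.indicator (1 : T.Δ₀ × ℕ → ℝ≥0∞) p.1 ∂T.towerMeasure =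
        T.towerMeasure (Subtype.val ⁻¹' A') :=
      lintegral_indicator_one (measurable_subtype_coe hA'm)
    rw [preimage_val_image_val] at h2
    rw [← h2, h1, ENNReal.tsum_eq_zero]
    intro l
    rw [← hcon l]
    exact lintegral_indicator_one (hm l)
  have hzero : ∀ n, (T.levelMeasure E l n).real {x | (x, l) ∈ A'} = 0 := by
    intro n
    rw [measureReal_def, levelMeasure, withDensity_apply _ (hm l),
      setLIntegral_congr_fun (g := fun _ => 0) (hm l), lintegral_zero, ENNReal.toReal_zero]
    rintro x ⟨p, hp, hpx⟩
    refine indicator_of_notMem ?_ _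
    rw [← hpx, ← val_towerMap_iterate]
    rintro ⟨q, hq, hqp⟩
    have h1 : q = T.towerMap^[n] p := Subtype.ext hqp
    have h2 : ∀ n, T.towerMap^[n] p ∈ A := by
      intro n
      induction n with
      | zero => exact hp
      | succ n ih =>
        rw [Function.iterate_succ_apply']
        rwa [← hinv] at ih
    exact hq (h1 ▸ h2 n)
  have hlim := tendsto_levelMeasure l hT hEm (hm l)
  simp only [hzero] at hlim
  have h3 := tendsto_nhds_unique hlim tendsto_const_nhds
  have h4 : T.cycleMass E = 0 :=
    (mul_eq_zero.1 h3).resolve_left (ENNReal.toReal_ne_zero.2 ⟨hl, measure_ne_top _ _⟩)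
  rw [← real_equilibrium_preimage_val hEm, preimage_val_image_val] at h4
  rw [eventuallyEq_univ, mem_ae_iff]
  exact (measureReal_eq_zero_iff).1 h4

/-! ### Convergence to equilibrium -/

theorem towerMeasure_univ : T.towerMeasure univ = ∑' l, T.m₀ {x | l < T.R x} := by
  have := lintegral_towerMeasure (T := T) (G := 1) measurable_one
  simpa using this

theorem sepTower_eq {p q : T.Tower} {l i : ℕ} (hi : i ∈ T.I) (hp : p ∈ T.pieceSet l i)
    (hq : q ∈ T.pieceSet l i) :
    T.sepTower p q = sepTime T.I T.Λ T.FR p.1.1 q.1.1 :=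
  if_pos ⟨l, i, hi, hp, hq⟩

theorem MemF.exists_le {K : ℝ} (hK : 0 ≤ K) {φ : T.Tower → ℝ} (hφ : T.MemF K φ)
    (h0 : T.towerMeasure univ ≠ 0) (hfin : T.towerMeasure univ ≠ ⊤)
    (hmass : ∫⁻ p, ENNReal.ofReal (φ p) ∂T.towerMeasure = 1) (q : T.Tower) :
    φ q ≤ 2 / T.towerMeasure.real univ + K := by
  have hm : 0 < T.towerMeasure.real univ := ENNReal.toReal_pos h0 hfin
  obtain ⟨p, hp⟩ : ∃ p, φ p ≤ 2 / T.towerMeasure.real univ := by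
    by_contra hcon
    push Not at hcon
    have h1 : ENNReal.ofReal (2 / T.towerMeasure.real univ) * T.towerMeasure univ ≤ 1 := by
      rw [← hmass, ← lintegral_const]
      exact lintegral_mono fun p => ENNReal.ofReal_le_ofReal (hcon p).le
    rw [← ENNReal.ofReal_toReal hfin, ← ENNReal.ofReal_mul (by positivity)] at h1
    change ENNReal.ofReal (2 / T.towerMeasure.real univ * T.towerMeasure.real univ) ≤ 1 at h1
    rw [div_mul_cancel₀ _ hm.ne', ENNReal.ofReal_le_one] at h1
    norm_num at h1
  have h2 := (le_abs_self _).trans (hφ q p)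
  have h3 := epow_le_one T.β_pos.le T.β_lt_one.le (T.sepTower q p)
  nlinarith

theorem HasRate.exists_tvDist_le (hT : T.HasRate ρ) :
    ∃ ν : ProbabilityMeasure T.Tower, T.IsEquilibrium ν ∧
      (∀ ν' : ProbabilityMeasure T.Tower, T.IsEquilibrium ν' → ν' = ν) ∧
      ∃ j, ∀ Cφ : ℝ, 0 < Cφ → ∃ C' : ℝ, ∀ (φ : T.Tower → ℝ) (lam : ProbabilityMeasure T.Tower),
        Measurable φ → T.MemFPlus Cφ φ →
        (lam : Measure T.Tower) =
          T.towerMeasure.withDensity (fun p => ENNReal.ofReal (φ p)) →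
        ∀ n : ℕ, tvDist ((lam : Measure T.Tower).map (T.towerMap^[n])) (ν : Measure T.Tower)
          ≤ ENNReal.ofReal (2 * (C' * ρ j n)) := by
  have hprob := hT.isProbabilityMeasure_equilibrium
  refine ⟨⟨T.equilibrium, hprob⟩, ⟨hT.measurePreserving_equilibrium,
    equilibrium_absolutelyContinuous, hT.absolutelyContinuous_equilibrium⟩, ?_, ?_⟩
  · rintro ν' ⟨hν', hac, -⟩
    have hprob' : IsProbabilityMeasure ν'.1 := ν'.2
    refine Subtype.ext ?_
    exact hT.ergodic_equilibrium.eq_of_absolutelyContinuous hν'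
      (hac.trans hT.absolutelyContinuous_equilibrium)
  obtain ⟨j, hj⟩ := hT.lipschitz
  have hfin : T.towerMeasure univ ≠ ⊤ := by
    rw [towerMeasure_univ]
    exact hT.tsum_ne_top
  have h0 : T.towerMeasure univ ≠ 0 := by
    rw [towerMeasure_univ]
    intro h
    have := ENNReal.tsum_eq_zero.1 h 0
    rw [setOf_zero_lt_R] at this
    exact T.m₀_univ_ne_zero this
  refine ⟨j, fun Cφ hCφ => ?_⟩
  set B := 2 / T.towerMeasure.real univ + Cφ with hB
  have hB0 : 0 ≤ B := by positivity
  obtain ⟨C', hC'⟩ := hj Cφ B hCφ.le hB0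
  refine ⟨C', fun φ lam hφm hφ hlam n => ?_⟩
  refine tvDist_le ((lam : Measure T.Tower).map (T.towerMap^[n])) T.equilibrium fun E hE => ?_
  have hmass : ∫⁻ p, ENNReal.ofReal (φ p) ∂T.towerMeasure = 1 := by
    have h1 : (lam : Measure T.Tower) univ = 1 := measure_univ
    rwa [hlam, withDensity_apply _ MeasurableSet.univ, setLIntegral_univ] at h1
  set Ψ : T.Δ₀ × ℕ → ℝ≥0∞ :=
    Function.extend Subtype.val (fun p : T.Tower => ENNReal.ofReal (φ p)) 0 with hΨ
  have hΨm : Measurable Ψ :=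
    measurableEmbedding_val.measurable_extend hφm.ennreal_ofReal measurable_zero
  have hΨval : ∀ p : T.Tower, Ψ p.1 = ENNReal.ofReal (φ p) :=
    fun p => Subtype.val_injective.extend_apply _ _ _
  have hΨle : ∀ z, Ψ z ≤ ENNReal.ofReal B := by
    intro z
    by_cases hz : z.2 < T.R z.1
    · rw [hΨval ⟨z, hz⟩]
      exact ENNReal.ofReal_le_ofReal (MemF.exists_le hCφ.le hφ.1 h0 hfin hmass _)
    · rw [hΨ, Function.extend_apply' _ _ _ (by rintro ⟨p, rfl⟩; exact hz p.2)]
      exact zero_le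
  set E' : Set (T.Δ₀ × ℕ) := Subtype.val '' E with hE'
  have hE'm : MeasurableSet E' := measurableEmbedding_val.measurableSet_image.2 hE
  have hrate := hC' (fun l x => Ψ (x, l))
    (fun l => (hΨm.comp (measurable_id.prodMk measurable_const)).aemeasurable)
    (fun l x => hΨle _)
    (fun l i hi hl x hx y hy => by
      have hxl : l < T.R x := by rwa [T.R_eq i hi x hx]
      have hyl : l < T.R y := by rwa [T.R_eq i hi y hy]
      have h1 := hφ.1 ⟨(x, l), hxl⟩ ⟨(y, l), hyl⟩
      rw [sepTower_eq (p := ⟨(x, l), hxl⟩) (q := ⟨(y, l), hyl⟩) hi ⟨rfl, hx⟩ ⟨rfl, hy⟩] at h1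
      have h2 := (le_abs_self _).trans h1
      rw [hΨval ⟨(x, l), hxl⟩, hΨval ⟨(y, l), hyl⟩]
      refine (ENNReal.ofReal_le_ofReal (sub_le_iff_le_add'.1 h2)).trans ?_
      exact ENNReal.ofReal_add_le) E' hE'm n
  have htot : T.totalMass (fun l x => Ψ (x, l)) = 1 := by
    rw [totalMass, ← lintegral_towerMeasure hΨm, ← hmass]
    exact lintegral_congr hΨval
  have hpush : T.pushMass (fun l x => Ψ (x, l)) E' n =
      (lam : Measure T.Tower).map (T.towerMap^[n]) E := by
    have hEn : MeasurableSet (T.towerMap^[n] ⁻¹' E) := measurable_towerMap.iterate n hE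
    have hG : Measurable fun z => Ψ z * E'.indicator 1 (T.rawMap^[n] z) :=
      hΨm.mul ((measurable_one.indicator hE'm).comp (measurable_rawMap.iterate n))
    rw [Measure.map_apply (measurable_towerMap.iterate n) hE, hlam, withDensity_apply _ hEn,
      ← lintegral_indicator hEn]
    refine (lintegral_towerMeasure hG).symm.trans (lintegral_congr fun p => ?_)
    rw [hΨval, ← val_towerMap_iterate]
    by_cases hp : T.towerMap^[n] p ∈ E
    · rw [indicator_of_mem (mem_image_of_mem _ hp), indicator_of_mem (mem_preimage.2 hp)]
      exact mul_one _
    · rw [indicator_of_notMem (s := E'), indicator_of_notMem (by exact hp), mul_zero]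
      rwa [hE', Subtype.val_injective.mem_set_image]
  rw [htot, hpush, ENNReal.toReal_one, one_mul, ← real_equilibrium_preimage_val hE'm,
    preimage_val_image_val] at hrate
  exact hrate

end YoungTower

end

theorem YoungTower.hasRate_polyRate {T : YoungTower.{u}} {C ζ : ℝ} (hC : 0 < C) (hζ : 1 < ζ)
    (h : ∀ n : ℕ, 1 ≤ n → T.m₀.real {x | n < T.R x} ≤ C * (n : ℝ) ^ (-ζ)) :
    T.HasRate fun _ : Unit => polyRate (ζ - 1) := by
  obtain ⟨K, hK⟩ := absTail_polyRate_le hζ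
  refine hasRate_of_tail (r := fun _ : Unit => polyRate ζ) (i := ())
    (C := max (T.m₀.real univ) (C * (1 / 2 : ℝ) ^ (-ζ)))
    (isRateFamily_polyRate (by linarith)) (isRateFamily_polyRate (by linarith))
    (fun _ => summable_polyRate hζ) (fun _ => ⟨(), K, hK⟩) fun n => ?_
  rcases Nat.eq_zero_or_pos n with rfl | hn
  · have h1 : polyRate ζ 0 = 1 := by simp [polyRate]
    rw [h1, mul_one]
    exact (measureReal_mono (subset_univ _)).trans (le_max_left _ _)
  have hn1 : (1 : ℝ) ≤ n := by exact_mod_cast hn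
  have h2 : (n : ℝ) ^ (-ζ) ≤ (1 / 2 : ℝ) ^ (-ζ) * polyRate ζ n := by
    rw [polyRate, ← Real.mul_rpow (by norm_num) (by positivity)]
    exact Real.rpow_le_rpow_of_nonpos (by positivity) (by linarith) (by linarith)
  calc T.m₀.real {x | n < T.R x} ≤ C * (n : ℝ) ^ (-ζ) := h n hn
    _ ≤ C * ((1 / 2 : ℝ) ^ (-ζ) * polyRate ζ n) := by gcongr
    _ = C * (1 / 2 : ℝ) ^ (-ζ) * polyRate ζ n := by ring
    _ ≤ _ := mul_le_mul_of_nonneg_right (le_max_right _ _) (polyRate_pos _ _).le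

theorem YoungTower.hasRate_expRate {T : YoungTower.{u}} {C c η : ℝ} (hc : 0 < c) (hη : 0 < η)
    (hη1 : η ≤ 1)
    (h : ∀ n : ℕ, 1 ≤ n → T.m₀.real {x | n < T.R x} ≤ C * Real.exp (-c * (n : ℝ) ^ η)) :
    T.HasRate (expRate η) := by
  refine hasRate_of_tail (r := expRate η) (i := ⟨c, hc⟩) (C := max (T.m₀.real univ) C)
    (isRateFamily_expRate hη hη1) (isRateFamily_expRate hη hη1)
    (summable_expRate hη) (absTail_expRate_le hη) fun n => ?_
  rcases Nat.eq_zero_or_pos n with rfl | hn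
  · have h1 : expRate η ⟨c, hc⟩ 0 = 1 := by simp [expRate, Real.zero_rpow hη.ne']
    rw [h1, mul_one]
    exact (measureReal_mono (subset_univ _)).trans (le_max_left _ _)
  · exact (h n hn).trans (mul_le_mul_of_nonneg_right (le_max_right _ _) (Real.exp_pos _).le)

/-- Convergence to equilibrium on a Young tower `T`. Under either tail condition there is exactly
one `F`-invariant probability measure `ν` equivalent to `m`, and the push-forwards of every
probability measure `lam` with density `φ ∈ F_β⁺` converge to `ν` in total variation, at a
polynomial rate in the first case and at a (stretched) exponential rate in the second. -/
theorem young_tower_convergence_to_equilibrium (T : YoungTower.{u}) :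
    (∀ C ζ : ℝ, 0 < C → 1 < ζ →
      (∀ n : ℕ, 1 ≤ n → T.m₀.real {x | n < T.R x} ≤ C * (n : ℝ) ^ (-ζ)) →
      ∃ ν : ProbabilityMeasure T.Tower, T.IsEquilibrium ν ∧
        (∀ ν' : ProbabilityMeasure T.Tower, T.IsEquilibrium ν' → ν' = ν) ∧
        ∀ Cφ : ℝ, 0 < Cφ → ∃ C' : ℝ, 0 < C' ∧
          ∀ (φ : T.Tower → ℝ) (lam : ProbabilityMeasure T.Tower),
            Measurable φ → T.MemFPlus Cφ φ →
            (lam : Measure T.Tower) =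
              T.towerMeasure.withDensity (fun p => ENNReal.ofReal (φ p)) →
            ∀ n : ℕ, 1 ≤ n →
              tvDist ((lam : Measure T.Tower).map (T.towerMap^[n])) (ν : Measure T.Tower)
                ≤ ENNReal.ofReal (C' * (n : ℝ) ^ (-(ζ - 1)))) ∧
    (∀ C c η : ℝ, 0 < C → 0 < c → 0 < η → η ≤ 1 →
      (∀ n : ℕ, 1 ≤ n → T.m₀.real {x | n < T.R x} ≤ C * Real.exp (-c * (n : ℝ) ^ η)) →
      ∃ ν : ProbabilityMeasure T.Tower, T.IsEquilibrium ν ∧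
        (∀ ν' : ProbabilityMeasure T.Tower, T.IsEquilibrium ν' → ν' = ν) ∧
        ∃ c' : ℝ, 0 < c' ∧ ∀ Cφ : ℝ, 0 < Cφ → ∃ C' : ℝ, 0 < C' ∧
          ∀ (φ : T.Tower → ℝ) (lam : ProbabilityMeasure T.Tower),
            Measurable φ → T.MemFPlus Cφ φ →
            (lam : Measure T.Tower) =
              T.towerMeasure.withDensity (fun p => ENNReal.ofReal (φ p)) →
            ∀ n : ℕ, 1 ≤ n →
              tvDist ((lam : Measure T.Tower).map (T.towerMap^[n])) (ν : Measure T.Tower)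
                ≤ ENNReal.ofReal (C' * Real.exp (-c' * (n : ℝ) ^ η))) := by
  refine ⟨fun C ζ hC hζ h => ?_, fun C c η _ hc hη hη1 h => ?_⟩
  · obtain ⟨ν, hν, huniq, -, hconv⟩ := (YoungTower.hasRate_polyRate hC hζ h).exists_tvDist_le
    refine ⟨ν, hν, huniq, fun Cφ hCφ => ?_⟩
    obtain ⟨C', hC'⟩ := hconv Cφ hCφ
    refine ⟨2 * |C'| + 1, by positivity, fun φ lam hφm hφ hlam n hn => ?_⟩
    refine (hC' φ lam hφm hφ hlam n).trans (ENNReal.ofReal_le_ofReal ?_)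
    have hn0 : (0 : ℝ) < n := by exact_mod_cast hn
    have h1 : polyRate (ζ - 1) n ≤ (n : ℝ) ^ (-(ζ - 1)) :=
      Real.rpow_le_rpow_of_nonpos hn0 (by linarith) (by linarith)
    have h2 := polyRate_pos (ζ - 1) n
    calc 2 * (C' * polyRate (ζ - 1) n) ≤ 2 * (|C'| * polyRate (ζ - 1) n) := by
          gcongr
          exact le_abs_self C'
      _ ≤ (2 * |C'| + 1) * polyRate (ζ - 1) n := by linarith
      _ ≤ _ := by gcongr
  · obtain ⟨ν, hν, huniq, j, hconv⟩ := (YoungTower.hasRate_expRate hc hη hη1 h).exists_tvDist_le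
    refine ⟨ν, hν, huniq, j.1, j.2, fun Cφ hCφ => ?_⟩
    obtain ⟨C', hC'⟩ := hconv Cφ hCφ
    refine ⟨2 * |C'| + 1, by positivity, fun φ lam hφm hφ hlam n _ => ?_⟩
    refine (hC' φ lam hφm hφ hlam n).trans (ENNReal.ofReal_le_ofReal ?_)
    have h2 := expRate_pos η j n
    change _ ≤ (2 * |C'| + 1) * expRate η j n
    have h3 := mul_le_mul_of_nonneg_right (le_abs_self C') h2.le
    linarith
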